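/- arXiv:math/9212207 — 8 statements merged into one kernel-verified Lean document; each statement's English description precedes it below -/
import Mathlib

section
/- Let S and T be sets and let ψ : S × T → ℂ. Then ψ is a Schur multiplier of norm at most 1 if and only if there exist a complex Hilbert space K (one may take K = ℓ²(S ⊕ T)) and families of vectors x : S → K, y : T → K with sup_{s∈S} ‖x(s)‖ ≤ 1, sup_{t∈T} ‖y(t)‖ ≤ 1 and ψ(s,t) = ⟪x(s), y(t)⟫ for all (s,t) ∈ S × T. -/
open scoped ENNReal NNReal
open MeasureTheory ContinuousLinearMap

noncomputable section

/-- `ψ : S × T → ℂ` is a Schur multiplier of norm at most `C`: for every bounded operator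
`A : ℓ²(S) → ℓ²(T)` there is a bounded `B : ℓ²(S) → ℓ²(T)` whose matrix entries are
`ψ(s,t) · A(s,t)` and with `‖B‖ ≤ C‖A‖`. -/
def IsSchurMultiplier {S T : Type*} (ψ : S × T → ℂ) (C : ℝ) : Prop :=
  letI := Classical.decEq S
  letI := Classical.decEq T
  ∀ A : lp (fun _ : S => ℂ) 2 →L[ℂ] lp (fun _ : T => ℂ) 2,
    ∃ B : lp (fun _ : S => ℂ) 2 →L[ℂ] lp (fun _ : T => ℂ) 2,
      (∀ (s : S) (t : T),
        (inner (𝕜 := ℂ) (lp.single 2 t 1) (B (lp.single 2 s 1)))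
          = ψ (s, t) * inner (𝕜 := ℂ) (lp.single 2 t 1) (A (lp.single 2 s 1))) ∧
      ‖B‖ ≤ C * ‖A‖


def KPSD {I : Type*} (P : I → I → ℂ) : Prop :=
  (∀ i j, P j i = star (P i j)) ∧
  ∀ (F : Finset I) (h : I → ℂ), 0 ≤ (∑ i ∈ F, ∑ j ∈ F, star (h i) * P i j * h j).re

lemma KPSD.exists_hilbert {I : Type*} {P : I → I → ℂ} (hP : KPSD P) :
    ∃ (v : I → lp (fun _ : I => ℂ) 2), ∀ i j, P i j = inner ℂ (v i) (v j) := by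
  classical
  let K : Matrix I I (ℂ →L[ℂ] ℂ) := fun i j => P i j • ContinuousLinearMap.id ℂ ℂ
  have hherm : K.IsHermitian := by
    ext i j
    rw [Matrix.conjTranspose_apply]
    have : star (ContinuousLinearMap.id ℂ ℂ) = ContinuousLinearMap.id ℂ ℂ := star_one (ℂ →L[ℂ] ℂ)
    simp [K, hP.1 i j, this]
  have hK : K.PosSemidef := by
    have htf := (RKHS.posSemidef_tfae (K := K)).out 0 2
    refine htf.mpr ⟨hherm, fun vv => ?_⟩
    have := hP.2 vv.support (fun i => vv i)
    rw [Finset.sum_comm] at this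
    convert this using 1
    simp only [Finsupp.sum, K]
    change Complex.re _ = _
    rw [← Complex.conj_re]
    congr 1
    simp only [map_sum]
    refine Finset.sum_congr rfl fun i _ => Finset.sum_congr rfl fun j _ => ?_
    simp
    ring
  have : Fact K.PosSemidef := ⟨hK⟩
  let H := RKHS.OfKernel K
  let u : I → H := fun i => RKHS.kerFun H i (1 : ℂ)
  have hu : ∀ i j, P i j = inner ℂ (u i) (u j) := by
    intro i j
    have := RKHS.kernel_inner H j i (1:ℂ) (1:ℂ)
    rw [← this, RKHS.OfKernel.kernel_ofKernel]
    simp [K, hP.1 i j]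
  have hdense : (Submodule.span ℂ (Set.range u)).topologicalClosure = ⊤ := by
    rw [← RKHS.kerFun_dense (𝕜 := ℂ) (X := I) (V := ℂ) H]
    congr 1
    apply le_antisymm
    · apply Submodule.span_mono
      rintro _ ⟨i, rfl⟩
      exact ⟨i, 1, rfl⟩
    · rw [Submodule.span_le]
      rintro _ ⟨i, z, rfl⟩
      have : RKHS.kerFun H i z = z • u i := by
        simp only [u]; rw [← map_smul]; simp
      rw [this]
      exact Submodule.smul_mem _ _ (Submodule.subset_span ⟨i, rfl⟩)
  obtain ⟨w, b, hb⟩ := exists_hilbertBasis ℂ H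
  have hcard : Cardinal.mk w ≤ Cardinal.mk I := by
    rcases finite_or_infinite I with hI | hI
    · have hfd : FiniteDimensional ℂ (Submodule.span ℂ (Set.range u)) :=
        FiniteDimensional.span_of_finite ℂ (Set.finite_range u)
      have hcl := Submodule.closed_of_finiteDimensional (Submodule.span ℂ (Set.range u))
      rw [hcl.submodule_topologicalClosure_eq] at hdense
      have h1 := b.orthonormal.linearIndependent.cardinal_le_rank
      have h2 := rank_span_le (R := ℂ) (Set.range u)
      rw [hdense, rank_top] at h2
      exact h1.trans (h2.trans Cardinal.mk_range_le)
    · have hcount : ∀ i, (Function.support (fun j => b.repr (u i) j)).Countable := by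
        intro i
        have h := (lp.summable_inner (𝕜 := ℂ) (b.repr (u i)) (b.repr (u i))).countable_support
        refine h.mono ?_
        intro j hj
        simpa using hj
      have hex : ∀ j : w, ∃ i, b.repr (u i) j ≠ 0 := by
        intro j
        by_contra! hcon
        have h0 : b j ∈ (Submodule.span ℂ (Set.range u))ᗮ := by
          rw [Submodule.mem_orthogonal']
          intro x hx
          induction hx using Submodule.span_induction with
          | mem x hx => obtain ⟨i, rfl⟩ := hx; rw [← b.repr_apply_apply]; exact hcon i
          | zero => simp
          | add x y _ _ hx hy => rw [inner_add_right, hx, hy, add_zero]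
          | smul a x _ hx => rw [inner_smul_right, hx, mul_zero]
        rw [Submodule.topologicalClosure_eq_top_iff] at hdense
        rw [hdense, Submodule.mem_bot] at h0
        have := b.orthonormal.1 j
        rw [h0] at this
        simp at this
      choose c hc using hex
      have henc : ∀ i, ∃ e : Function.support (fun j => b.repr (u i) j) → ℕ,
          Function.Injective e := fun i => by
        have := (hcount i).to_subtype
        exact exists_injective_nat _
      choose e he using henc
      have hinj : Function.Injective (fun j : w => (c j, e (c j) ⟨j, hc j⟩)) := by
        intro j k hjk
        simp only [Prod.mk.injEq] at hjk
        obtain ⟨h1, h2⟩ := hjk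
        have key : ∀ (i i' : I) (hi : b.repr (u i) j ≠ 0) (hi' : b.repr (u i') k ≠ 0), i = i' →
            e i ⟨j, hi⟩ = e i' ⟨k, hi'⟩ → j = k := by
          rintro i _ hi hi' rfl h
          exact congrArg Subtype.val (he i h)
        exact key _ _ _ _ h1 h2
      have h3 := Cardinal.mk_le_of_injective hinj
      refine h3.trans ?_
      simp only [Cardinal.mk_prod, Cardinal.lift_uzero, Cardinal.mk_nat, Cardinal.lift_aleph0]
      exact (Cardinal.mul_aleph0_eq (Cardinal.aleph0_le_mk I)).le
  obtain ⟨ι⟩ : Nonempty (w ↪ I) := hcard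
  have hon : Orthonormal ℂ (fun j : w => (lp.single 2 (ι j) (1 : ℂ) : lp (fun _ : I => ℂ) 2)) := by
    rw [orthonormal_iff_ite]
    intro i j
    rw [lp.inner_single_left]
    simp [Pi.single_apply, lp.single_apply, ι.injective.eq_iff]
  let V := hon.orthogonalFamily.linearIsometry
  refine ⟨fun i => V (b.repr (u i)), fun i j => ?_⟩
  rw [LinearIsometry.inner_map_map, LinearIsometryEquiv.inner_map_map, hu]

lemma quad_to_prod {z C N M : ℝ} (h : ∀ r : ℝ, r * z ≤ C / 2 * (r ^ 2 * N + M)) :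
    z ^ 2 ≤ C ^ 2 * N * M := by
  have := discrim_le_zero (a := C / 2 * N) (b := -z) (c := C / 2 * M) (fun r => by
    have := h r; nlinarith)
  rw [discrim] at this
  nlinarith

lemma lp_norm_sq_eq {I : Type*} (f : lp (fun _ : I => ℂ) 2) :
    HasSum (fun i => ‖f i‖ ^ 2) (‖f‖ ^ 2) := by
  have := lp.hasSum_norm (p := 2) (by norm_num) f
  simpa using this

lemma norm_sum_single {I : Type*} [DecidableEq I] (F : Finset I) (f : I → ℂ) :
    ‖∑ i ∈ F, f i • (lp.single 2 i (1 : ℂ) : lp (fun _ : I => ℂ) 2)‖ ^ 2 = ∑ i ∈ F, ‖f i‖ ^ 2 := by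
  have := lp.norm_sum_single (E := fun _ : I => ℂ) (p := 2) (by norm_num) f F
  simp only [ENNReal.toReal_ofNat, Real.rpow_ofNat] at this
  rw [← this]
  congr 2
  refine Finset.sum_congr rfl fun i _ => ?_
  rw [← lp.single_smul]; simp

/-- Construct an operator from a matrix with a bound on finite sections. -/
lemma exists_op {S T : Type*} [DecidableEq S] [DecidableEq T] (β : S → T → ℂ) (C : ℝ) (hC : 0 ≤ C)
    (h : ∀ (F : Finset S) (G : Finset T) (f : S → ℂ) (g : T → ℂ),
      ‖∑ s ∈ F, ∑ t ∈ G, star (g t) * β s t * f s‖ ≤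
        C / 2 * (∑ s ∈ F, ‖f s‖ ^ 2 + ∑ t ∈ G, ‖g t‖ ^ 2)) :
    ∃ B : lp (fun _ : S => ℂ) 2 →L[ℂ] lp (fun _ : T => ℂ) 2,
      (∀ s t, inner (𝕜 := ℂ) (lp.single 2 t 1) (B (lp.single 2 s 1)) = β s t) ∧ ‖B‖ ≤ C := by
  have h' : ∀ (F : Finset S) (G : Finset T) (f : S → ℂ) (g : T → ℂ),
      ‖∑ s ∈ F, ∑ t ∈ G, star (g t) * β s t * f s‖ ^ 2 ≤
        C ^ 2 * (∑ s ∈ F, ‖f s‖ ^ 2) * ∑ t ∈ G, ‖g t‖ ^ 2 := by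
    intro F G f g
    apply quad_to_prod
    intro r
    have := h F G (fun s => (r : ℂ) * f s) g
    simp only [norm_mul, mul_pow, Complex.norm_real, Real.norm_eq_abs, sq_abs, ← Finset.mul_sum] at this
    refine le_trans ?_ this
    have e : ∑ s ∈ F, ∑ t ∈ G, star (g t) * β s t * (r * f s) =
        r * ∑ s ∈ F, ∑ t ∈ G, star (g t) * β s t * f s := by
      simp only [Finset.mul_sum]
      exact Finset.sum_congr rfl fun s _ => Finset.sum_congr rfl fun t _ => by ring
    rw [e, norm_mul, Complex.norm_real, Real.norm_eq_abs]
    gcongr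
    exact le_abs_self r
  -- finite row bound
  have hrow : ∀ (F : Finset S) (G : Finset T) (f : S → ℂ),
      ∑ t ∈ G, ‖∑ s ∈ F, f s * β s t‖ ^ 2 ≤ C ^ 2 * ∑ s ∈ F, ‖f s‖ ^ 2 := by
    intro F G f
    set R := ∑ t ∈ G, ‖∑ s ∈ F, f s * β s t‖ ^ 2 with hR
    have hR0 : 0 ≤ R := by positivity
    have := h' F G f (fun t => ∑ s ∈ F, f s * β s t)
    have e : ∑ s ∈ F, ∑ t ∈ G, star (∑ s ∈ F, f s * β s t) * β s t * f s = (R : ℂ) := by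
      rw [Finset.sum_comm, hR]
      push_cast
      refine Finset.sum_congr rfl fun t _ => ?_
      rw [← Complex.conj_mul', Finset.mul_sum]
      exact Finset.sum_congr rfl fun s _ => by simp; ring
    rw [e, ← hR, Complex.norm_real, Real.norm_eq_abs, sq_abs] at this
    rcases hR0.eq_or_lt with h0 | h0
    · rw [← h0]; positivity
    · nlinarith
  have hmem : ∀ s, Memℓp (fun t => β s t) 2 := by
    intro s
    refine memℓp_gen' (C := C ^ 2) fun G => ?_
    have := hrow {s} G (fun _ => 1)
    simpa using this
  let b : S → lp (fun _ : T => ℂ) 2 := fun s => ⟨fun t => β s t, hmem s⟩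
  have hb : ∀ s t, b s t = β s t := fun s t => rfl
  have hsum : ∀ (F : Finset S) (f : S → ℂ), ‖∑ s ∈ F, f s • b s‖ ^ 2 ≤ C ^ 2 * ∑ s ∈ F, ‖f s‖ ^ 2 := by
    intro F f
    refine le_of_tendsto (lp_norm_sq_eq (∑ s ∈ F, f s • b s)) (Filter.Eventually.of_forall fun G => ?_)
    refine le_trans (le_of_eq ?_) (hrow F G f)
    refine Finset.sum_congr rfl fun t _ => ?_
    simp only [lp.coeFn_sum]
    erw [Finset.sum_apply]
    rfl
  have hsummable : ∀ f : lp (fun _ : S => ℂ) 2, Summable fun s => f s • b s := by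
    intro f
    rw [summable_iff_vanishing_norm]
    intro ε hε
    have hs := (lp_norm_sq_eq f).summable
    rw [summable_iff_vanishing_norm] at hs
    obtain ⟨F, hF⟩ := hs (ε ^ 2 / (C ^ 2 + 1)) (by positivity)
    refine ⟨F, fun G hG => ?_⟩
    have h1 := hF G hG
    rw [Real.norm_eq_abs, abs_of_nonneg (by positivity), lt_div_iff₀ (by positivity)] at h1
    have h2 := hsum G f
    have h3 : 0 ≤ ∑ s ∈ G, ‖f s‖ ^ 2 := by positivity
    refine lt_of_pow_lt_pow_left₀ 2 hε.le ?_
    nlinarith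
  let B0 : lp (fun _ : S => ℂ) 2 →ₗ[ℂ] lp (fun _ : T => ℂ) 2 :=
    { toFun := fun f => ∑' s, f s • b s
      map_add' := fun f g => by
        rw [← (hsummable f).tsum_add (hsummable g)]
        simp [add_smul]
      map_smul' := fun a f => by
        rw [RingHom.id_apply, ← (hsummable f).tsum_const_smul]
        simp [mul_smul] }
  have hbound : ∀ f, ‖B0 f‖ ≤ C * ‖f‖ := by
    intro f
    refine le_of_sq_le_sq ?_ (by positivity)
    rw [mul_pow]
    refine le_of_tendsto_of_tendsto ((hsummable f).hasSum.norm.pow 2)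
      ((lp_norm_sq_eq f).const_mul _) (Filter.Eventually.of_forall fun F => hsum F f)
  refine ⟨B0.mkContinuous C hbound, fun s t => ?_, B0.mkContinuous_norm_le hC hbound⟩
  have e : B0 (lp.single 2 s 1) = b s := by
    change ∑' s', (lp.single 2 s (1:ℂ) : lp (fun _ : S => ℂ) 2) s' • b s' = b s
    rw [tsum_eq_single s]
    · simp
    · intro s' hs'
      simp [lp.single_apply, hs']
  rw [LinearMap.mkContinuous_apply, e, lp.inner_single_left]
  simp [hb]

lemma hpart {I K : Type*} (F : Finset I) (f : I → ℂ) (x : I → lp (fun _ : K => ℂ) 2)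
      (hx : ∀ s, ‖x s‖ ≤ 1) (k : Finset K) : ∑ k ∈ k, ∑ s ∈ F, ‖f s * star (x s k)‖ ^ 2 ≤
      ∑ s ∈ F, ‖f s‖ ^ 2 := by
  rw [Finset.sum_comm]
  refine Finset.sum_le_sum fun s _ => ?_
  simp only [norm_mul, mul_pow, ← Finset.mul_sum, norm_star]
  have h1 := sum_le_hasSum k (fun i _ => by positivity) (lp_norm_sq_eq (x s))
  have h2 : ‖x s‖ ^ 2 ≤ 1 := pow_le_one₀ (norm_nonneg _) (hx s)
  exact mul_le_of_le_one_right (by positivity) (h1.trans h2)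

lemma hlim_aux {S T K : Type*} (x : S → lp (fun _ : K => ℂ) 2) (y : T → lp (fun _ : K => ℂ) 2)
    (α : S → T → ℂ) (f : S → ℂ) (g : T → ℂ) (F : Finset S) (G : Finset T) :
    HasSum (fun k => ∑ s ∈ F, ∑ t ∈ G, star (g t) * (inner ℂ (x s k) (y t k) * α s t) * f s)
      (∑ s ∈ F, ∑ t ∈ G, star (g t) * (inner ℂ (x s) (y t) * α s t) * f s) := by
  have h1 : ∀ s t, HasSum (fun k => star (g t) * (inner ℂ (x s k) (y t k) * α s t) * f s)
      (star (g t) * (inner ℂ (x s) (y t) * α s t) * f s) := fun s t =>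
    HasSum.mul_right (f s) (HasSum.mul_left (star (g t))
      (HasSum.mul_right (α s t) (lp.hasSum_inner (x s) (y t))))
  exact hasSum_sum (s := F) (fun s _ => hasSum_sum (s := G) (fun t _ => h1 s t))

lemma schur_of_vectors {S T K : Type*} [DecidableEq S] [DecidableEq T] 
    (x : S → lp (fun _ : K => ℂ) 2) (y : T → lp (fun _ : K => ℂ) 2)
    (hx : ∀ s, ‖x s‖ ≤ 1) (hy : ∀ t, ‖y t‖ ≤ 1)
    (A : lp (fun _ : S => ℂ) 2 →L[ℂ] lp (fun _ : T => ℂ) 2) :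
    ∃ B : lp (fun _ : S => ℂ) 2 →L[ℂ] lp (fun _ : T => ℂ) 2,
      (∀ s t, inner (𝕜 := ℂ) (lp.single 2 t 1) (B (lp.single 2 s 1)) =
        inner ℂ (x s) (y t) * inner (𝕜 := ℂ) (lp.single 2 t 1) (A (lp.single 2 s 1))) ∧
      ‖B‖ ≤ ‖A‖ := by
  refine exists_op (fun s t => inner ℂ (x s) (y t) *
    inner (𝕜 := ℂ) (lp.single 2 t 1) (A (lp.single 2 s 1))) _ (norm_nonneg _) ?_
  intro F G f g
  have hlim := hlim_aux x y (fun s t =>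
    inner (𝕜 := ℂ) (lp.single 2 t 1) (A (lp.single 2 s 1))) f g F G
  refine le_of_tendsto hlim.norm (Filter.Eventually.of_forall fun k => ?_)
  have hk : ∀ k, ‖∑ s ∈ F, ∑ t ∈ G, star (g t) * (inner ℂ (x s k) (y t k) *
      inner (𝕜 := ℂ) (lp.single 2 t 1) (A (lp.single 2 s 1))) * f s‖ ≤
      ‖A‖ / 2 * (∑ s ∈ F, ‖f s * star (x s k)‖ ^ 2 + ∑ t ∈ G, ‖g t * star (y t k)‖ ^ 2) := by
    intro k
    set p := ∑ s ∈ F, (f s * star (x s k)) • (lp.single 2 s (1 : ℂ) : lp (fun _ : S => ℂ) 2) with hp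
    set q := ∑ t ∈ G, (g t * star (y t k)) • (lp.single 2 t (1 : ℂ) : lp (fun _ : T => ℂ) 2) with hq
    have e : ∑ s ∈ F, ∑ t ∈ G, star (g t) * (inner ℂ (x s k) (y t k) *
      inner (𝕜 := ℂ) (lp.single 2 t 1) (A (lp.single 2 s 1))) * f s = inner ℂ q (A p) := by
      rw [hp, hq, map_sum, inner_sum]
      refine Finset.sum_congr rfl fun s _ => ?_
      rw [sum_inner]
      refine Finset.sum_congr rfl fun t _ => ?_
      rw [map_smul, inner_smul_left, inner_smul_right]
      simp
      ring
    rw [e, ← norm_sum_single, ← norm_sum_single, ← hp, ← hq]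
    have h1 := norm_inner_le_norm (𝕜 := ℂ) q (A p)
    have h2 := A.le_opNorm p
    have h3 : ‖q‖ * ‖A p‖ ≤ ‖q‖ * (‖A‖ * ‖p‖) := by gcongr
    nlinarith [mul_nonneg (norm_nonneg A) (sq_nonneg (‖p‖ - ‖q‖))]
  refine (norm_sum_le _ _).trans ((Finset.sum_le_sum fun k _ => hk k).trans ?_)
  rw [← Finset.mul_sum, Finset.sum_add_distrib]
  have := hpart F f x hx k
  have := hpart G g y hy k
  gcongr

/-- The ambient real locally convex space. -/
abbrev EE (S T : Type*) := (S → ℝ) × (T → ℝ) × (S → T → ℂ)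

def WW (S T : Type*) : Set (EE S T) :=
  {w | ∃ P : S ⊕ T → S ⊕ T → ℂ, KPSD P ∧ (∀ s, (P (.inl s) (.inl s)).re ≤ w.1 s) ∧
    (∀ t, (P (.inr t) (.inr t)).re ≤ w.2.1 t) ∧ ∀ s t, P (.inl s) (.inr t) = w.2.2 s t}

lemma KPSD.add {I : Type*} {P Q : I → I → ℂ} (hP : KPSD P) (hQ : KPSD Q) :
    KPSD (fun i j => P i j + Q i j) := by
  refine ⟨fun i j => by simp only [hP.1 i j, hQ.1 i j, star_add], fun F h => ?_⟩
  have := add_nonneg (hP.2 F h) (hQ.2 F h)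
  rw [← Complex.add_re, ← Finset.sum_add_distrib] at this
  refine this.trans_eq (congrArg Complex.re ?_)
  refine Finset.sum_congr rfl fun i _ => ?_
  rw [← Finset.sum_add_distrib]
  exact Finset.sum_congr rfl fun j _ => by ring

lemma KPSD.smul {I : Type*} {P : I → I → ℂ} (hP : KPSD P) (r : ℝ) (hr : 0 ≤ r) :
    KPSD (fun i j => (r : ℂ) * P i j) := by
  refine ⟨fun i j => by simp [hP.1 i j], fun F h => ?_⟩
  have := mul_nonneg hr (hP.2 F h)
  rw [← Complex.re_ofReal_mul] at this
  refine this.trans_eq (congrArg Complex.re ?_)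
  simp only [Finset.mul_sum]
  exact Finset.sum_congr rfl fun i _ => Finset.sum_congr rfl fun j _ => by ring

lemma KPSD.rankOne {I : Type*} (h : I → ℂ) : KPSD (fun i j => star (h i) * h j) := by
  refine ⟨fun i j => by simp [mul_comm], fun F g => ?_⟩
  have : ∑ i ∈ F, ∑ j ∈ F, star (g i) * (star (h i) * h j) * g j =
      star (∑ i ∈ F, h i * g i) * (∑ i ∈ F, h i * g i) := by
    rw [star_sum, Finset.sum_mul_sum]
    exact Finset.sum_congr rfl fun i _ => Finset.sum_congr rfl fun j _ => by simp; ring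
  rw [this]
  have h2 := Complex.conj_mul' (∑ i ∈ F, h i * g i)
  rw [Complex.star_def, h2, ← Complex.ofReal_pow, Complex.ofReal_re]
  positivity

lemma KPSD.zero {I : Type*} : KPSD (fun _ _ : I => (0 : ℂ)) := by
  refine ⟨fun i j => by simp, fun F h => by simp⟩

def WC (S T : Type*) : Submodule ℝ≥0 (EE S T) where
  carrier := WW S T
  add_mem' := by
    rintro a b ⟨P, hP, h1, h2, h3⟩ ⟨Q, hQ, k1, k2, k3⟩
    exact ⟨_, hP.add hQ, fun s => by simpa using add_le_add (h1 s) (k1 s),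
      fun t => by simpa using add_le_add (h2 t) (k2 t), fun s t => by simp [h3, k3]⟩
  zero_mem' := ⟨_, KPSD.zero, by simp, by simp, by simp⟩
  smul_mem' := by
    rintro r a ⟨P, hP, h1, h2, h3⟩
    refine ⟨_, hP.smul r r.2, fun s => ?_, fun t => ?_, fun s t => ?_⟩
    · simpa [NNReal.smul_def] using mul_le_mul_of_nonneg_left (h1 s) r.2
    · simpa [NNReal.smul_def] using mul_le_mul_of_nonneg_left (h2 t) r.2
    · simp only [h3]; rfl

/-- closure point gives exact completion -/
lemma exists_kernel {S T : Type*} (ψ : S → T → ℂ)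
    (h : ((fun _ => 1, fun _ => 1, ψ) : EE S T) ∈ closure (WW S T)) :
    ∃ P : S ⊕ T → S ⊕ T → ℂ, KPSD P ∧ (∀ i, (P i i).re ≤ 1) ∧
      ∀ s t, P (.inl s) (.inr t) = ψ s t := by
  rw [mem_closure_iff_ultrafilter] at h
  obtain ⟨u, hu, hlim⟩ := h
  have hWW : ∀ w, w ∈ WW S T → ∃ P : S ⊕ T → S ⊕ T → ℂ, KPSD P ∧
    (∀ s, (P (.inl s) (.inl s)).re ≤ w.1 s) ∧
    (∀ t, (P (.inr t) (.inr t)).re ≤ w.2.1 t) ∧ ∀ s t, P (.inl s) (.inr t) = w.2.2 s t :=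
    fun w hw => hw
  choose! P hP using hWW
  let D : S ⊕ T → EE S T → ℝ := fun i w => Sum.elim w.1 w.2.1 i
  have hid : Filter.Tendsto id (u : Filter (EE S T)) (nhds ((fun _ => 1, fun _ => 1, ψ) : EE S T)) :=
    hlim
  have hD : ∀ i, Filter.Tendsto (D i) u (nhds 1) := by
    rintro (s | t)
    · have : Continuous (fun w : EE S T => w.1 s) := by fun_prop
      exact (this.tendsto _).comp hid
    · have : Continuous (fun w : EE S T => w.2.1 t) := by fun_prop
      exact (this.tendsto _).comp hid
  have hψ : ∀ s t, Filter.Tendsto (fun w : EE S T => w.2.2 s t) u (nhds (ψ s t)) := by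
    intro s t
    have : Continuous (fun w : EE S T => w.2.2 s t) := by fun_prop
    exact (this.tendsto _).comp hid
  have hPD : ∀ w ∈ WW S T, ∀ i, (P w i i).re ≤ D i w := by
    rintro w hw (s | t)
    · exact (hP w hw).2.1 s
    · exact (hP w hw).2.2.1 t
  have hbd : ∀ i j, ∀ᶠ w in (u : Filter (EE S T)), P w i j ∈ Metric.closedBall (0 : ℂ) 2 := by
    intro i j
    filter_upwards [hu, (hD i).eventually_le_const (u := 2) (by norm_num),
      (hD j).eventually_le_const (u := 2) (by norm_num)] with w hw h1 h2
    obtain ⟨v, hv⟩ := (hP w hw).1.exists_hilbert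
    have e : ∀ i, ‖v i‖ ^ 2 ≤ D i w := by
      intro i
      refine le_trans (le_of_eq ?_) (hPD w hw i)
      rw [hv, inner_self_eq_norm_sq_to_K]
      norm_cast
    rw [mem_closedBall_zero_iff, hv]
    have := norm_inner_le_norm (𝕜 := ℂ) (v i) (v j)
    nlinarith [e i, e j, sq_nonneg (‖v i‖ - ‖v j‖)]
  have hex : ∀ i j, ∃ z, Filter.Tendsto (fun w => P w i j) u (nhds z) := by
    intro i j
    obtain ⟨z, -, hz⟩ := (isCompact_closedBall (0 : ℂ) 2).ultrafilter_le_nhds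
      (u.map (fun w => P w i j)) (by rw [Filter.le_principal_iff]; exact hbd i j)
    exact ⟨z, hz⟩
  choose Q hQ using hex
  refine ⟨Q, ⟨fun i j => ?_, fun F h => ?_⟩, fun i => ?_, fun s t => ?_⟩
  · refine tendsto_nhds_unique_of_eventuallyEq (hQ j i) (hQ i j).star ?_
    filter_upwards [hu] with w hw using (hP w hw).1.1 i j
  · have : Filter.Tendsto (fun w => (∑ i ∈ F, ∑ j ∈ F, star (h i) * P w i j * h j).re) u
        (nhds (∑ i ∈ F, ∑ j ∈ F, star (h i) * Q i j * h j).re) := by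
      refine (Complex.continuous_re.tendsto _).comp ?_
      exact tendsto_finsetSum _ fun i _ => tendsto_finsetSum _ fun j _ =>
        ((hQ i j).const_mul _).mul_const _
    refine ge_of_tendsto this ?_
    filter_upwards [hu] with w hw using (hP w hw).1.2 F h
  · refine le_of_tendsto_of_tendsto ((Complex.continuous_re.tendsto _).comp (hQ i i)) (hD i) ?_
    filter_upwards [hu] with w hw using hPD w hw i
  · refine tendsto_nhds_unique_of_eventuallyEq (hQ _ _) (hψ s t) ?_
    filter_upwards [hu] with w hw using (hP w hw).2.2.2 s t

def XX {S T : Type*} [DecidableEq S] [DecidableEq T] (F : Finset S) (G : Finset T)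
    (a : S → ℝ) (b : T → ℝ) (φ : S → T → ℂ) : EE S T :=
  ∑ s ∈ F, a s • (Pi.single s 1, 0, 0) + ∑ t ∈ G, b t • (0, Pi.single t 1, 0) +
    ∑ s ∈ F, ∑ t ∈ G, (0, 0, Pi.single s (Pi.single t (φ s t)))

lemma XX_eq {S T : Type*} [DecidableEq S] [DecidableEq T] (F : Finset S) (G : Finset T)
    (a : S → ℝ) (b : T → ℝ) (φ : S → T → ℂ) : XX F G a b φ =
    (fun s => if s ∈ F then a s else 0, fun t => if t ∈ G then b t else 0,
      fun s t => if s ∈ F then if t ∈ G then φ s t else 0 else 0) := by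
  refine Prod.ext ?_ (Prod.ext ?_ ?_)
  · ext s
    simp [XX, Prod.fst_sum, Finset.sum_apply, Pi.single_apply]
  · ext t
    simp [XX, Prod.fst_sum, Prod.snd_sum, Finset.sum_apply, Pi.single_apply]
  · ext s t
    simp only [XX, Prod.snd_add, Prod.snd_sum, Finset.sum_apply, Pi.add_apply, Prod.smul_snd,
      Pi.smul_apply, Pi.zero_apply, smul_zero, Finset.sum_const_zero, zero_add]
    have : ∀ s' t', (Pi.single s' (Pi.single t' (φ s' t')) : S → T → ℂ) s t =
        if s = s' then if t = t' then φ s t else 0 else 0 := by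
      intro s' t'
      by_cases h1 : s = s'
      · subst h1
        by_cases h2 : t = t'
        · subst h2; simp
        · simp [h2]
      · simp [h1]
    simp only [this]
    by_cases hs : s ∈ F <;> by_cases ht : t ∈ G <;> simp [hs, ht]

lemma XX_tendsto {S T : Type*} [DecidableEq S] [DecidableEq T] 
    (a : S → ℝ) (b : T → ℝ) (φ : S → T → ℂ) :
    Filter.Tendsto (fun p : Finset S × Finset T => XX p.1 p.2 a b φ) Filter.atTop
      (nhds (a, b, φ)) := by
  have hF : ∀ s : S, ∀ᶠ p : Finset S × Finset T in Filter.atTop, s ∈ p.1 := fun s => by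
    filter_upwards [Filter.eventually_ge_atTop ({s}, ∅)] with p hp
    exact hp.1 (by simp)
  have hG : ∀ t : T, ∀ᶠ p : Finset S × Finset T in Filter.atTop, t ∈ p.2 := fun t => by
    filter_upwards [Filter.eventually_ge_atTop (∅, {t})] with p hp
    exact hp.2 (by simp)
  simp only [XX_eq]
  refine Filter.Tendsto.prodMk_nhds ?_ (Filter.Tendsto.prodMk_nhds ?_ ?_)
  · rw [tendsto_pi_nhds]
    intro s
    refine tendsto_const_nhds.congr' ?_
    filter_upwards [hF s] with p hp
    simp [hp]
  · rw [tendsto_pi_nhds]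
    intro s
    refine tendsto_const_nhds.congr' ?_
    filter_upwards [hG s] with p hp
    simp [hp]
  · rw [tendsto_pi_nhds]
    intro s
    rw [tendsto_pi_nhds]
    intro t
    refine tendsto_const_nhds.congr' ?_
    filter_upwards [hF s, hG t] with p hp hp'
    simp [hp, hp']

lemma XX_rankOne_mem {S T : Type*} [DecidableEq S] [DecidableEq T] (F : Finset S) (G : Finset T)
    (a : S → ℂ) (b : T → ℂ) :
    XX F G (fun s => ‖a s‖ ^ 2) (fun t => ‖b t‖ ^ 2) (fun s t => star (a s) * b t) ∈ WW S T := by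
  rw [XX_eq]
  refine ⟨_, KPSD.rankOne (Sum.elim (fun s => if s ∈ F then a s else 0)
    (fun t => if t ∈ G then b t else 0)), fun s => ?_, fun t => ?_, fun s t => ?_⟩
  · by_cases hs : s ∈ F
    · simp only [Sum.elim_inl, hs, if_true]
      rw [Complex.star_def, Complex.conj_mul']; norm_cast
    · simp [hs]
  · by_cases hs : t ∈ G
    · simp only [Sum.elim_inr, hs, if_true]
      rw [Complex.star_def, Complex.conj_mul']; norm_cast
    · simp [hs]
  · by_cases hs : s ∈ F <;> by_cases ht : t ∈ G <;> simp [hs, ht]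

lemma exists_phase (z : ℂ) : ∃ u : ℂ, ‖u‖ = 1 ∧ (u * z).re = -‖z‖ := by
  by_cases hz : z = 0
  · exact ⟨1, by simp, by simp [hz]⟩
  · have hn : ‖z‖ ≠ 0 := by simpa using hz
    refine ⟨-(star z / ‖z‖), by simp [hn], ?_⟩
    have : -(star z / (‖z‖ : ℂ)) * z = ((-‖z‖ : ℝ) : ℂ) := by
      have h2 := Complex.conj_mul' z
      have hn' : (‖z‖ : ℂ) ≠ 0 := by exact_mod_cast hn
      push_cast
      rw [Complex.star_def]
      field_simp
      linear_combination -h2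
    rw [this, Complex.ofReal_re]

lemma finite_dual {S T : Type*} [DecidableEq S] [DecidableEq T] (ψ : S → T → ℂ)
    (hψ : ∀ A : lp (fun _ : S => ℂ) 2 →L[ℂ] lp (fun _ : T => ℂ) 2,
    ∃ B : lp (fun _ : S => ℂ) 2 →L[ℂ] lp (fun _ : T => ℂ) 2,
      (∀ (s : S) (t : T),
        (inner (𝕜 := ℂ) (lp.single 2 t 1) (B (lp.single 2 s 1)))
          = ψ s t * inner (𝕜 := ℂ) (lp.single 2 t 1) (A (lp.single 2 s 1))) ∧
      ‖B‖ ≤ ‖A‖) (l : S → ℝ) (m : T → ℝ) (c : S → T → ℂ) (hl : ∀ s, 0 ≤ l s) (hm : ∀ t, 0 ≤ m t)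
    (h : ∀ (F : Finset S) (G : Finset T) (a : S → ℂ) (b : T → ℂ),
      0 ≤ ∑ s ∈ F, ‖a s‖ ^ 2 * l s + ∑ t ∈ G, ‖b t‖ ^ 2 * m t +
        (∑ s ∈ F, ∑ t ∈ G, c s t * (star (a s) * b t)).re)
    (F : Finset S) (G : Finset T) :
    0 ≤ ∑ s ∈ F, l s + ∑ t ∈ G, m t + (∑ s ∈ F, ∑ t ∈ G, c s t * ψ s t).re := by
  suffices H : ∀ ε : ℝ, 0 < ε → 0 ≤ ∑ s ∈ F, (l s + ε) + ∑ t ∈ G, (m t + ε) +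
      (∑ s ∈ F, ∑ t ∈ G, c s t * ψ s t).re by
    have hc : Filter.Tendsto (fun ε : ℝ => ∑ s ∈ F, (l s + ε) + ∑ t ∈ G, (m t + ε) +
      (∑ s ∈ F, ∑ t ∈ G, c s t * ψ s t).re) (nhdsWithin 0 (Set.Ioi 0))
      (nhds (∑ s ∈ F, (l s + 0) + ∑ t ∈ G, (m t + 0) +
      (∑ s ∈ F, ∑ t ∈ G, c s t * ψ s t).re)) := by
      refine tendsto_nhdsWithin_of_tendsto_nhds (Continuous.tendsto ?_ 0)
      fun_prop
    have := ge_of_tendsto hc (b := 0) (by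
      filter_upwards [self_mem_nhdsWithin] with ε hε using H ε hε)
    simpa using this
  intro ε hε
  set p : S → ℝ := fun s => √(l s + ε) with hp
  set q : T → ℝ := fun t => √(m t + ε) with hq
  have hp0 : ∀ s, 0 < p s := fun s => Real.sqrt_pos.2 (by linarith [hl s])
  have hq0 : ∀ s, 0 < q s := fun s => Real.sqrt_pos.2 (by linarith [hm s])
  have hp2 : ∀ s, p s ^ 2 = l s + ε := fun s => Real.sq_sqrt (by linarith [hl s])
  have hq2 : ∀ s, q s ^ 2 = m s + ε := fun s => Real.sq_sqrt (by linarith [hm s])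
  have hpc : ∀ s, (p s : ℂ) ≠ 0 := fun s => by exact_mod_cast (hp0 s).ne'
  have hqc : ∀ s, (q s : ℂ) ≠ 0 := fun s => by exact_mod_cast (hq0 s).ne'
  obtain ⟨A, hA, hA1⟩ := exists_op (fun s t => c s t / (2 * p s * q t)) 1 zero_le_one (by
    intro F G f g
    obtain ⟨u, hu, huz⟩ := exists_phase
      (∑ s ∈ F, ∑ t ∈ G, star (g t) * (c s t / (2 * p s * q t)) * f s)
    have h1 := h F G (fun s => star (u * f s) / p s) (fun t => star (g t) / q t)
    have e : ∑ s ∈ F, ∑ t ∈ G, c s t * (star (star (u * f s) / (p s : ℂ)) * (star (g t) / q t)) =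
        ((2 : ℝ) : ℂ) * (u * ∑ s ∈ F, ∑ t ∈ G, star (g t) * (c s t / (2 * p s * q t)) * f s) := by
      simp only [Finset.mul_sum]
      refine Finset.sum_congr rfl fun s _ => Finset.sum_congr rfl fun t _ => ?_
      have := hpc s
      have := hqc t
      simp
      field_simp
    rw [e, Complex.re_ofReal_mul, huz] at h1
    have e1 : ∑ s ∈ F, ‖star (u * f s) / (p s : ℂ)‖ ^ 2 * l s ≤ ∑ s ∈ F, ‖f s‖ ^ 2 := by
      refine Finset.sum_le_sum fun s _ => ?_
      rw [norm_div, norm_star, norm_mul, hu, one_mul, div_pow, Complex.norm_real,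
        Real.norm_eq_abs, sq_abs, hp2, div_mul_eq_mul_div, div_le_iff₀ (by linarith [hl s])]
      gcongr
      linarith
    have e2 : ∑ s ∈ G, ‖star (g s) / (q s : ℂ)‖ ^ 2 * m s ≤ ∑ s ∈ G, ‖g s‖ ^ 2 := by
      refine Finset.sum_le_sum fun s _ => ?_
      rw [norm_div, norm_star, div_pow, Complex.norm_real,
        Real.norm_eq_abs, sq_abs, hq2, div_mul_eq_mul_div, div_le_iff₀ (by linarith [hm s])]
      gcongr
      linarith
    linarith)
  obtain ⟨B, hB, hB1⟩ := hψ A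
  set x := ∑ s ∈ F, (p s : ℂ) • (lp.single 2 s (1 : ℂ) : lp (fun _ : S => ℂ) 2) with hx
  set y := ∑ t ∈ G, (q t : ℂ) • (lp.single 2 t (1 : ℂ) : lp (fun _ : T => ℂ) 2) with hy
  have e : ∑ s ∈ F, ∑ t ∈ G, c s t * ψ s t = ((2 : ℝ) : ℂ) * inner ℂ y (B x) := by
    rw [hx, hy, map_sum, inner_sum, Finset.mul_sum]
    refine Finset.sum_congr rfl fun s _ => ?_
    rw [sum_inner, Finset.mul_sum]
    refine Finset.sum_congr rfl fun t _ => ?_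
    rw [map_smul, inner_smul_left, inner_smul_right, hB, hA]
    have := hpc s
    have := hqc t
    simp
    field_simp
  have hxn : ‖x‖ ^ 2 = ∑ s ∈ F, (l s + ε) := by
    rw [hx, norm_sum_single]
    exact Finset.sum_congr rfl fun s _ => by rw [← hp2]; simp
  have hyn : ‖y‖ ^ 2 = ∑ t ∈ G, (m t + ε) := by
    rw [hy, norm_sum_single]
    exact Finset.sum_congr rfl fun s _ => by rw [← hq2]; simp
  rw [e, ← hxn, ← hyn, Complex.re_ofReal_mul]
  have h1 := norm_inner_le_norm (𝕜 := ℂ) y (B x)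
  have h2 : ‖B x‖ ≤ 1 * ‖x‖ := (B.le_opNorm x).trans (by gcongr; exact hB1.trans hA1)
  have h3 : ‖y‖ * ‖B x‖ ≤ ‖y‖ * (1 * ‖x‖) := by gcongr
  have h4 := Complex.abs_re_le_norm (inner ℂ y (B x))
  have h5 := neg_abs_le (inner ℂ y (B x)).re
  nlinarith [sq_nonneg (‖x‖ - ‖y‖)]

lemma mem_closure_WW {S T : Type*} [DecidableEq S] [DecidableEq T] (ψ : S → T → ℂ)
    (hψ : ∀ A : lp (fun _ : S => ℂ) 2 →L[ℂ] lp (fun _ : T => ℂ) 2,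
    ∃ B : lp (fun _ : S => ℂ) 2 →L[ℂ] lp (fun _ : T => ℂ) 2,
      (∀ (s : S) (t : T),
        (inner (𝕜 := ℂ) (lp.single 2 t 1) (B (lp.single 2 s 1)))
          = ψ s t * inner (𝕜 := ℂ) (lp.single 2 t 1) (A (lp.single 2 s 1))) ∧
      ‖B‖ ≤ ‖A‖) :
    ((fun _ => 1, fun _ => 1, ψ) : EE S T) ∈ closure (WW S T) := by
  by_contra hcon
  let C : ProperCone ℝ (EE S T) := (WC S T).closure
  have hC : (C : Set (EE S T)) = closure (WW S T) := rfl
  obtain ⟨f, hf, hf0⟩ := ProperCone.hyperplane_separation_point C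
    (x₀ := ((fun _ => 1, fun _ => 1, ψ) : EE S T)) hcon
  have hfW : ∀ w ∈ WW S T, 0 ≤ f w := fun w hw => hf w (subset_closure hw)
  let l : S → ℝ := fun s => f (Pi.single s 1, 0, 0)
  let m : T → ℝ := fun t => f (0, Pi.single t 1, 0)
  let γ : S → T → ℂ → ℝ := fun s t z => f (0, 0, Pi.single s (Pi.single t z))
  let c : S → T → ℂ := fun s t => γ s t 1 - Complex.I * γ s t Complex.I
  have hγ : ∀ s t z, γ s t z = (c s t * z).re := by
    intro s t z
    have e : ((0, 0, Pi.single s (Pi.single t z)) : EE S T) =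
        z.re • (0, 0, Pi.single s (Pi.single t 1)) +
        z.im • (0, 0, Pi.single s (Pi.single t Complex.I)) := by
      refine Prod.ext (by simp) (Prod.ext (by simp) ?_)
      simp only [Prod.snd_add, Prod.smul_snd, ← Pi.single_smul, ← Pi.single_add]
      congr 2
      simp [Complex.re_add_im]
    simp only [γ, c]
    rw [e, map_add, map_smul, map_smul]
    simp [mul_comm]
  have hfX : ∀ F G a b φ, f (XX F G a b φ) = ∑ s ∈ F, a s * l s + ∑ t ∈ G, b t * m t +
      (∑ s ∈ F, ∑ t ∈ G, c s t * φ s t).re := by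
    intro F G a b φ
    simp only [XX, map_add, map_sum, map_smul, Complex.re_sum, ← hγ, smul_eq_mul]
    rfl
  have hl : ∀ s, 0 ≤ l s := fun s => by
    have h1 := hfW _ (XX_rankOne_mem {s} (∅ : Finset T) (fun _ => 1) (fun _ => 1))
    rw [hfX] at h1
    simpa using h1
  have hm : ∀ t, 0 ≤ m t := fun t => by
    have h1 := hfW _ (XX_rankOne_mem (∅ : Finset S) {t} (fun _ => 1) (fun _ => 1))
    rw [hfX] at h1
    simpa using h1
  have key := finite_dual ψ hψ l m c hl hm (fun F G a b => by
    rw [← hfX F G (fun s => ‖a s‖ ^ 2) (fun t => ‖b t‖ ^ 2) (fun s t => star (a s) * b t)]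
    exact hfW _ (XX_rankOne_mem F G a b))
  have hlim := (f.continuous.tendsto _).comp (XX_tendsto (fun _ : S => (1:ℝ)) (fun _ : T => (1:ℝ)) ψ)
  have := ge_of_tendsto hlim (b := 0) (Filter.Eventually.of_forall fun p => by
    simp only [Function.comp]
    rw [hfX]
    simpa using key p.1 p.2)
  linarith

/-- `ψ` is a Schur multiplier of norm at most 1 iff there are vectors
`x : S → K`, `y : T → K` in the Hilbert space `K = ℓ²(S ⊕ T)` with `‖x s‖ ≤ 1`,
`‖y t‖ ≤ 1` and `ψ(s,t) = ⟪x s, y t⟫`. -/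
theorem stmt_0 {S T : Type*} (ψ : S × T → ℂ) :
    IsSchurMultiplier ψ 1 ↔
      ∃ (x : S → lp (fun _ : S ⊕ T => ℂ) 2) (y : T → lp (fun _ : S ⊕ T => ℂ) 2),
        (∀ s, ‖x s‖ ≤ 1) ∧ (∀ t, ‖y t‖ ≤ 1) ∧
        ∀ s t, ψ (s, t) = inner (𝕜 := ℂ) (x s) (y t) := by
  letI := Classical.decEq S
  letI := Classical.decEq T
  constructor
  · intro h
    obtain ⟨P, hP, hd, ho⟩ := exists_kernel (fun s t => ψ (s, t))
      (mem_closure_WW (fun s t => ψ (s, t)) (fun A => by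
        obtain ⟨B, hB, hB1⟩ := h A
        exact ⟨B, hB, by simpa using hB1⟩))
    obtain ⟨v, hv⟩ := hP.exists_hilbert
    have hn : ∀ i, ‖v i‖ ≤ 1 := by
      intro i
      have h1 := hd i
      rw [hv, inner_self_eq_norm_sq_to_K] at h1
      have h2 : ‖v i‖ ^ 2 ≤ 1 := by exact_mod_cast h1
      exact (sq_le_one_iff₀ (norm_nonneg _)).1 h2
    exact ⟨fun s => v (.inl s), fun t => v (.inr t), fun s => hn _, fun t => hn _,
      fun s t => by rw [← hv]; exact (ho s t).symm⟩
  · rintro ⟨x, y, hx, hy, hxy⟩ A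
    obtain ⟨B, hB, hB1⟩ := schur_of_vectors x y hx hy A
    exact ⟨B, fun s t => by rw [hxy]; exact hB s t, by simpa using hB1⟩
end
end

section
/- Let S and T be sets and let ψ : S × T → ℂ. The following are equivalent: (a) there exist a constant C and a partition S × T = Γ₁ ∪ Γ₂ (Γ₁ ∩ Γ₂ = ∅) such that sup_{s∈S} Σ_{t : (s,t)∈Γ₁} |ψ(s,t)|² ≤ C² and sup_{t∈T} Σ_{s : (s,t)∈Γ₂} |ψ(s,t)|² ≤ C²; (b) there exists a constant C such that for every N ≥ 1 and all finite subsets E ⊆ S, F ⊆ T with |E| = |F| = N one has Σ_{(s,t)∈E×F} |ψ(s,t)|² ≤ C² N. -/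
open scoped ENNReal NNReal
open MeasureTheory ContinuousLinearMap

noncomputable section

lemma aux_fin {S T : Type*} (w : S → T → ℝ) (K : ℝ)
    (h : ∀ (E : Finset S) (F : Finset T), ∑ s ∈ E, ∑ t ∈ F, w s t ≤ K * (E.card + F.card)) :
    ∀ (n : ℕ) (E : Finset S) (F : Finset T), E.card + F.card = n → ∃ g : Set (S × T),
      (∀ s ∈ E, ∑ t ∈ F, g.indicator (fun p => w p.1 p.2) (s, t) ≤ 2 * K) ∧
      (∀ t ∈ F, ∑ s ∈ E, gᶜ.indicator (fun p => w p.1 p.2) (s, t) ≤ 2 * K) := by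
  classical
  intro n
  induction n with
  | zero =>
    intro E F hn
    have hE : E = ∅ := by rw [← Finset.card_eq_zero]; omega
    have hF : F = ∅ := by rw [← Finset.card_eq_zero]; omega
    subst hE hF
    exact ⟨∅, by simp, by simp⟩
  | succ n ih =>
    intro E F hn
    by_cases h1 : ∃ s ∈ E, ∑ t ∈ F, w s t ≤ 2 * K
    · obtain ⟨s, hs, hb⟩ := h1
      obtain ⟨g, hg1, hg2⟩ := ih (E.erase s) F (by
        have := Finset.card_erase_add_one hs
        omega)
      refine ⟨{p | p.1 = s ∨ p ∈ g}, ?_, ?_⟩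
      · intro s' hs'
        by_cases e : s' = s
        · subst e
          simpa [Set.indicator_apply] using hb
        · simpa [Set.indicator_apply, e] using hg1 s' (Finset.mem_erase.2 ⟨e, hs'⟩)
      · intro t ht
        rw [← Finset.add_sum_erase _ _ hs]
        refine le_trans (le_of_eq ?_) (hg2 t ht)
        rw [Set.indicator_of_notMem (by simp), zero_add]
        refine Finset.sum_congr rfl fun s' hs' => ?_
        have := Finset.ne_of_mem_erase hs'
        simp [Set.indicator_apply, this]
    by_cases h2 : ∃ t ∈ F, ∑ s ∈ E, w s t ≤ 2 * K
    · obtain ⟨t, ht, hb⟩ := h2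
      obtain ⟨g, hg1, hg2⟩ := ih E (F.erase t) (by
        have := Finset.card_erase_add_one ht
        omega)
      refine ⟨{p | p.2 ≠ t ∧ p ∈ g}, ?_, ?_⟩
      · intro s hs
        rw [← Finset.add_sum_erase _ _ ht]
        refine le_trans (le_of_eq ?_) (hg1 s hs)
        rw [Set.indicator_of_notMem (by simp), zero_add]
        refine Finset.sum_congr rfl fun t' ht' => ?_
        have := Finset.ne_of_mem_erase ht'
        simp [Set.indicator_apply, this]
      · intro t' ht'
        by_cases e : t' = t
        · subst e
          simpa [Set.indicator_apply] using hb
        · simpa [Set.indicator_apply, e] using hg2 t' (Finset.mem_erase.2 ⟨e, ht'⟩)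
    exfalso
    push Not at h1 h2
    have a1 : ∑ s ∈ E, 2 * K ≤ ∑ s ∈ E, ∑ t ∈ F, w s t :=
      Finset.sum_le_sum fun s hs => (h1 s hs).le
    have a2 : ∑ t ∈ F, 2 * K ≤ ∑ t ∈ F, ∑ s ∈ E, w s t :=
      Finset.sum_le_sum fun s hs => (h2 s hs).le
    have a3 := h E F
    have a4 : ∑ t ∈ F, ∑ s ∈ E, w s t = ∑ s ∈ E, ∑ t ∈ F, w s t := Finset.sum_comm
    rcases E.eq_empty_or_nonempty with hE | hE
    · have hF : F.Nonempty := by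
        rw [← Finset.card_pos]; subst hE; simp at hn; omega
      have := Finset.sum_lt_sum_of_nonempty hF h2
      simp only [Finset.sum_const, nsmul_eq_mul] at *
      nlinarith
    · have := Finset.sum_lt_sum_of_nonempty hE h1
      simp only [Finset.sum_const, nsmul_eq_mul] at *
      nlinarith

lemma aux_inf {S T : Type*} (w : S → T → ℝ) (K : ℝ) (hw : ∀ s t, 0 ≤ w s t)
    (h : ∀ (E : Finset S) (F : Finset T), ∑ s ∈ E, ∑ t ∈ F, w s t ≤ K * (E.card + F.card)) :
    ∃ g : Set (S × T),
      (∀ s, ∀ F : Finset T, ∑ t ∈ F, g.indicator (fun p => w p.1 p.2) (s, t) ≤ 2 * K) ∧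
      (∀ t, ∀ E : Finset S, ∑ s ∈ E, gᶜ.indicator (fun p => w p.1 p.2) (s, t) ≤ 2 * K) := by
  classical
  choose g hg1 hg2 using fun i : Finset S × Finset T => aux_fin w K h _ i.1 i.2 rfl
  let U : Ultrafilter (Finset S × Finset T) := Ultrafilter.of Filter.atTop
  have hU : ∀ i, ∀ᶠ j in (U : Filter (Finset S × Finset T)), i ≤ j := fun i =>
    Ultrafilter.of_le Filter.atTop (Filter.eventually_ge_atTop i)
  let G : Set (S × T) := {p | ∀ᶠ i in (U : Filter (Finset S × Finset T)), p ∈ g i}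
  have key : ∀ p, ∀ᶠ i in (U : Filter (Finset S × Finset T)), (p ∈ G ↔ p ∈ g i) := by
    intro p
    by_cases hp : p ∈ G
    · filter_upwards [show ∀ᶠ i in (U : Filter (Finset S × Finset T)), p ∈ g i from hp] with i hi
      simp [hp, hi]
    · have : ∀ᶠ i in (U : Filter (Finset S × Finset T)), p ∉ g i := Ultrafilter.eventually_not.2 hp
      filter_upwards [this] with i hi
      simp [hp, hi]
  refine ⟨G, ?_, ?_⟩
  · intro s F
    have k := (Filter.eventually_all_finset F).2 fun t _ => key (s, t)
    obtain ⟨i, hi, hk⟩ := ((hU ({s}, F)).and k).exists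
    have hs : s ∈ i.1 := hi.1 (by simp)
    refine le_trans ?_ (hg1 i s hs)
    refine le_trans (le_of_eq ?_) (Finset.sum_le_sum_of_subset_of_nonneg hi.2 fun t _ _ =>
      Set.indicator_nonneg (fun p _ => hw p.1 p.2) _)
    refine Finset.sum_congr rfl fun t ht => ?_
    simp [Set.indicator_apply, hk t ht]
  · intro t E
    have k := (Filter.eventually_all_finset E).2 fun s _ => key (s, t)
    obtain ⟨i, hi, hk⟩ := ((hU (E, {t})).and k).exists
    have ht : t ∈ i.2 := hi.2 (by simp)
    refine le_trans ?_ (hg2 i t ht)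
    refine le_trans (le_of_eq ?_) (Finset.sum_le_sum_of_subset_of_nonneg hi.1 fun t _ _ =>
      Set.indicator_nonneg (fun p _ => hw p.1 p.2) _)
    refine Finset.sum_congr rfl fun s hs => ?_
    simp [Set.indicator_apply, hk s hs]

lemma aux_bound {S T : Type*} (w : S → T → ℝ) (hw : ∀ s t, 0 ≤ w s t) (C : ℝ)
    (h : ∀ N : ℕ, 1 ≤ N → ∀ (E : Finset S) (F : Finset T), E.card = N → F.card = N →
      ∑ s ∈ E, ∑ t ∈ F, w s t ≤ C ^ 2 * N) :
    ∃ K : ℝ, 0 ≤ K ∧ ∀ (E : Finset S) (F : Finset T),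
      ∑ s ∈ E, ∑ t ∈ F, w s t ≤ K * (E.card + F.card) := by
  classical
  have h1 : ∀ s t, w s t ≤ C ^ 2 := fun s t => by
    simpa using h 1 le_rfl {s} {t} (by simp) (by simp)
  have h2 : ∀ (E : Finset S) (F : Finset T),
      ∑ s ∈ E, ∑ t ∈ F, w s t ≤ E.card * (F.card * C ^ 2) := fun E F => by
    calc _ ≤ ∑ s ∈ E, ∑ t ∈ F, C ^ 2 :=
          Finset.sum_le_sum fun s _ => Finset.sum_le_sum fun t _ => h1 s t
      _ = _ := by simp
  have hC := sq_nonneg C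
  rcases finite_or_infinite S with hS | hS
  · have := Fintype.ofFinite S
    refine ⟨C ^ 2 * Fintype.card S, by positivity, fun E F => (h2 E F).trans ?_⟩
    have hc : (E.card : ℝ) ≤ Fintype.card S := by exact_mod_cast Finset.card_le_univ E
    calc (E.card : ℝ) * (F.card * C ^ 2) ≤ Fintype.card S * ((E.card + F.card) * C ^ 2) := by
          gcongr; simp
      _ = _ := by ring
  rcases finite_or_infinite T with hT | hT
  · have := Fintype.ofFinite T
    refine ⟨C ^ 2 * Fintype.card T, by positivity, fun E F => (h2 E F).trans ?_⟩
    have hc : (F.card : ℝ) ≤ Fintype.card T := by exact_mod_cast Finset.card_le_univ F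
    calc (E.card : ℝ) * (F.card * C ^ 2) ≤ (E.card + F.card) * (Fintype.card T * C ^ 2) := by
          gcongr; simp
      _ = _ := by ring
  refine ⟨C ^ 2, hC, fun E F => ?_⟩
  rcases Nat.eq_zero_or_pos (E.card + F.card) with h0 | h0
  · have hE : E = ∅ := by rw [← Finset.card_eq_zero]; omega
    subst hE
    simp; positivity
  obtain ⟨E', hE, hE'⟩ := Infinite.exists_superset_card_eq E (E.card + F.card) (by omega)
  obtain ⟨F', hF, hF'⟩ := Infinite.exists_superset_card_eq F (E.card + F.card) (by omega)
  have := h _ h0 E' F' hE' hF'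
  push_cast at this
  refine le_trans ?_ this
  calc _ ≤ ∑ s ∈ E, ∑ t ∈ F', w s t := Finset.sum_le_sum fun s _ =>
        Finset.sum_le_sum_of_subset_of_nonneg hF fun t _ _ => hw s t
    _ ≤ _ := Finset.sum_le_sum_of_subset_of_nonneg hE fun s _ _ =>
        Finset.sum_nonneg fun t _ => hw s t

lemma aux_tsum {T : Type*} (f : T → ℝ) (hf : ∀ t, 0 ≤ f t) (c : ℝ) (hc : 0 ≤ c) :
    (∑' t, ENNReal.ofReal (f t)) ≤ ENNReal.ofReal c ↔ ∀ F : Finset T, ∑ t ∈ F, f t ≤ c := by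
  rw [ENNReal.tsum_eq_iSup_sum, iSup_le_iff]
  refine forall_congr' fun F => ?_
  rw [← ENNReal.ofReal_sum_of_nonneg fun t _ => hf t, ENNReal.ofReal_le_ofReal_iff hc]

lemma aux_ind {S T : Type*} (ψ : S × T → ℂ) (g : Set (S × T)) (p : S × T) :
    g.indicator (fun p => (‖ψ p‖₊ : ℝ≥0∞) ^ 2) p
      = ENNReal.ofReal (g.indicator (fun p => ‖ψ (p.1, p.2)‖ ^ 2) p) := by
  by_cases hp : p ∈ g
  · simp [hp, ENNReal.ofReal_pow, ← enorm_eq_nnnorm]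
  · simp [hp]

/-- Varopoulos: the partition condition (a) is equivalent to the
combinatorial condition (b) on rectangles `E × F` with `|E| = |F| = N`. -/
theorem stmt_2 {S T : Type*} (ψ : S × T → ℂ) :
    (∃ (C : ℝ) (Γ₁ Γ₂ : Set (S × T)), Γ₁ ∪ Γ₂ = Set.univ ∧ Disjoint Γ₁ Γ₂ ∧
      (∀ s : S, (∑' t : T, Γ₁.indicator (fun p => (‖ψ p‖₊ : ℝ≥0∞) ^ 2) (s, t))
          ≤ ENNReal.ofReal (C ^ 2)) ∧
      (∀ t : T, (∑' s : S, Γ₂.indicator (fun p => (‖ψ p‖₊ : ℝ≥0∞) ^ 2) (s, t))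
          ≤ ENNReal.ofReal (C ^ 2))) ↔
    (∃ C : ℝ, ∀ N : ℕ, 1 ≤ N → ∀ (E : Finset S) (F : Finset T),
      E.card = N → F.card = N →
      ∑ p ∈ E ×ˢ F, ‖ψ p‖ ^ 2 ≤ C ^ 2 * N) := by
  have hn : ∀ (g : Set (S × T)) (p : S × T),
      0 ≤ g.indicator (fun p => ‖ψ (p.1, p.2)‖ ^ 2) p := fun g p =>
    Set.indicator_nonneg (fun p _ => by positivity) _
  constructor
  · rintro ⟨C, Γ₁, Γ₂, hu, hd, h1, h2⟩
    simp only [aux_ind] at h1 h2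
    have h1' := fun s => (aux_tsum _ (fun t => hn Γ₁ (s, t)) _ (sq_nonneg C)).1 (h1 s)
    have h2' := fun t => (aux_tsum _ (fun s => hn Γ₂ (s, t)) _ (sq_nonneg C)).1 (h2 t)
    refine ⟨√2 * C, fun N _ E F hE hF => ?_⟩
    have hsplit : ∀ p, ‖ψ p‖ ^ 2 = Γ₁.indicator (fun p => ‖ψ (p.1, p.2)‖ ^ 2) p
        + Γ₂.indicator (fun p => ‖ψ (p.1, p.2)‖ ^ 2) p := fun p => by
      have e := congrFun (Set.indicator_union_of_disjoint hd
        (fun p : S × T => ‖ψ (p.1, p.2)‖ ^ 2)) p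
      rw [hu, Set.indicator_univ] at e
      exact e
    rw [Finset.sum_congr rfl fun p _ => hsplit p, Finset.sum_add_distrib,
      Finset.sum_product, Finset.sum_product_right, mul_pow, Real.sq_sqrt (by norm_num)]
    have b1 := Finset.sum_le_sum fun s (_ : s ∈ E) => h1' s F
    have b2 := Finset.sum_le_sum fun t (_ : t ∈ F) => h2' t E
    simp only [Finset.sum_const, nsmul_eq_mul, hE, hF] at b1 b2
    linarith
  · rintro ⟨C, h⟩
    have hw : ∀ s t, 0 ≤ ‖ψ (s, t)‖ ^ 2 := fun s t => by positivity
    obtain ⟨K, hK, hb⟩ := aux_bound (fun s t => ‖ψ (s, t)‖ ^ 2) hw C (fun N hN E F hE hF => by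
      rw [← Finset.sum_product']
      exact h N hN E F hE hF)
    obtain ⟨g, hg1, hg2⟩ := aux_inf _ K hw hb
    refine ⟨√(2 * K), g, gᶜ, Set.union_compl_self g, disjoint_compl_right, ?_, ?_⟩
    · intro s
      simp only [aux_ind]
      rw [Real.sq_sqrt (by positivity)]
      exact (aux_tsum _ (fun t => hn g (s, t)) _ (by positivity)).2 (hg1 s)
    · intro t
      simp only [aux_ind]
      rw [Real.sq_sqrt (by positivity)]
      exact (aux_tsum _ (fun s => hn gᶜ (s, t)) _ (by positivity)).2 (hg2 t)
end
end

section
/- Let S and T be sets, let ψ : S × T → ℂ and suppose ψ = ψ₁ + ψ₂ where sup_{s∈S} Σ_{t∈T} |ψ₁(s,t)|² ≤ C₁² and sup_{t∈T} Σ_{s∈S} |ψ₂(s,t)|² ≤ C₂². Then for every function ε : S × T → ℂ with |ε(s,t)| ≤ 1 for all (s,t), the pointwise product (s,t) ↦ ε(s,t)·ψ(s,t) is a Schur multiplier of norm at most C₁ + C₂. -/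
open scoped ENNReal NNReal
open MeasureTheory ContinuousLinearMap

noncomputable section

lemma schur_memlp {S : Type*} {f : S → ℂ} {C : ℝ}
    (h : ∀ F : Finset S, ∑ s ∈ F, ‖f s‖ ^ 2 ≤ C) : Memℓp f 2 := by
  apply memℓp_gen' (C := C)
  intro F
  simpa using h F

lemma schur_norm_sq {S : Type*} (f : lp (fun _ : S => ℂ) 2) :
    HasSum (fun s => ‖f s‖ ^ 2) (‖f‖ ^ 2) := by
  simpa using lp.hasSum_norm (p := 2) (by simp) f

lemma schur_sum_le {S : Type*} (f : lp (fun _ : S => ℂ) 2) (F : Finset S) :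
    ∑ s ∈ F, ‖f s‖ ^ 2 ≤ ‖f‖ ^ 2 :=
  sum_le_hasSum F (fun _ _ => by positivity) (schur_norm_sq f)

lemma schur_col {S T : Type*} [DecidableEq S] [DecidableEq T] (φ : S → T → ℂ) (C : ℝ)
    (hC : 0 ≤ C) (h : ∀ t, ∀ F : Finset S, ∑ s ∈ F, ‖φ s t‖ ^ 2 ≤ C ^ 2)
    (A : lp (fun _ : S => ℂ) 2 →L[ℂ] lp (fun _ : T => ℂ) 2) :
    ∃ B : lp (fun _ : S => ℂ) 2 →L[ℂ] lp (fun _ : T => ℂ) 2,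
      (∀ (s : S) (t : T),
        (inner (𝕜 := ℂ) (lp.single 2 t 1) (B (lp.single 2 s 1)))
          = φ s t * inner (𝕜 := ℂ) (lp.single 2 t 1) (A (lp.single 2 s 1))) ∧
      ‖B‖ ≤ C * ‖A‖ := by
  set a : S → T → ℂ := fun s t => A (lp.single 2 s 1) t with ha
  have hcol : ∀ s, ∀ F : Finset T, ∑ t ∈ F, ‖a s t‖ ^ 2 ≤ ‖A‖ ^ 2 := by
    intro s F
    refine (schur_sum_le (A (lp.single 2 s 1)) F).trans ?_
    have := A.le_opNorm (lp.single 2 s 1)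
    rw [lp.norm_single (by simp)] at this
    simp only [norm_one, mul_one] at this
    gcongr
  have ha1 : ∀ s t, ‖a s t‖ ^ 2 ≤ ‖A‖ ^ 2 := fun s t => by simpa using hcol s {t}
  have hu : ∀ t, Memℓp (fun s => star (φ s t)) 2 := fun t =>
    schur_memlp (C := C ^ 2) (fun F => by simpa using h t F)
  have hf : ∀ t, Memℓp (fun s => star (φ s t * a s t)) 2 := fun t => by
    refine schur_memlp (C := C ^ 2 * ‖A‖ ^ 2) (fun F => ?_)
    refine le_trans ?_ (mul_le_mul_of_nonneg_right (h t F) (by positivity))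
    rw [Finset.sum_mul]
    refine Finset.sum_le_sum fun s _ => ?_
    rw [norm_star, norm_mul, mul_pow]
    exact mul_le_mul_of_nonneg_left (ha1 s t) (by positivity)
  have hv : ∀ (x : lp (fun _ : S => ℂ) 2) t, Memℓp (fun s => a s t * x s) 2 := fun x t => by
    refine schur_memlp (C := ‖A‖ ^ 2 * ‖x‖ ^ 2) (fun F => ?_)
    refine le_trans ?_ (mul_le_mul_of_nonneg_left (schur_sum_le x F) (by positivity))
    rw [Finset.mul_sum]
    refine Finset.sum_le_sum fun s _ => ?_
    rw [norm_mul, mul_pow]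
    exact mul_le_mul_of_nonneg_right (ha1 s t) (by positivity)
  let u : T → lp (fun _ : S => ℂ) 2 := fun t => ⟨_, hu t⟩
  let f : T → lp (fun _ : S => ℂ) 2 := fun t => ⟨_, hf t⟩
  let v : lp (fun _ : S => ℂ) 2 → T → lp (fun _ : S => ℂ) 2 := fun x t => ⟨_, hv x t⟩
  have hfu : ∀ x t, inner ℂ (f t) x = inner ℂ (u t) (v x t) := by
    intro x t
    rw [lp.inner_eq_tsum, lp.inner_eq_tsum]
    refine tsum_congr fun s => ?_
    simp [f, u, v]
    ring
  have hun : ∀ t, ‖u t‖ ^ 2 ≤ C ^ 2 := fun t =>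
    hasSum_le_of_sum_le (schur_norm_sq (u t)) (fun F => by simpa [u] using h t F)
  have hvn : ∀ x, ∀ F : Finset T, ∑ t ∈ F, ‖v x t‖ ^ 2 ≤ ‖A‖ ^ 2 * ‖x‖ ^ 2 := by
    intro x F
    refine hasSum_le ?_ (hasSum_sum fun t (_ : t ∈ F) => schur_norm_sq (v x t))
      ((schur_norm_sq x).mul_left (‖A‖ ^ 2))
    intro s
    simp only [v, norm_mul, mul_pow]
    rw [← Finset.sum_mul]
    exact mul_le_mul_of_nonneg_right (hcol s F) (by positivity)
  have key : ∀ x, ∀ F : Finset T, ∑ t ∈ F, ‖inner ℂ (f t) x‖ ^ 2 ≤ (C * ‖A‖ * ‖x‖) ^ 2 := by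
    intro x F
    calc _ ≤ ∑ t ∈ F, C ^ 2 * ‖v x t‖ ^ 2 := by
          refine Finset.sum_le_sum fun t _ => ?_
          rw [hfu]
          calc _ ≤ (‖u t‖ * ‖v x t‖) ^ 2 := by
                gcongr
                exact norm_inner_le_norm _ _
            _ = ‖u t‖ ^ 2 * ‖v x t‖ ^ 2 := by ring
            _ ≤ _ := mul_le_mul_of_nonneg_right (hun t) (by positivity)
      _ = C ^ 2 * ∑ t ∈ F, ‖v x t‖ ^ 2 := by rw [Finset.mul_sum]
      _ ≤ C ^ 2 * (‖A‖ ^ 2 * ‖x‖ ^ 2) := mul_le_mul_of_nonneg_left (hvn x F) (by positivity)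
      _ = _ := by ring
  let L : lp (fun _ : S => ℂ) 2 →ₗ[ℂ] lp (fun _ : T => ℂ) 2 :=
    { toFun := fun x => ⟨fun t => inner ℂ (f t) x, schur_memlp (key x)⟩
      map_add' := fun x y => by
        ext t
        exact inner_add_right _ _ _
      map_smul' := fun c x => by
        ext t
        exact inner_smul_right _ _ _ }
  have hL : ∀ x, ‖L x‖ ≤ C * ‖A‖ * ‖x‖ := fun x => by
    have : ‖L x‖ ^ 2 ≤ (C * ‖A‖ * ‖x‖) ^ 2 :=
      hasSum_le_of_sum_le (schur_norm_sq (L x)) (key x)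
    exact le_of_sq_le_sq this (by positivity)
  refine ⟨L.mkContinuous _ hL, ?_, L.mkContinuous_norm_le (by positivity) hL⟩
  intro s t
  rw [lp.inner_single_left, lp.inner_single_left]
  have : L (lp.single 2 s 1) t = inner ℂ (f t) (lp.single 2 s 1) := rfl
  simp [this, lp.inner_single_right, f, a]

lemma schur_fin {S : Type*} {f : S → ℂ} {g : S → ℂ} (hg : ∀ s, ‖g s‖ ≤ ‖f s‖) {C : ℝ}
    (h : (∑' s : S, (‖f s‖₊ : ℝ≥0∞) ^ 2) ≤ ENNReal.ofReal (C ^ 2)) (F : Finset S) :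
    ∑ s ∈ F, ‖g s‖ ^ 2 ≤ C ^ 2 := by
  have h1 : ∑ s ∈ F, ‖f s‖ ^ 2 ≤ C ^ 2 := by
    have := (ENNReal.sum_le_tsum F).trans h
    rw [← ENNReal.ofReal_le_ofReal_iff (by positivity),
      ENNReal.ofReal_sum_of_nonneg (fun _ _ => by positivity)]
    refine le_trans (le_of_eq (Finset.sum_congr rfl fun s _ => ?_)) this
    rw [ENNReal.ofReal_pow (by positivity), ofReal_norm, enorm_eq_nnnorm]
  refine le_trans (Finset.sum_le_sum fun s _ => ?_) h1
  have := hg s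
  gcongr

/-- if `ψ = ψ₁ + ψ₂` with row-square sums of `ψ₁` bounded by `C₁²` and
column-square sums of `ψ₂` bounded by `C₂²`, then for every `ε` with `|ε(s,t)| ≤ 1` the
product `ε·ψ` is a Schur multiplier of norm at most `C₁ + C₂`. -/
theorem stmt_3 {S T : Type*} (ψ ψ₁ ψ₂ : S × T → ℂ) (C₁ C₂ : ℝ)
    (hC₁ : 0 ≤ C₁) (hC₂ : 0 ≤ C₂)
    (hsum : ∀ p : S × T, ψ p = ψ₁ p + ψ₂ p)
    (h1 : ∀ s : S, (∑' t : T, (‖ψ₁ (s, t)‖₊ : ℝ≥0∞) ^ 2) ≤ ENNReal.ofReal (C₁ ^ 2))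
    (h2 : ∀ t : T, (∑' s : S, (‖ψ₂ (s, t)‖₊ : ℝ≥0∞) ^ 2) ≤ ENNReal.ofReal (C₂ ^ 2)) :
    ∀ ε : S × T → ℂ, (∀ p, ‖ε p‖ ≤ 1) →
      IsSchurMultiplier (fun p => ε p * ψ p) (C₁ + C₂) := by
  intro ε hε
  unfold IsSchurMultiplier
  letI := Classical.decEq S
  letI := Classical.decEq T
  intro A
  obtain ⟨B₂, hB₂, hn₂⟩ := schur_col (fun s t => ε (s, t) * ψ₂ (s, t)) C₂ hC₂
    (fun t F => schur_fin (fun s => by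
      rw [norm_mul]; exact mul_le_of_le_one_left (norm_nonneg _) (hε _)) (h2 t) F) A
  obtain ⟨B₁, hB₁, hn₁⟩ := schur_col (fun t s => star (ε (s, t) * ψ₁ (s, t))) C₁ hC₁
    (fun s F => schur_fin (fun t => by
      rw [norm_star, norm_mul]
      exact mul_le_of_le_one_left (norm_nonneg _) (hε _)) (h1 s) F) (adjoint A)
  refine ⟨adjoint B₁ + B₂, fun s t => ?_, ?_⟩
  · have h := congrArg star (hB₁ t s)
    rw [star_mul', star_star] at h
    simp only [RCLike.star_def, inner_conj_symm, adjoint_inner_left] at h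
    rw [add_apply, inner_add_right, hB₂, adjoint_inner_right, h]
    beta_reduce
    rw [hsum]
    ring
  · refine (norm_add_le _ _).trans ?_
    rw [LinearIsometryEquiv.norm_map] at hn₁ ⊢
    linarith
end
end

section
/- Let G be a group, φ : G → ℂ, and C ≥ 0. Suppose there is a partition G × G = Γ₁ ∪ Γ₂ (disjoint) with sup_{s∈G} Σ_{t : (s,t)∈Γ₁} |φ(st)|² ≤ C² and sup_{t∈G} Σ_{s : (s,t)∈Γ₂} |φ(st)|² ≤ C². Then for every complex Hilbert space H and every finitely supported function a : G → B(H), the operator T_{φ·a} = Σ_{x∈G} φ(x) λ(x) ⊗ a(x) on ℓ²(G; H) satisfies ‖Σ_{x∈G} φ(x) λ(x) ⊗ a(x)‖ ≤ 2C · max{ ‖Σ_{x∈G} a(x)* a(x)‖^{1/2}, ‖Σ_{x∈G} a(x) a(x)*‖^{1/2} }. -/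
open scoped ENNReal NNReal
open MeasureTheory ContinuousLinearMap

noncomputable section

lemma cs_aux {ι : Type*} (u v : ι → ℝ≥0∞) (A B : ℝ) (hA : 0 ≤ A) (hB : 0 ≤ B)
    (hu : ∑' i, u i ^ 2 ≤ ENNReal.ofReal (A ^ 2)) (hv : ∑' i, v i ^ 2 ≤ ENNReal.ofReal (B ^ 2)) :
    ∑' i, u i * v i ≤ ENNReal.ofReal (A * B) := by
  rw [ENNReal.tsum_eq_iSup_sum]
  refine iSup_le fun s => ?_
  have hc := ENNReal.inner_le_Lp_mul_Lq s u v (p := 2) (q := 2) (by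
    constructor <;> norm_num)
  refine hc.trans ?_
  rw [ENNReal.ofReal_mul hA]
  have key : ∀ (w : ι → ℝ≥0∞) (D : ℝ), 0 ≤ D → ∑' i, w i ^ 2 ≤ ENNReal.ofReal (D ^ 2) →
      (∑ i ∈ s, w i ^ (2:ℝ)) ^ (1 / (2:ℝ)) ≤ ENNReal.ofReal D := by
    intro w D hD hw
    have h3 : ∑ i ∈ s, w i ^ (2:ℝ) ≤ ENNReal.ofReal D ^ (2:ℝ) := by
      rw [ENNReal.rpow_two, ← ENNReal.ofReal_pow hD]
      simp only [ENNReal.rpow_two]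
      exact (ENNReal.sum_le_tsum s).trans hw
    calc _ ≤ (ENNReal.ofReal D ^ (2:ℝ)) ^ (1/(2:ℝ)) := ENNReal.rpow_le_rpow h3 (by norm_num)
      _ = _ := by rw [← ENNReal.rpow_mul]; norm_num
  exact mul_le_mul' (key u A hA hu) (key v B hB hv)

lemma lp_sq {G H : Type*} [NormedAddCommGroup H] (f : lp (fun _ : G => H) 2) :
    ∑' s, ‖f s‖ₑ ^ 2 = ENNReal.ofReal (‖f‖ ^ 2) := by
  have h := lp.hasSum_norm (p := 2) (by norm_num) f
  have h' : HasSum (fun i => ‖f i‖ ^ 2) (‖f‖ ^ 2) := by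
    simpa using h
  rw [← h'.tsum_eq, ENNReal.ofReal_tsum_of_nonneg (fun _ => by positivity) h'.summable]
  congr 1; ext s
  rw [ENNReal.ofReal_pow (norm_nonneg _), ofReal_norm]

lemma col_bound {G H : Type*} [NormedAddCommGroup H] [InnerProductSpace ℂ H] [CompleteSpace H]
    (S : Finset G) (b : G → H →L[ℂ] H) (hb : ∀ x ∉ S, b x = 0) (v : H) :
    ∑' x, ‖b x v‖ₑ ^ 2 ≤ ENNReal.ofReal
      (Real.sqrt ‖∑ x ∈ S, (ContinuousLinearMap.adjoint (b x)).comp (b x)‖ ^ 2) * ‖v‖ₑ ^ 2 := by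
  rw [Real.sq_sqrt (norm_nonneg _), tsum_eq_sum (s := S) (fun x hx => by simp [hb x hx]),
    ← ofReal_norm v, ← ENNReal.ofReal_pow (norm_nonneg _), ← ENNReal.ofReal_mul (norm_nonneg _)]
  have : ∑ x ∈ S, ‖b x v‖ₑ ^ 2 = ENNReal.ofReal (∑ x ∈ S, ‖b x v‖ ^ 2) := by
    rw [ENNReal.ofReal_sum_of_nonneg (fun _ _ => by positivity)]
    refine Finset.sum_congr rfl fun x _ => ?_
    rw [ENNReal.ofReal_pow (norm_nonneg _), ofReal_norm]
  rw [this]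
  apply ENNReal.ofReal_le_ofReal
  set R := ∑ x ∈ S, (ContinuousLinearMap.adjoint (b x)).comp (b x) with hR
  have e : ∑ x ∈ S, ‖b x v‖ ^ 2 = RCLike.re (inner ℂ (R v) v) := by
    rw [hR, _root_.sum_apply, sum_inner, map_sum]
    refine Finset.sum_congr rfl fun x _ => ?_
    rw [ContinuousLinearMap.comp_apply, ContinuousLinearMap.adjoint_inner_left,
      inner_self_eq_norm_sq]
  rw [e]
  calc _ ≤ ‖R v‖ * ‖v‖ := re_inner_le_norm _ _
    _ ≤ (‖R‖ * ‖v‖) * ‖v‖ := by gcongr; exact R.le_opNorm v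
    _ = _ := by ring

/-- if `G × G = Γ₁ ∪ Γ₂` (disjoint) with
`sup_s Σ_{t : (s,t)∈Γ₁} |φ(st)|² ≤ C²` and `sup_t Σ_{s : (s,t)∈Γ₂} |φ(st)|² ≤ C²`, then for
every Hilbert space `H` and finitely supported `a : G → B(H)`, the operator
`Σ_x φ(x) λ(x) ⊗ a(x)` on `ℓ²(G;H)` has norm at most
`2C · max{‖Σ a(x)*a(x)‖^{1/2}, ‖Σ a(x)a(x)*‖^{1/2}}`. -/
theorem stmt_4 {G : Type*} [Group G] (φ : G → ℂ) (C : ℝ) (hC : 0 ≤ C)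
    (Γ₁ Γ₂ : Set (G × G)) (hU : Γ₁ ∪ Γ₂ = Set.univ) (hD : Disjoint Γ₁ Γ₂)
    (h1 : ∀ s : G, (∑' t : G, Γ₁.indicator (fun p => (‖φ (p.1 * p.2)‖₊ : ℝ≥0∞) ^ 2) (s, t))
        ≤ ENNReal.ofReal (C ^ 2))
    (h2 : ∀ t : G, (∑' s : G, Γ₂.indicator (fun p => (‖φ (p.1 * p.2)‖₊ : ℝ≥0∞) ^ 2) (s, t))
        ≤ ENNReal.ofReal (C ^ 2))
    (H : Type*) [NormedAddCommGroup H] [InnerProductSpace ℂ H] [CompleteSpace H]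
    (a : G →₀ (H →L[ℂ] H))
    (T : lp (fun _ : G => H) 2 →L[ℂ] lp (fun _ : G => H) 2)
    (hT : ∀ (f : lp (fun _ : G => H) 2) (s : G),
      T f s = ∑ x ∈ a.support, φ x • ((a x) (f (x⁻¹ * s)))) :
    ‖T‖ ≤ 2 * C * max
      (Real.sqrt ‖∑ x ∈ a.support, (ContinuousLinearMap.adjoint (a x)).comp (a x)‖)
      (Real.sqrt ‖∑ x ∈ a.support, (a x).comp (ContinuousLinearMap.adjoint (a x))‖) := by
  classical
  have hcol := col_bound a.support (fun x => a x) (fun x hx => by simpa using hx)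
  have hrow := col_bound a.support (fun x => ContinuousLinearMap.adjoint (a x))
    (fun x hx => by
      have : a x = 0 := by simpa using hx
      simp [this])
  simp only [ContinuousLinearMap.adjoint_adjoint] at hrow
  set M₁ := Real.sqrt ‖∑ x ∈ a.support, (ContinuousLinearMap.adjoint (a x)).comp (a x)‖
  set M₂ := Real.sqrt ‖∑ x ∈ a.support, (a x).comp (ContinuousLinearMap.adjoint (a x))‖
  have hM₁ : 0 ≤ M₁ := Real.sqrt_nonneg _
  have hM₂ : 0 ≤ M₂ := Real.sqrt_nonneg _
  have main : ∀ f g : lp (fun _ : G => H) 2,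
      ‖inner ℂ (T f) g‖ ≤ (C * ‖g‖) * (M₁ * ‖f‖) + (C * ‖f‖) * (M₂ * ‖g‖) := by
    intro f g
    let i₁ : G → G → ℝ≥0∞ := fun s x => if (s, s⁻¹ * x) ∈ Γ₁ then ‖φ x‖ₑ else 0
    let i₂ : G → G → ℝ≥0∞ := fun s x => if (s, s⁻¹ * x) ∈ Γ₂ then ‖φ x‖ₑ else 0
    have B1 : ∑' p : G × G, (i₁ p.1 p.2 * ‖g p.1‖ₑ) ^ 2 ≤ ENNReal.ofReal ((C * ‖g‖) ^ 2) := by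
      rw [ENNReal.tsum_prod (f := fun s x => (i₁ s x * ‖g s‖ₑ) ^ 2), mul_pow,
        ENNReal.ofReal_mul (by positivity), ← lp_sq, ← ENNReal.tsum_mul_left]
      refine ENNReal.tsum_le_tsum fun s => ?_
      simp only [mul_pow]
      rw [ENNReal.tsum_mul_right]
      gcongr
      refine le_trans (le_of_eq ?_) (h1 s)
      rw [← (Equiv.mulLeft s).tsum_eq]
      refine tsum_congr fun t => ?_
      by_cases h : (s, t) ∈ Γ₁ <;> simp [i₁, h, Set.indicator, enorm]
    have B2 : ∑' p : G × G, ‖a p.2 (f (p.2⁻¹ * p.1))‖ₑ ^ 2 ≤ ENNReal.ofReal ((M₁ * ‖f‖) ^ 2) := by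
      rw [ENNReal.tsum_prod (f := fun s x => ‖a x (f (x⁻¹ * s))‖ₑ ^ 2), ENNReal.tsum_comm, mul_pow,
        ENNReal.ofReal_mul (by positivity), ← lp_sq, ← ENNReal.tsum_mul_left]
      have : ∀ x, ∑' s, ‖a x (f (x⁻¹ * s))‖ₑ ^ 2 = ∑' u, ‖a x (f u)‖ₑ ^ 2 := fun x =>
        (Equiv.mulLeft x⁻¹).tsum_eq (fun u => ‖a x (f u)‖ₑ ^ 2)
      simp only [this]
      rw [ENNReal.tsum_comm]
      exact ENNReal.tsum_le_tsum fun u => hcol (f u)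
    have B3 : ∑' p : G × G, (i₂ p.1 p.2 * ‖f (p.2⁻¹ * p.1)‖ₑ) ^ 2
        ≤ ENNReal.ofReal ((C * ‖f‖) ^ 2) := by
      rw [ENNReal.tsum_prod (f := fun s x => (i₂ s x * ‖f (x⁻¹ * s)‖ₑ) ^ 2), ENNReal.tsum_comm,
        mul_pow, ENNReal.ofReal_mul (by positivity), ← lp_sq, ← ENNReal.tsum_mul_left]
      have : ∀ x, ∑' s, (i₂ s x * ‖f (x⁻¹ * s)‖ₑ) ^ 2 = ∑' u, (i₂ (x * u) x * ‖f u‖ₑ) ^ 2 := by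
        intro x
        rw [← (Equiv.mulLeft x).tsum_eq]
        simp
      simp only [this]
      rw [ENNReal.tsum_comm]
      refine ENNReal.tsum_le_tsum fun u => ?_
      simp only [mul_pow]
      rw [ENNReal.tsum_mul_right]
      gcongr
      refine le_trans (le_of_eq ?_) (h2 u⁻¹)
      rw [← (Equiv.mulRight u).tsum_eq (fun s => Γ₂.indicator _ (s, u⁻¹))]
      refine tsum_congr fun x => ?_
      by_cases h : (x * u, u⁻¹) ∈ Γ₂ <;> simp [i₂, h, Set.indicator, enorm]
    have B4 : ∑' p : G × G, ‖ContinuousLinearMap.adjoint (a p.2) (g p.1)‖ₑ ^ 2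
        ≤ ENNReal.ofReal ((M₂ * ‖g‖) ^ 2) := by
      rw [ENNReal.tsum_prod (f := fun s x => ‖ContinuousLinearMap.adjoint (a x) (g s)‖ₑ ^ 2),
        mul_pow, ENNReal.ofReal_mul (by positivity), ← lp_sq, ← ENNReal.tsum_mul_left]
      exact ENNReal.tsum_le_tsum fun s => hrow (g s)
    have D1 := cs_aux _ _ _ _ (by positivity) (by positivity) B1 B2
    have D2 := cs_aux _ _ _ _ (by positivity) (by positivity) B3 B4
    have einner : ∀ v w : H, ‖inner ℂ v w‖ₑ ≤ ‖v‖ₑ * ‖w‖ₑ := by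
      intro v w
      rw [← ofReal_norm, ← ofReal_norm, ← ofReal_norm, ← ENNReal.ofReal_mul (norm_nonneg _)]
      exact ENNReal.ofReal_le_ofReal (norm_inner_le_norm _ _)
    have pt : ∀ s x, ‖inner ℂ (φ x • a x (f (x⁻¹ * s))) (g s)‖ₑ ≤
        (i₁ s x * ‖g s‖ₑ) * ‖a x (f (x⁻¹ * s))‖ₑ +
        (i₂ s x * ‖f (x⁻¹ * s)‖ₑ) * ‖ContinuousLinearMap.adjoint (a x) (g s)‖ₑ := by
      intro s x
      have e0 : ‖inner ℂ (φ x • a x (f (x⁻¹ * s))) (g s)‖ₑ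
          = ‖φ x‖ₑ * ‖inner ℂ (a x (f (x⁻¹ * s))) (g s)‖ₑ := by
        rw [inner_smul_left, enorm_mul]
        congr 1
        simp [enorm]
      rw [e0]
      have hmem : (s, s⁻¹ * x) ∈ Γ₁ ∪ Γ₂ := hU ▸ Set.mem_univ _
      rcases hmem with h | h
      · refine le_trans ?_ le_self_add
        simp only [i₁, if_pos h]
        rw [mul_assoc, mul_comm ‖g s‖ₑ]
        gcongr
        exact einner _ _
      · refine le_trans ?_ le_add_self
        simp only [i₂, if_pos h]
        rw [mul_assoc, ← ContinuousLinearMap.adjoint_inner_right]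
        gcongr
        exact einner _ _
    have tot : ‖inner ℂ (T f) g‖ₑ ≤
        ENNReal.ofReal ((C * ‖g‖) * (M₁ * ‖f‖)) + ENNReal.ofReal ((C * ‖f‖) * (M₂ * ‖g‖)) := by
      refine le_trans ?_ (add_le_add D1 D2)
      rw [← ENNReal.tsum_add, lp.inner_eq_tsum]
      refine enorm_tsum_le_tsum_enorm.trans ?_
      rw [ENNReal.tsum_prod (f := fun s x => (i₁ s x * ‖g s‖ₑ) * ‖a x (f (x⁻¹ * s))‖ₑ +
        (i₂ s x * ‖f (x⁻¹ * s)‖ₑ) * ‖ContinuousLinearMap.adjoint (a x) (g s)‖ₑ)]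
      refine ENNReal.tsum_le_tsum fun s => ?_
      rw [hT, sum_inner]
      refine (enorm_sum_le _ _).trans ?_
      refine (Finset.sum_le_sum fun x _ => pt s x).trans ?_
      exact ENNReal.sum_le_tsum _
    rw [← ENNReal.ofReal_add (by positivity) (by positivity), ← ofReal_norm] at tot
    exact (ENNReal.ofReal_le_ofReal_iff (by positivity)).1 tot
  have hm₁ : M₁ ≤ max M₁ M₂ := le_max_left _ _
  have hm₂ : M₂ ≤ max M₁ M₂ := le_max_right _ _
  refine ContinuousLinearMap.opNorm_le_of_re_inner_le (by positivity) fun f g hf hg => ?_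
  refine (RCLike.re_le_norm _).trans ((main f g).trans ?_)
  rw [hf, hg]
  nlinarith [mul_le_mul_of_nonneg_left hm₁ hC, mul_le_mul_of_nonneg_left hm₂ hC]
end
end

section
/- Let G be a group, H a complex Hilbert space, and a : G → B(H) a finitely supported function. Then max{ ‖Σ_{x∈G} a(x)* a(x)‖^{1/2}, ‖Σ_{x∈G} a(x) a(x)*‖^{1/2} } ≤ ‖Σ_{x∈G} λ(x) ⊗ a(x)‖, where Σ_{x∈G} λ(x) ⊗ a(x) denotes the operator T on ℓ²(G; H) given by (T f)(s) = Σ_{x∈G} a(x) f(x⁻¹ s). -/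
open scoped ENNReal NNReal
open MeasureTheory ContinuousLinearMap

noncomputable section

theorem aux_bound_s5 {G : Type*} {H : Type*} [NormedAddCommGroup H] [InnerProductSpace ℂ H]
    [CompleteSpace H] (S : Finset G) (b : G → (H →L[ℂ] H)) (C : ℝ) (hC : 0 ≤ C)
    (h : ∀ v : H, ∑ x ∈ S, ‖b x v‖ ^ 2 ≤ (C * ‖v‖) ^ 2) :
    Real.sqrt ‖∑ x ∈ S, (ContinuousLinearMap.adjoint (b x)).comp (b x)‖ ≤ C := by
  rw [Real.sqrt_le_left hC]
  refine ContinuousLinearMap.opNorm_le_bound _ (by positivity) fun v => ?_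
  set w := (∑ x ∈ S, (ContinuousLinearMap.adjoint (b x)).comp (b x)) v with hw
  have hs : ∀ u : H, Real.sqrt (∑ x ∈ S, ‖b x u‖ ^ 2) ≤ C * ‖u‖ := fun u => by
    rw [Real.sqrt_le_left (by positivity)]; exact h u
  have h1 : ‖w‖ * ‖w‖ ≤ (C ^ 2 * ‖v‖) * ‖w‖ := by
    calc ‖w‖ * ‖w‖ = ‖inner ℂ w w‖ := by
          rw [inner_self_eq_norm_sq_to_K]; simp [sq]
      _ = ‖∑ x ∈ S, inner ℂ (b x v) (b x w)‖ := by
          congr 1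
          have hw2 : w = ∑ x ∈ S, ContinuousLinearMap.adjoint (b x) (b x v) := by
            rw [hw]; simp
          have h3 : ∀ u : H, inner ℂ w u
              = ∑ x ∈ S, inner ℂ (ContinuousLinearMap.adjoint (b x) (b x v)) u := fun u => by
            rw [hw2, sum_inner]
          rw [h3]
          refine Finset.sum_congr rfl fun x _ => ?_
          rw [ContinuousLinearMap.adjoint_inner_left]
      _ ≤ ∑ x ∈ S, ‖b x v‖ * ‖b x w‖ :=
          (norm_sum_le _ _).trans (Finset.sum_le_sum fun x _ => norm_inner_le_norm _ _)
      _ ≤ Real.sqrt (∑ x ∈ S, ‖b x v‖ ^ 2) * Real.sqrt (∑ x ∈ S, ‖b x w‖ ^ 2) :=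
          Real.sum_mul_le_sqrt_mul_sqrt _ _ _
      _ ≤ (C * ‖v‖) * (C * ‖w‖) :=
          mul_le_mul (hs v) (hs w) (Real.sqrt_nonneg _) (by positivity)
      _ = _ := by ring
  rcases (norm_nonneg w).eq_or_lt with h0 | h0
  · rw [← h0]; positivity
  · exact le_of_mul_le_mul_right h1 h0

theorem aux_lp {G : Type*} {H : Type*} [NormedAddCommGroup H] [InnerProductSpace ℂ H]
    (S : Finset G) (f : lp (fun _ : G => H) 2) : ∑ x ∈ S, ‖f x‖ ^ 2 ≤ ‖f‖ ^ 2 := by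
  have := lp.sum_rpow_le_norm_rpow (p := 2) (by norm_num) f S
  simpa using this

/-- for a finitely supported `a : G → B(H)`, the elementary inequality
`max{‖Σ a(x)*a(x)‖^{1/2}, ‖Σ a(x)a(x)*‖^{1/2}} ≤ ‖Σ_x λ(x) ⊗ a(x)‖` holds, where the
right-hand operator on `ℓ²(G;H)` is given by `(T f)(s) = Σ_x a(x) f(x⁻¹s)`. -/
theorem stmt_5 {G : Type*} [Group G]
    (H : Type*) [NormedAddCommGroup H] [InnerProductSpace ℂ H] [CompleteSpace H]
    (a : G →₀ (H →L[ℂ] H))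
    (T : lp (fun _ : G => H) 2 →L[ℂ] lp (fun _ : G => H) 2)
    (hT : ∀ (f : lp (fun _ : G => H) 2) (s : G),
      T f s = ∑ x ∈ a.support, (a x) (f (x⁻¹ * s))) :
    max (Real.sqrt ‖∑ x ∈ a.support, (ContinuousLinearMap.adjoint (a x)).comp (a x)‖)
        (Real.sqrt ‖∑ x ∈ a.support, (a x).comp (ContinuousLinearMap.adjoint (a x))‖)
      ≤ ‖T‖ := by
  classical
  have hsingle : ∀ v : H, ∀ y : G, ‖(lp.single 2 y v : lp (fun _ : G => H) 2)‖ = ‖v‖ := fun v y =>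
    lp.norm_single (by norm_num) _ _
  have key : ∀ (v : H) (y s : G), T (lp.single 2 y v) s = a (s * y⁻¹) v := fun v y s => by
    rw [hT, Finset.sum_eq_single (s * y⁻¹)]
    · simp
    · intro x _ hx
      rw [lp.single_apply_ne, map_zero]
      rintro rfl
      simp at hx
    · intro hx
      simp [Finsupp.notMem_support_iff.mp hx]
  refine max_le ?_ ?_
  · refine aux_bound_s5 _ _ _ (norm_nonneg _) fun v => ?_
    have h1 := aux_lp a.support (T (lp.single 2 1 v))
    simp only [key, inv_one, mul_one] at h1
    refine h1.trans (pow_le_pow_left₀ (norm_nonneg _) ?_ 2)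
    simpa only [hsingle] using T.le_opNorm (lp.single 2 1 v)
  · have h2 := aux_bound_s5 a.support (fun x => ContinuousLinearMap.adjoint (a x)) ‖T‖
      (norm_nonneg _) ?_
    · simpa only [ContinuousLinearMap.adjoint_adjoint] using h2
    intro v
    have key2 : ∀ y : G, (ContinuousLinearMap.adjoint T (lp.single 2 1 v)) y
        = ContinuousLinearMap.adjoint (a y⁻¹) v := fun y => by
      refine ext_inner_left ℂ fun k => ?_
      have e1 := lp.inner_single_left (𝕜 := ℂ) (G := fun _ : G => H) y k
        (ContinuousLinearMap.adjoint T (lp.single 2 1 v))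
      have e2 := lp.inner_single_right (𝕜 := ℂ) (G := fun _ : G => H) 1 v (T (lp.single 2 y k))
      rw [ContinuousLinearMap.adjoint_inner_right] at e1
      refine e1.symm.trans (e2.trans ?_)
      have e3 := key k y 1
      rw [one_mul] at e3
      rw [ContinuousLinearMap.adjoint_inner_right]
      exact congrArg (fun z : H => inner ℂ z v) e3
    have h1 := aux_lp (a.support.image fun x => x⁻¹)
      (ContinuousLinearMap.adjoint T (lp.single 2 1 v))
    rw [Finset.sum_image (fun x _ y _ h => inv_injective h)] at h1
    simp only [key2, inv_inv] at h1
    refine h1.trans (pow_le_pow_left₀ (norm_nonneg _) ?_ 2)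
    have h3 := (ContinuousLinearMap.adjoint T).le_opNorm (lp.single 2 1 v)
    rwa [hsingle, LinearIsometryEquiv.norm_map] at h3
end
end

section
/- Let G be a group, φ : G → ℂ, and C ≥ 0. Suppose that for every function ε : G → ℂ with |ε(x)| ≤ 1 for all x ∈ G, the kernel (s,t) ↦ ε(st)·φ(st) on G × G is a Schur multiplier of norm at most C. Then there is a partition G × G = Γ₁ ∪ Γ₂ (disjoint) such that sup_{s∈G} Σ_{t : (s,t)∈Γ₁} |φ(st)|² ≤ (4C)² and sup_{t∈G} Σ_{s : (s,t)∈Γ₂} |φ(st)|² ≤ (4C)². -/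
open scoped ENNReal NNReal
open MeasureTheory ContinuousLinearMap

noncomputable section

theorem aux_trunc {H : Type*} [NormedAddCommGroup H] [InnerProductSpace ℂ H] [CompleteSpace H]
    (Y : H →L[ℂ] H) : ∃ A : H →L[ℂ] H, ‖A‖ ≤ 1/2 ∧ Y - A = A * (star Y * Y) ∧
      Y - A = Y * star Y * A := by
  have hu : IsUnit (1 + star Y * Y) := by
    by_contra hc
    have h1 : (-1 : ℂ) ∈ spectrum ℂ (star Y * Y) := by
      rw [spectrum.mem_iff]
      intro h2
      apply hc
      have : algebraMap ℂ (H →L[ℂ] H) (-1) - star Y * Y = -(1 + star Y * Y) := by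
        simp; abel
      rw [this] at h2
      simpa using h2.neg
    have hn : (0 : H →L[ℂ] H) ≤ star Y * Y := star_mul_self_nonneg Y
    open scoped ComplexOrder in
    have := spectrum_nonneg_of_nonneg hn h1
    rw [Complex.le_def] at this
    norm_num at this
  obtain ⟨u, hu⟩ := hu
  have e1 : Y * (↑u⁻¹ : H →L[ℂ] H) * (1 + star Y * Y) = Y := by
    rw [← hu, mul_assoc, Units.inv_mul, mul_one]
  refine ⟨Y * (↑u⁻¹ : H →L[ℂ] H), ?_, ?_, ?_⟩
  · refine ContinuousLinearMap.opNorm_le_bound _ (by norm_num) fun v => ?_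
    set w := (↑u⁻¹ : H →L[ℂ] H) v with hw
    have hv : v = w + (star Y) (Y w) := by
      have : (u : H →L[ℂ] H) ((↑u⁻¹ : H →L[ℂ] H) v) = v := by
        rw [← mul_apply_eq_comp, Units.mul_inv]; simp
      rw [← hw, hu] at this
      simpa using this.symm
    have hin : inner ℂ w ((star Y) (Y w)) = ((‖Y w‖ ^ 2 : ℝ) : ℂ) := by
      rw [ContinuousLinearMap.star_eq_adjoint, ContinuousLinearMap.adjoint_inner_right,
        inner_self_eq_norm_sq_to_K]
      simp
    have h1 : ‖v‖ ^ 2 = ‖w‖ ^ 2 + 2 * ‖Y w‖ ^ 2 + ‖(star Y) (Y w)‖ ^ 2 := by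
      rw [hv, @norm_add_sq ℂ, hin]
      simp [← Complex.ofReal_pow]
    have h2 : ‖Y w‖ ^ 2 ≤ ‖w‖ * ‖(star Y) (Y w)‖ := by
      have := norm_inner_le_norm (𝕜 := ℂ) w ((star Y) (Y w))
      rw [hin, Complex.norm_real, Real.norm_of_nonneg (by positivity)] at this
      exact this
    change ‖Y w‖ ≤ _
    have h3 : (2 * ‖Y w‖) ^ 2 ≤ ‖v‖ ^ 2 := by
      nlinarith [sq_nonneg (‖w‖ - ‖(star Y) (Y w)‖)]
    have := abs_le_of_sq_le_sq' h3 (norm_nonneg _)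
    linarith [this.2]
  · rw [mul_add, mul_one] at e1
    exact sub_eq_of_eq_add' e1.symm
  · have e2 : (1 + Y * star Y) * (Y * (↑u⁻¹ : H →L[ℂ] H)) = Y := by
      have : (1 + Y * star Y) * Y = Y * (1 + star Y * Y) := by noncomm_ring
      rw [← mul_assoc, this, ← hu, mul_assoc, Units.mul_inv, mul_one]
    rw [add_mul, one_mul] at e2
    exact sub_eq_of_eq_add' e2.symm

theorem aux_entries {G H : Type*} [NormedAddCommGroup H] [InnerProductSpace ℂ H] [CompleteSpace H]
    (e : G → H) (he : Orthonormal ℂ e) (E F : Finset G) (y : G → G → ℂ) :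
    ∃ A : H →L[ℂ] H, ‖A‖ ≤ 1/2 ∧
      (∀ s ∈ E, ∑ t ∈ F, ‖y s t - inner ℂ (e t) (A (e s))‖ ^ 2 ≤
        1/4 * ∑ s' ∈ E, ‖∑ t ∈ F, y s t * star (y s' t)‖ ^ 2) ∧
      (∀ t ∈ F, ∑ s ∈ E, ‖y s t - inner ℂ (e t) (A (e s))‖ ^ 2 ≤
        1/4 * ∑ t' ∈ F, ‖∑ s ∈ E, y s t * star (y s t')‖ ^ 2) := by
  classical
  set Y : H →L[ℂ] H := ∑ s ∈ E, ∑ t ∈ F, y s t • (innerSL ℂ (e s)).smulRight (e t) with hY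
  have ho : ∀ i j, inner ℂ (e i) (e j) = if i = j then (1 : ℂ) else 0 := 
    orthonormal_iff_ite.mp he
  have hYe : ∀ s ∈ E, Y (e s) = ∑ t ∈ F, y s t • e t := by
    intro s hs
    simp [hY, ho, Finset.sum_comm (s := E), hs]
  have hYs : star Y = ∑ s ∈ E, ∑ t ∈ F, star (y s t) • (innerSL ℂ (e t)).smulRight (e s) := by
    rw [ContinuousLinearMap.star_eq_adjoint]
    symm
    rw [ContinuousLinearMap.eq_adjoint_iff]
    intro u v
    simp [hY, sum_inner, inner_sum, inner_smul_left, inner_smul_right]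
    refine Finset.sum_congr rfl fun s _ => Finset.sum_congr rfl fun t _ => ?_
    ring
  have hYse : ∀ t ∈ F, star Y (e t) = ∑ s ∈ E, star (y s t) • e s := by
    intro t ht
    simp [hYs, ho, ht]
  have hnorm : ∀ (S : Finset G) (c : G → ℂ), ‖∑ s ∈ S, c s • e s‖ ^ 2 = ∑ s ∈ S, ‖c s‖ ^ 2 := by
    intro S c
    have h1 := inner_self_eq_norm_sq_to_K (𝕜 := ℂ) (∑ s ∈ S, c s • e s)
    rw [he.inner_sum] at h1
    apply Complex.ofReal_injective
    push_cast
    refine Eq.trans h1.symm (Finset.sum_congr rfl fun s _ => ?_)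
    simp [Complex.conj_mul']
  obtain ⟨A, hA, h1, h2⟩ := aux_trunc Y
  refine ⟨A, hA, fun s hs => ?_, fun t ht => ?_⟩
  · have key : ∀ t ∈ F, y s t - inner ℂ (e t) (A (e s)) = inner ℂ (e t) ((Y - A) (e s)) := by
      intro t ht
      simp [inner_sub_right, hYe s hs, inner_sum, inner_smul_right, ho, ht]
    rw [Finset.sum_congr rfl fun t ht => by rw [key t ht]]
    refine (he.sum_inner_products_le _).trans ?_
    have h3 : (star Y) (Y (e s)) = ∑ s' ∈ E, (∑ t ∈ F, y s t * star (y s' t)) • e s' := by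
      rw [hYe s hs, map_sum]
      simp_rw [map_smul]
      rw [Finset.sum_congr rfl fun t ht => by rw [hYse t ht]]
      simp_rw [Finset.smul_sum, Finset.sum_smul, mul_smul]
      rw [Finset.sum_comm]
    rw [← hnorm, ← h3, h1]
    have h4 := A.le_opNorm ((star Y) (Y (e s)))
    have h5 : ‖A ((star Y) (Y (e s)))‖ ≤ 1/2 * ‖(star Y) (Y (e s))‖ := h4.trans (by gcongr)
    change ‖A ((star Y) (Y (e s)))‖ ^ 2 ≤ _
    calc _ ≤ (1/2 * ‖(star Y) (Y (e s))‖) ^ 2 := by gcongr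
      _ = _ := by ring
  · have key : ∀ s ∈ E, ‖y s t - inner ℂ (e t) (A (e s))‖ = ‖inner ℂ (e s) (star (Y - A) (e t))‖ := by
      intro s hs
      rw [ContinuousLinearMap.star_eq_adjoint, ContinuousLinearMap.adjoint_inner_right, norm_inner_symm]
      congr 1
      simp [inner_sub_right, hYe s hs, inner_sum, inner_smul_right, ho, ht]
    rw [Finset.sum_congr rfl fun t ht => by rw [key t ht]]
    refine (he.sum_inner_products_le _).trans ?_
    have h3 : Y ((star Y) (e t)) = ∑ t' ∈ F, (∑ s ∈ E, star (y s t) * (y s t')) • e t' := by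
      rw [hYse t ht, map_sum]
      simp_rw [map_smul]
      rw [Finset.sum_congr rfl fun t ht => by rw [hYe t ht]]
      simp_rw [Finset.smul_sum, Finset.sum_smul, mul_smul]
      rw [Finset.sum_comm]
    have h6 : ∀ t' ∈ F, ‖∑ s ∈ E, y s t * star (y s t')‖ = ‖∑ s ∈ E, star (y s t) * (y s t')‖ := by
      intro t' _
      rw [← norm_star, star_sum]
      simp [mul_comm]
    rw [Finset.sum_congr rfl fun t ht => by rw [h6 t ht]]
    rw [← hnorm, ← h3, h2, star_mul, star_mul, star_star]
    have h4 := (star A).le_opNorm (Y ((star Y) (e t)))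
    rw [norm_star] at h4
    have h5 : ‖star A (Y ((star Y) (e t)))‖ ≤ 1/2 * ‖Y ((star Y) (e t))‖ := h4.trans (by gcongr)
    change ‖star A (Y ((star Y) (e t)))‖ ^ 2 ≤ _
    calc _ ≤ (1/2 * ‖Y ((star Y) (e t))‖) ^ 2 := by gcongr
      _ = _ := by ring

theorem aux_comb {G : Type*} (w : G → G → ℝ) (K : ℝ)
    (hw : ∀ E F : Finset G, (E.Nonempty ∨ F.Nonempty) →
      (∃ s ∈ E, ∑ t ∈ F, w s t ≤ K) ∨ (∃ t ∈ F, ∑ s ∈ E, w s t ≤ K)) :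
    ∀ (n : ℕ) (E F : Finset G), E.card + F.card = n → ∃ Γ : G → G → Prop, 
      letI := Classical.decRel Γ
      (∀ s ∈ E, ∑ t ∈ F, (if Γ s t then w s t else 0) ≤ K) ∧
      (∀ t ∈ F, ∑ s ∈ E, (if Γ s t then 0 else w s t) ≤ K) := by
  classical
  intro n
  induction n with
  | zero => 
    intro E F h
    have hE : E = ∅ := by rw [← Finset.card_eq_zero]; omega
    have hF : F = ∅ := by rw [← Finset.card_eq_zero]; omega
    subst hE hF
    exact ⟨fun _ _ => True, by simp⟩
  | succ n ih =>
    intro E F h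
    have hne : E.Nonempty ∨ F.Nonempty := by
      simp only [← Finset.card_pos]; omega
    rcases hw E F hne with ⟨s0, hs0, h0⟩ | ⟨t0, ht0, h0⟩
    · obtain ⟨Γ, h1, h2⟩ := ih (E.erase s0) F (by
        have := Finset.card_erase_add_one hs0; omega)
      refine ⟨fun s t => s = s0 ∨ Γ s t, fun s hs => ?_, fun t ht => ?_⟩
      · by_cases hss : s = s0
        · subst hss; simpa using h0
        · have := h1 s (by simp [hss, hs])
          simp only [hss, false_or]
          convert this
      · rw [← Finset.add_sum_erase _ _ hs0]
        simp only [true_or, if_true, zero_add]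
        refine le_trans (le_of_eq ?_) (h2 t ht)
        refine Finset.sum_congr rfl fun s hs => ?_
        simp [Finset.ne_of_mem_erase hs]
    · obtain ⟨Γ, h1, h2⟩ := ih E (F.erase t0) (by
        have := Finset.card_erase_add_one ht0; omega)
      refine ⟨fun s t => t ≠ t0 ∧ Γ s t, fun s hs => ?_, fun t ht => ?_⟩
      · rw [← Finset.add_sum_erase _ _ ht0]
        simp only [ne_eq, not_true, false_and, if_false, zero_add]
        refine le_trans (le_of_eq ?_) (h1 s hs)
        refine Finset.sum_congr rfl fun s hs => ?_
        simp [Finset.ne_of_mem_erase hs]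
      · by_cases hss : t = t0
        · subst hss; simpa using h0
        · have := h2 t (by simp [hss, ht])
          simp only [hss, ne_eq, not_false_iff, true_and]
          convert this

theorem aux_cpt {G : Type*} (w : G → G → ℝ) (K : ℝ)
    (hw : ∀ E F : Finset G, (E.Nonempty ∨ F.Nonempty) →
      (∃ s ∈ E, ∑ t ∈ F, w s t ≤ K) ∨ (∃ t ∈ F, ∑ s ∈ E, w s t ≤ K)) (h0 : ∀ s t, 0 ≤ w s t) :
    ∃ Γ : G → G → Prop, 
      letI := Classical.decRel Γ
      (∀ s, ∀ T : Finset G, ∑ t ∈ T, (if Γ s t then w s t else 0) ≤ K) ∧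
      (∀ t, ∀ T : Finset G, ∑ s ∈ T, (if Γ s t then 0 else w s t) ≤ K) := by
  classical
  choose Γ h1 h2 using fun E : Finset G => aux_comb w K hw _ E E rfl
  let U : Ultrafilter (Finset G) := Ultrafilter.of Filter.atTop
  have hU : ∀ s : Finset G, ∀ᶠ E in (U : Filter (Finset G)), s ⊆ E := fun s =>
    (Ultrafilter.of_le Filter.atTop) (Filter.eventually_ge_atTop s)
  have hag : ∀ s t, ∀ᶠ E in (U : Filter (Finset G)), 
      (Γ E s t ↔ ∀ᶠ E in (U : Filter (Finset G)), Γ E s t) := by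
    intro s t
    by_cases h : ∀ᶠ E in (U : Filter (Finset G)), Γ E s t
    · filter_upwards [h] with E hE
      simp [hE, h]
    · have h' := Ultrafilter.eventually_not.mpr h
      filter_upwards [h'] with E hE
      simp [hE, h]
  refine ⟨fun s t => ∀ᶠ E in (U : Filter (Finset G)), Γ E s t, fun s T => ?_, fun t T => ?_⟩
  · have : ∀ᶠ E in (U : Filter (Finset G)), ∀ t ∈ T, 
      (Γ E s t ↔ ∀ᶠ E in (U : Filter (Finset G)), Γ E s t) :=
        (Filter.eventually_all_finset T).mpr fun t _ => hag s t
    obtain ⟨E, hE1, hE2⟩ := (this.and (hU (insert s T))).exists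
    rw [Finset.insert_subset_iff] at hE2
    refine le_trans ?_ (h1 E s hE2.1)
    refine le_trans (le_of_eq ?_) (Finset.sum_le_sum_of_subset_of_nonneg hE2.2 ?_)
    · refine Finset.sum_congr rfl fun t ht => ?_
      simp only [hE1 t ht]
    · intro t _ _
      split_ifs <;> simp [h0]
  · have : ∀ᶠ E in (U : Filter (Finset G)), ∀ s ∈ T, 
      (Γ E s t ↔ ∀ᶠ E in (U : Filter (Finset G)), Γ E s t) :=
        (Filter.eventually_all_finset T).mpr fun s _ => hag s t
    obtain ⟨E, hE1, hE2⟩ := (this.and (hU (insert t T))).exists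
    rw [Finset.insert_subset_iff] at hE2
    refine le_trans ?_ (h2 E t hE2.1)
    refine le_trans (le_of_eq ?_) (Finset.sum_le_sum_of_subset_of_nonneg hE2.2 ?_)
    · refine Finset.sum_congr rfl fun s hs => ?_
      simp only [hE1 s hs]
    · intro t _ _
      split_ifs <;> simp [h0]

theorem aux_signs {G : Type*} (X : Finset G) : ∃ (Ω : Type) (_ : Fintype Ω) (_ : Nonempty Ω)
    (ε : Ω → G → ℂ), (∀ ω x, ‖ε ω x‖ = 1) ∧ 
    ∀ a ∈ X, ∀ b ∈ X, ∀ c ∈ X, ∀ d ∈ X, a ≠ b → a ≠ d → 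
      ∑ ω, ε ω a * ε ω c * (star (ε ω b) * star (ε ω d)) = 0 := by
  classical
  obtain ⟨n, ⟨f⟩⟩ : ∃ n, Nonempty (X ≃ Fin n) := ⟨_, ⟨X.equivFin⟩⟩
  let χ : ZMod 3 → ℂ := fun k => (ZMod.toCircle k : ℂ)
  have hχ : ∀ k l, χ (k + l) = χ k * χ l := by
    intro k l; simp [χ, AddChar.map_add_eq_mul]
  have hχn : ∀ k, ‖χ k‖ = 1 := by intro k; exact Circle.norm_coe _
  have hχ1 : ∀ k, k ≠ 0 → χ k ≠ 1 := by
    intro k hk h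
    apply hk
    apply ZMod.injective_toCircle
    rw [AddChar.map_zero_eq_one]
    exact Circle.ext (by simpa [χ] using h)
  let ε : (Fin n → ZMod 3) → G → ℂ := fun θ x => if h : x ∈ X then χ (θ (f ⟨x, h⟩)) else 1
  refine ⟨Fin n → ZMod 3, inferInstance, inferInstance, ε, ?_, ?_⟩
  · intro ω x
    simp only [ε]
    split_ifs <;> simp [hχn]
  · intro a ha b hb c hc d hd hab had
    let δ : Fin n → ZMod 3 := Pi.single (f ⟨a, ha⟩) 1
    have hb' : ∀ θ, ε (θ + δ) b = ε θ b := by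
      intro θ; simp [ε, hb, δ, Pi.single_apply, Ne.symm hab]
    have hd' : ∀ θ, ε (θ + δ) d = ε θ d := by
      intro θ; simp [ε, hd, δ, Pi.single_apply, Ne.symm had]
    have ha' : ∀ θ, ε (θ + δ) a = χ 1 * ε θ a := by
      intro θ; simp [ε, ha, δ, hχ, mul_comm]
    have hc' : ∃ k : ZMod 3, 1 + k ≠ 0 ∧ ∀ θ, ε (θ + δ) c = χ k * ε θ c := by
      by_cases hca : c = a
      · subst hca
        exact ⟨1, by decide, ha'⟩
      · refine ⟨0, by decide, fun θ => ?_⟩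
        have : χ 0 = 1 := by simp [χ]
        simp [ε, hc, δ, Pi.single_apply, hca, this]
    obtain ⟨k, hk, hc'⟩ := hc'
    have hs := Equiv.sum_comp (Equiv.addRight δ) 
      (fun ω => ε ω a * ε ω c * (star (ε ω b) * star (ε ω d)))
    simp only [Equiv.coe_addRight, ha', hb', hc', hd'] at hs
    have h2 : ∀ θ, χ 1 * ε θ a * (χ k * ε θ c) * (star (ε θ b) * star (ε θ d)) = 
      χ (1 + k) * (ε θ a * ε θ c * (star (ε θ b) * star (ε θ d))) := by
      intro θ; rw [hχ]; ring
    simp only [h2, ← Finset.mul_sum] at hs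
    exact (mul_left_eq_self₀.mp hs).resolve_left (hχ1 _ hk)

theorem aux_orth {G Ω : Type*} [Fintype Ω] (F : Finset G) (c : G → ℂ) (u : Ω → G → ℂ) 
    (hu : ∀ ω t, ‖u ω t‖ = 1) (ho : ∀ t ∈ F, ∀ t' ∈ F, t ≠ t' → ∑ ω, u ω t * star (u ω t') = 0) :
    ∑ ω, ‖∑ t ∈ F, c t * u ω t‖ ^ 2 = Fintype.card Ω * ∑ t ∈ F, ‖c t‖ ^ 2 := by
  classical
  have hC : ∀ z : ℂ, ((‖z‖ ^ 2 : ℝ) : ℂ) = z * star z := by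
    intro z; simp [Complex.mul_conj, Complex.normSq_eq_norm_sq]
  apply Complex.ofReal_injective
  push_cast [-Complex.ofReal_pow]
  simp only [hC, star_sum, Finset.sum_mul_sum, star_mul']
  rw [Finset.sum_comm]
  simp_rw [Finset.sum_comm (s := Finset.univ)]
  rw [Finset.mul_sum]
  refine Finset.sum_congr rfl fun t ht => ?_
  rw [Finset.sum_eq_single t]
  · have : ∀ ω, c t * u ω t * (star (c t) * star (u ω t)) = c t * star (c t) := by
      intro ω
      have := hC (u ω t)
      rw [hu] at this
      calc _ = c t * star (c t) * (u ω t * star (u ω t)) := by ring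
        _ = _ := by rw [← this]; simp
    simp only [this]
    simp
  · intro t' ht' hne
    have : ∀ ω, c t * u ω t * (star (c t') * star (u ω t')) = c t * star (c t') * (u ω t * star (u ω t')) := by
      intro ω; ring
    simp only [this, ← Finset.mul_sum]
    rw [ho t ht t' ht' hne.symm, mul_zero]
  · exact fun h => absurd ht h

theorem aux_exp {G Ω : Type*} [Fintype Ω] (E F : Finset G) (a : G → G → ℂ) (ε : Ω → G → G → ℂ)
    (hε : ∀ ω s t, ‖ε ω s t‖ = 1)
    (ho : ∀ s ∈ E, ∀ s' ∈ E, s ≠ s' → ∀ t ∈ F, ∀ t' ∈ F, t ≠ t' → 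
      ∑ ω, ε ω s t * star (ε ω s' t) * star (ε ω s t' * star (ε ω s' t')) = 0)
    (h1 : ∀ s ∈ E, ∑ t ∈ F, ‖a s t‖ ^ 2 ≤ 1) (h2 : ∀ t ∈ F, ∑ s ∈ E, ‖a s t‖ ^ 2 ≤ 1) 
    (s : G) (hs : s ∈ E) : 
    ∑ ω, ∑ s' ∈ E, ‖∑ t ∈ F, (ε ω s t * a s t) * star (ε ω s' t * a s' t)‖ ^ 2 ≤ 
      2 * Fintype.card Ω := by
  classical
  rw [Finset.sum_comm, ← Finset.add_sum_erase _ _ hs]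
  have hb1 : ∑ ω, ‖∑ t ∈ F, (ε ω s t * a s t) * star (ε ω s t * a s t)‖ ^ 2 ≤ Fintype.card Ω := by
    have : ∀ ω ∈ (Finset.univ : Finset Ω), 
        ‖∑ t ∈ F, (ε ω s t * a s t) * star (ε ω s t * a s t)‖ ^ 2 ≤ 1 := by
      intro ω _
      have : ‖∑ t ∈ F, (ε ω s t * a s t) * star (ε ω s t * a s t)‖ ≤ 1 := by
        refine (norm_sum_le _ _).trans (le_trans (le_of_eq ?_) (h1 s hs))
        refine Finset.sum_congr rfl fun t _ => ?_
        simp [hε]; ring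
      exact pow_le_one₀ (norm_nonneg _) this
    refine (Finset.sum_le_sum this).trans (by simp)
  have hb2 : ∀ s' ∈ E.erase s, 
      ∑ ω, ‖∑ t ∈ F, (ε ω s t * a s t) * star (ε ω s' t * a s' t)‖ ^ 2 = 
      Fintype.card Ω * ∑ t ∈ F, ‖a s t‖ ^ 2 * ‖a s' t‖ ^ 2 := by
    intro s' hs'
    have := aux_orth F (fun t => a s t * star (a s' t)) (fun ω t => ε ω s t * star (ε ω s' t))
      (by simp [hε]) (ho s hs s' (Finset.mem_of_mem_erase hs') (Finset.ne_of_mem_erase hs').symm)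
    simp only [norm_mul, norm_star, mul_pow] at this
    rw [← this]
    refine Finset.sum_congr rfl fun ω _ => ?_
    congr 2
    refine Finset.sum_congr rfl fun t _ => ?_
    rw [star_mul']; ring
  rw [Finset.sum_congr rfl hb2, ← Finset.mul_sum, Finset.sum_comm]
  have hb3 : ∑ t ∈ F, ∑ s' ∈ E.erase s, ‖a s t‖ ^ 2 * ‖a s' t‖ ^ 2 ≤ 1 := by
    refine le_trans (Finset.sum_le_sum fun t ht => ?_) (h1 s hs)
    rw [← Finset.mul_sum]
    refine mul_le_of_le_one_right (by positivity) (le_trans ?_ (h2 t ht))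
    exact Finset.sum_le_sum_of_subset_of_nonneg (Finset.erase_subset _ _) (fun _ _ _ => by positivity)
  nlinarith [(Nat.cast_nonneg (Fintype.card Ω) : (0:ℝ) ≤ _)]

theorem aux_main {G H : Type*} [Group G] [NormedAddCommGroup H] [InnerProductSpace ℂ H]
    [CompleteSpace H]
    (e : G → H) (he : Orthonormal ℂ e) (E F : Finset G) (m : G → G → ℂ) (K : ℝ)
    (hm : ∀ ε : G → ℂ, (∀ x, ‖ε x‖ ≤ 1) → ∀ A : H →L[ℂ] H,
      ‖∑ s ∈ E, ∑ t ∈ F, ε (s * t) * m s t * inner ℂ (e t) (A (e s))‖ ≤ K * ‖A‖) (hK : 0 ≤ K)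
    (a : G → G → ℂ) (h1 : ∀ s ∈ E, ∑ t ∈ F, ‖a s t‖ ^ 2 ≤ 1)
    (h2 : ∀ t ∈ F, ∑ s ∈ E, ‖a s t‖ ^ 2 ≤ 1) :
    ‖∑ s ∈ E, ∑ t ∈ F, m s t * a s t‖ ≤ 2 * K := by
  classical
  let P : (G → G → ℂ) → Prop := fun a => (∀ s ∈ E, ∑ t ∈ F, ‖a s t‖ ^ 2 ≤ 1) ∧
    (∀ t ∈ F, ∑ s ∈ E, ‖a s t‖ ^ 2 ≤ 1)
  let N : (G → G → ℂ) → ℝ := fun a => ‖∑ s ∈ E, ∑ t ∈ F, m s t * a s t‖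
  have hbdd : BddAbove (N '' {a | P a}) := by
    refine ⟨∑ s ∈ E, ∑ t ∈ F, ‖m s t‖, ?_⟩
    rintro _ ⟨a, ha, rfl⟩
    refine (norm_sum_le _ _).trans (Finset.sum_le_sum fun s hs => ?_)
    refine (norm_sum_le _ _).trans (Finset.sum_le_sum fun t ht => ?_)
    rw [norm_mul]
    refine mul_le_of_le_one_right (norm_nonneg _) ?_
    have := (Finset.single_le_sum (f := fun t => ‖a s t‖ ^ 2) (fun _ _ => by positivity) ht).trans
      (ha.1 s hs)
    exact (sq_le_one_iff₀ (norm_nonneg _)).mp this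
  set β := sSup (N '' {a | P a}) with hβ
  have hle : ∀ a, P a → N a ≤ β := fun a ha => le_csSup hbdd ⟨a, ha, rfl⟩
  obtain ⟨Ω, _, _, ε, hε, hor⟩ := aux_signs (Finset.image (fun p : G × G => p.1 * p.2) (E ×ˢ F))
  have hmem : ∀ s ∈ E, ∀ t ∈ F, s * t ∈ Finset.image (fun p : G × G => p.1 * p.2) (E ×ˢ F) := by
    intro s hs t ht
    exact Finset.mem_image.mpr ⟨(s, t), by simp [hs, ht], rfl⟩
  have hcard : (0 : ℝ) < Fintype.card Ω := by exact_mod_cast Fintype.card_pos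
  have hcard' : (Fintype.card Ω : ℂ) ≠ 0 := by exact_mod_cast hcard.ne'
  have step : ∀ a, P a → N a ≤ K * (1/2) + 3/4 * β := by
    intro a ha
    choose A hA hA1 hA2 using fun ω => aux_entries e he E F (fun s t => ε ω (s * t) * a s t)
    let z : Ω → G → G → ℂ := fun ω s t => ε ω (s * t) * a s t - inner ℂ (e t) (A ω (e s))
    let a' : G → G → ℂ := fun s t => (Fintype.card Ω : ℂ)⁻¹ * ∑ ω, star (ε ω (s * t)) * z ω s t
    have hεε : ∀ ω x, star (ε ω x) * ε ω x = 1 := by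
      intro ω x
      have := Complex.conj_mul' (ε ω x)
      rw [hε] at this
      simpa using this
    have ha'b : ∀ s t, ‖a' s t‖ ^ 2 ≤ (Fintype.card Ω : ℝ)⁻¹ * ∑ ω, ‖z ω s t‖ ^ 2 := by
      intro s t
      have e1 : ‖∑ ω, star (ε ω (s * t)) * z ω s t‖ ≤ ∑ ω, ‖z ω s t‖ := by
        refine (norm_sum_le _ _).trans (le_of_eq (Finset.sum_congr rfl fun ω _ => ?_))
        simp [hε]
      have e2 : (∑ ω, ‖z ω s t‖) ^ 2 ≤ Fintype.card Ω * ∑ ω, ‖z ω s t‖ ^ 2 := by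
        simpa using sq_sum_le_card_mul_sum_sq (s := (Finset.univ : Finset Ω)) (f := fun ω => ‖z ω s t‖)
      have e3 : ‖∑ ω, star (ε ω (s * t)) * z ω s t‖ ^ 2 ≤ Fintype.card Ω * ∑ ω, ‖z ω s t‖ ^ 2 :=
        le_trans (by gcongr) e2
      simp only [a', norm_mul, norm_inv, Complex.norm_natCast, mul_pow]
      calc _ ≤ ((Fintype.card Ω : ℝ)⁻¹) ^ 2 * (Fintype.card Ω * ∑ ω, ‖z ω s t‖ ^ 2) := by gcongr
        _ = _ := by field_simp
    have hrow : ∀ s ∈ E, ∑ t ∈ F, ‖a' s t‖ ^ 2 ≤ 1/2 := by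
      intro s hs
      have hx := aux_exp E F a (fun ω s t => ε ω (s * t)) (fun ω s t => hε _ _) (by
        intro s hs s' hs' hss t ht t' ht' htt
        have := hor (s * t) (hmem s hs t ht) (s' * t) (hmem s' hs' t ht) (s' * t')
          (hmem s' hs' t' ht') (s * t') (hmem s hs t' ht') (by simpa using hss) (by simpa using htt)
        rw [← this]
        refine Finset.sum_congr rfl fun ω _ => ?_
        rw [star_mul', star_star]; ring) ha.1 ha.2 s hs
      calc _ ≤ ∑ t ∈ F, (Fintype.card Ω : ℝ)⁻¹ * ∑ ω, ‖z ω s t‖ ^ 2 :=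
            Finset.sum_le_sum fun t _ => ha'b s t
        _ = (Fintype.card Ω : ℝ)⁻¹ * ∑ ω, ∑ t ∈ F, ‖z ω s t‖ ^ 2 := by
            rw [← Finset.mul_sum, Finset.sum_comm]
        _ ≤ (Fintype.card Ω : ℝ)⁻¹ * (1/4 * (2 * Fintype.card Ω)) := by
            refine mul_le_mul_of_nonneg_left ?_ (by positivity)
            refine le_trans (Finset.sum_le_sum fun ω _ => hA1 ω s hs) ?_
            rw [← Finset.mul_sum]
            exact mul_le_mul_of_nonneg_left hx (by norm_num)
        _ = 1/2 := by field_simp; norm_num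
    have hcol : ∀ t ∈ F, ∑ s ∈ E, ‖a' s t‖ ^ 2 ≤ 1/2 := by
      intro t ht
      have hx := aux_exp F E (fun t s => a s t) (fun ω t s => ε ω (s * t)) (fun ω s t => hε _ _) (by
        intro t ht t' ht' htt s hs s' hs' hss
        have := hor (s * t) (hmem s hs t ht) (s' * t) (hmem s' hs' t ht) (s' * t')
          (hmem s' hs' t' ht') (s * t') (hmem s hs t' ht') (by simpa using hss) (by simpa using htt)
        rw [← this]
        refine Finset.sum_congr rfl fun ω _ => ?_
        rw [star_mul', star_star]; ring) ha.2 ha.1 t ht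
      calc _ ≤ ∑ s ∈ E, (Fintype.card Ω : ℝ)⁻¹ * ∑ ω, ‖z ω s t‖ ^ 2 :=
            Finset.sum_le_sum fun s _ => ha'b s t
        _ = (Fintype.card Ω : ℝ)⁻¹ * ∑ ω, ∑ s ∈ E, ‖z ω s t‖ ^ 2 := by
            rw [← Finset.mul_sum, Finset.sum_comm]
        _ ≤ (Fintype.card Ω : ℝ)⁻¹ * (1/4 * (2 * Fintype.card Ω)) := by
            refine mul_le_mul_of_nonneg_left ?_ (by positivity)
            refine le_trans (Finset.sum_le_sum fun ω _ => hA2 ω t ht) ?_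
            rw [← Finset.mul_sum]
            exact mul_le_mul_of_nonneg_left hx (by norm_num)
        _ = 1/2 := by field_simp; norm_num
    have hN' : N a' ≤ 3/4 * β := by
      have hP : P (fun s t => (4/3 : ℂ) * a' s t) := by
        constructor
        · intro s hs
          have := hrow s hs
          simp only [norm_mul, mul_pow, ← Finset.mul_sum]
          norm_num
          linarith
        · intro s hs
          have := hcol s hs
          simp only [norm_mul, mul_pow, ← Finset.mul_sum]
          norm_num
          linarith
      have h3 := hle _ hP
      have h4 : N (fun s t => (4/3 : ℂ) * a' s t) = 4/3 * N a' := by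
        simp only [N]
        have : ∑ s ∈ E, ∑ t ∈ F, m s t * ((4/3 : ℂ) * a' s t) =
          (4/3 : ℂ) * ∑ s ∈ E, ∑ t ∈ F, m s t * a' s t := by
          simp only [Finset.mul_sum]
          refine Finset.sum_congr rfl fun s _ => Finset.sum_congr rfl fun t _ => ?_
          ring
        rw [this, norm_mul]; norm_num
      linarith
    have hsplit : ∑ s ∈ E, ∑ t ∈ F, m s t * a s t = (Fintype.card Ω : ℂ)⁻¹ * (∑ ω,
        ∑ s ∈ E, ∑ t ∈ F, star (ε ω (s * t)) * m s t * inner ℂ (e t) (A ω (e s))) +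
        ∑ s ∈ E, ∑ t ∈ F, m s t * a' s t := by
      rw [Finset.sum_comm (s := Finset.univ)]
      simp_rw [Finset.sum_comm (s := Finset.univ), Finset.mul_sum, ← Finset.sum_add_distrib]
      refine Finset.sum_congr rfl fun s _ => Finset.sum_congr rfl fun t _ => ?_
      simp only [a', z]
      rw [← Finset.mul_sum]
      have : ∀ ω, star (ε ω (s * t)) * (ε ω (s * t) * a s t - inner ℂ (e t) (A ω (e s))) =
        a s t - star (ε ω (s * t)) * inner ℂ (e t) (A ω (e s)) := by
        intro ω; rw [mul_sub, ← mul_assoc, hεε, one_mul]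
      simp only [this, Finset.sum_sub_distrib]
      have h5 : ∑ ω, star (ε ω (s * t)) * m s t * inner ℂ (e t) (A ω (e s)) =
        m s t * ∑ ω, star (ε ω (s * t)) * inner ℂ (e t) (A ω (e s)) := by
        rw [Finset.mul_sum]
        exact Finset.sum_congr rfl fun ω _ => by ring
      rw [h5]
      simp
      field_simp
      ring
    have hfirst : ‖(Fintype.card Ω : ℂ)⁻¹ * (∑ ω,
        ∑ s ∈ E, ∑ t ∈ F, star (ε ω (s * t)) * m s t * inner ℂ (e t) (A ω (e s)))‖ ≤ K * (1/2) := by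
      rw [norm_mul, norm_inv, Complex.norm_natCast, inv_mul_le_iff₀ hcard]
      refine (norm_sum_le _ _).trans ?_
      refine (Finset.sum_le_sum (g := fun _ => K * (1/2)) fun ω _ => ?_).trans (by simp)
      refine (hm (fun x => star (ε ω x)) (by simp [hε]) (A ω)).trans ?_
      gcongr
      exact hA ω
    simp only [N] at hN' ⊢
    rw [hsplit]
    exact (norm_add_le _ _).trans (add_le_add hfirst hN')
  have hne : (N '' {a | P a}).Nonempty := ⟨_, 0, by simp [P], rfl⟩
  have hb : β ≤ K * (1/2) + 3/4 * β := by
    refine csSup_le hne ?_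
    rintro _ ⟨a, ha, rfl⟩
    exact step a ha
  have := hle a ⟨h1, h2⟩
  simp only [N] at this
  linarith

theorem aux_schur {G H : Type*} [NormedAddCommGroup H] [InnerProductSpace ℂ H]
    (e : G → H) (he : Orthonormal ℂ e) (E F : Finset G) (B : H →L[ℂ] H) (ξ η : G → ℝ) (X Y M : ℝ)
    (hX : ∑ s ∈ E, ξ s ^ 2 ≤ X ^ 2) (hY : ∑ t ∈ F, η t ^ 2 ≤ Y ^ 2) (hX0 : 0 ≤ X) (hY0 : 0 ≤ Y)
    (hB : ‖B‖ ≤ M) :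
    ‖∑ s ∈ E, ∑ t ∈ F, ((ξ s : ℂ) * η t) * inner ℂ (e t) (B (e s))‖ ≤ X * Y * M := by
  have hnorm : ∀ (S : Finset G) (c : G → ℝ), ‖∑ s ∈ S, (c s : ℂ) • e s‖ ^ 2 = ∑ s ∈ S, (c s) ^ 2 := by
    intro S c
    have h1 := inner_self_eq_norm_sq_to_K (𝕜 := ℂ) (∑ s ∈ S, (c s : ℂ) • e s)
    rw [he.inner_sum] at h1
    apply Complex.ofReal_injective
    push_cast
    refine Eq.trans h1.symm (Finset.sum_congr rfl fun s _ => ?_)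
    simp [sq]
  have h1 : ∑ s ∈ E, ∑ t ∈ F, ((ξ s : ℂ) * η t) * inner ℂ (e t) (B (e s)) =
      inner ℂ (∑ t ∈ F, (η t : ℂ) • e t) (B (∑ s ∈ E, (ξ s : ℂ) • e s)) := by
    simp only [map_sum, map_smul, sum_inner, inner_sum, inner_smul_left, inner_smul_right]
    refine Finset.sum_congr rfl fun s _ => ?_
    rw [Finset.mul_sum]
    refine Finset.sum_congr rfl fun t _ => ?_
    simp; ring
  rw [h1]
  have hx : ‖∑ s ∈ E, (ξ s : ℂ) • e s‖ ≤ X := by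
    refine abs_le_of_sq_le_sq' ?_ hX0 |>.2
    rw [hnorm]; exact hX
  have hy : ‖∑ s ∈ F, (η s : ℂ) • e s‖ ≤ Y := by
    refine abs_le_of_sq_le_sq' ?_ hY0 |>.2
    rw [hnorm]; exact hY
  have hM : 0 ≤ M := (norm_nonneg _).trans hB
  calc _ ≤ _ := norm_inner_le_norm _ _
    _ ≤ ‖∑ s ∈ F, (η s : ℂ) • e s‖ * (‖B‖ * ‖∑ s ∈ E, (ξ s : ℂ) • e s‖) := by
        gcongr; exact B.le_opNorm _
    _ ≤ Y * (M * X) := by gcongr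
    _ = _ := by ring

theorem aux_degen {G : Type*} [Group G] (φ : G → ℂ) (C : ℝ) (hC : 0 ≤ C)
    (h : ∀ ε : G → ℂ, (∀ x, ‖ε x‖ ≤ 1) →
      IsSchurMultiplier (fun p : G × G => ε (p.1 * p.2) * φ (p.1 * p.2)) C)
    (E F : Finset G) (hne : E.Nonempty ∨ F.Nonempty) :
    (∃ s ∈ E, ∑ t ∈ F, ‖φ (s * t)‖ ^ 2 ≤ (4 * C) ^ 2) ∨
    (∃ t ∈ F, ∑ s ∈ E, ‖φ (s * t)‖ ^ 2 ≤ (4 * C) ^ 2) := by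
  letI : DecidableEq G := Classical.decEq G
  by_contra hcon
  push Not at hcon
  obtain ⟨hr, hc⟩ := hcon
  set r : G → ℝ := fun s => ∑ t ∈ F, ‖φ (s * t)‖ ^ 2 with hrd
  set c : G → ℝ := fun t => ∑ s ∈ E, ‖φ (s * t)‖ ^ 2 with hcd
  set W : ℝ := ∑ s ∈ E, ∑ t ∈ F, ‖φ (s * t)‖ ^ 2 with hW
  have hr0 : ∀ s, 0 ≤ r s := fun s => Finset.sum_nonneg fun _ _ => by positivity
  have hc0 : ∀ s, 0 ≤ c s := fun s => Finset.sum_nonneg fun _ _ => by positivity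
  have hW1 : W = ∑ s ∈ E, r s := rfl
  have hW2 : W = ∑ t ∈ F, c t := Finset.sum_comm
  have hrp : ∀ s ∈ E, 0 < r s := fun s hs => lt_of_le_of_lt (by positivity) (hr s hs)
  have hcp : ∀ s ∈ F, 0 < c s := fun s hs => lt_of_le_of_lt (by positivity) (hc s hs)
  have hWpos : 0 < W := by
    rcases hne with hE | hF
    · rw [hW1]; exact Finset.sum_pos hrp hE
    · rw [hW2]; exact Finset.sum_pos hcp hF
  let e : G → lp (fun _ : G => ℂ) 2 := fun s => lp.single 2 s (1 : ℂ)
  have he : Orthonormal ℂ e := by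
    rw [orthonormal_iff_ite]
    intro i j
    simp only [e]
    rw [lp.inner_single_left, lp.coeFn_single]
    by_cases hij : i = j
    · subst hij; simp
    · simp [hij, Pi.single_apply]
  have hsq : √W ^ 2 = W := Real.sq_sqrt hWpos.le
  have key := aux_main e he E F (fun s t => φ (s * t) * ((√(r s) : ℝ) * (√(c t) : ℝ) : ℂ)) (C * W) (by
    intro ε hε A
    obtain ⟨B, hB1, hB2⟩ := h ε hε A
    have := aux_schur e he E F B (fun s => √(r s)) (fun t => √(c t)) (√W) (√W) (C * ‖A‖)
      (by simp only [Real.sq_sqrt (hr0 _), hsq]; exact hW1.ge)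
      (by simp only [Real.sq_sqrt (hc0 _), hsq]; exact hW2.ge) (by positivity) (by positivity) hB2
    calc _ = ‖∑ s ∈ E, ∑ t ∈ F, ((√(r s) : ℂ) * √(c t)) * inner ℂ (e t) (B (e s))‖ := by
          congr 1
          refine Finset.sum_congr rfl fun s _ => Finset.sum_congr rfl fun t _ => ?_
          have := hB1 s t
          simp only [e]
          erw [this]
          ring
      _ ≤ _ := this
      _ = _ := by rw [← sq, hsq]; ring) (by positivity)
    (fun s t => star (φ (s * t)) * ((√(max (r s) (c t)) : ℝ) : ℂ)⁻¹) (by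
      intro s hs
      have : ∀ t ∈ F, ‖star (φ (s * t)) * ((√(max (r s) (c t)) : ℝ) : ℂ)⁻¹‖ ^ 2 ≤
          ‖φ (s * t)‖ ^ 2 * (r s)⁻¹ := by
        intro t ht
        rw [norm_mul, norm_star, norm_inv, Complex.norm_real, Real.norm_of_nonneg (by positivity),
          mul_pow, inv_pow, Real.sq_sqrt (le_max_of_le_left (hr0 s))]
        have := hrp s hs
        gcongr
        exact le_max_left _ _
      refine (Finset.sum_le_sum this).trans ?_
      rw [← Finset.sum_mul]
      exact (mul_inv_cancel₀ (hrp s hs).ne').le) (by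
      intro t ht
      have : ∀ s ∈ E, ‖star (φ (s * t)) * ((√(max (r s) (c t)) : ℝ) : ℂ)⁻¹‖ ^ 2 ≤
          ‖φ (s * t)‖ ^ 2 * (c t)⁻¹ := by
        intro s hs
        rw [norm_mul, norm_star, norm_inv, Complex.norm_real, Real.norm_of_nonneg (by positivity),
          mul_pow, inv_pow, Real.sq_sqrt (le_max_of_le_left (hr0 s))]
        have := hcp t ht
        gcongr
        exact le_max_right _ _
      refine (Finset.sum_le_sum this).trans ?_
      rw [← Finset.sum_mul]
      exact (mul_inv_cancel₀ (hcp t ht).ne').le)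
  have hterm : ∀ s ∈ E, ∀ t ∈ F, φ (s * t) * ((√(r s) : ℝ) * (√(c t) : ℝ) : ℂ) *
      (star (φ (s * t)) * ((√(max (r s) (c t)) : ℝ) : ℂ)⁻¹) =
      ((‖φ (s * t)‖ ^ 2 * √(min (r s) (c t)) : ℝ) : ℂ) := by
    intro s hs t ht
    have hmx : 0 < max (r s) (c t) := lt_max_of_lt_left (hrp s hs)
    have h1 : √(r s) * √(c t) = √(min (r s) (c t)) * √(max (r s) (c t)) := by
      rw [← Real.sqrt_mul (hr0 s), ← Real.sqrt_mul (le_min (hr0 s) (hc0 t)), min_mul_max]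
    have h2 : √(max (r s) (c t)) ≠ 0 := (Real.sqrt_pos.mpr hmx).ne'
    have h2' : ((√(max (r s) (c t)) : ℝ) : ℂ) ≠ 0 := by exact_mod_cast h2
    have h3 : φ (s * t) * star (φ (s * t)) = ((‖φ (s * t)‖ ^ 2 : ℝ) : ℂ) := by
      simp [Complex.mul_conj']
    have h1' : ((√(r s) : ℝ) * (√(c t) : ℝ) : ℂ) =
      ((√(min (r s) (c t)) : ℝ) : ℂ) * ((√(max (r s) (c t)) : ℝ) : ℂ) := by exact_mod_cast h1
    rw [h1', Complex.ofReal_mul, ← h3]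
    field_simp
  rw [Finset.sum_congr rfl fun s hs => Finset.sum_congr rfl fun t ht => hterm s hs t ht] at key
  simp only [← Complex.ofReal_sum] at key
  rw [Complex.norm_real, Real.norm_of_nonneg
    (Finset.sum_nonneg fun _ _ => Finset.sum_nonneg fun _ _ => by positivity)] at key
  have hlow : 4 * C * W ≤ ∑ s ∈ E, ∑ t ∈ F, ‖φ (s * t)‖ ^ 2 * √(min (r s) (c t)) := by
    rw [hW, Finset.mul_sum]
    refine Finset.sum_le_sum fun s hs => ?_
    rw [Finset.mul_sum]
    refine Finset.sum_le_sum fun t ht => ?_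
    rw [mul_comm]
    gcongr
    exact Real.le_sqrt_of_sq_le (le_min (hr s hs).le (hc t ht).le)
  have hC0 : C = 0 := by
    by_contra hne
    have : 0 < C := lt_of_le_of_ne hC (Ne.symm hne)
    nlinarith [mul_pos this hWpos]
  rw [hC0] at key
  have hpos : ∀ s ∈ E, ∀ t ∈ F, ‖φ (s * t)‖ ^ 2 = 0 := by
    intro s hs t ht
    have hn : ∀ s ∈ E, 0 ≤ ∑ t ∈ F, ‖φ (s * t)‖ ^ 2 * √(min (r s) (c t)) :=
      fun s _ => Finset.sum_nonneg fun _ _ => by positivity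
    have h1 := (Finset.sum_eq_zero_iff_of_nonneg hn).mp
      (le_antisymm (by simpa using key) (Finset.sum_nonneg hn)) s hs
    have h2 := (Finset.sum_eq_zero_iff_of_nonneg (fun t _ => by positivity)).mp h1 t ht
    rcases mul_eq_zero.mp h2 with h3 | h3
    · exact h3
    · exact absurd h3 (Real.sqrt_pos.mpr (lt_min (hrp s hs) (hcp t ht))).ne'
  exact hWpos.ne' (Finset.sum_eq_zero fun s hs => Finset.sum_eq_zero fun t ht => hpos s hs t ht)

/-- if for every `ε : G → ℂ` with `|ε| ≤ 1` the kernel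
`(s,t) ↦ ε(st)·φ(st)` is a Schur multiplier of norm at most `C`, then there is a disjoint
partition `G × G = Γ₁ ∪ Γ₂` with `sup_s Σ_{t:(s,t)∈Γ₁} |φ(st)|² ≤ (4C)²` and
`sup_t Σ_{s:(s,t)∈Γ₂} |φ(st)|² ≤ (4C)²`. -/
theorem stmt_6 {G : Type*} [Group G] (φ : G → ℂ) (C : ℝ) (hC : 0 ≤ C)
    (h : ∀ ε : G → ℂ, (∀ x, ‖ε x‖ ≤ 1) →
      IsSchurMultiplier (fun p : G × G => ε (p.1 * p.2) * φ (p.1 * p.2)) C) :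
    ∃ Γ₁ Γ₂ : Set (G × G), Γ₁ ∪ Γ₂ = Set.univ ∧ Disjoint Γ₁ Γ₂ ∧
      (∀ s : G, (∑' t : G, Γ₁.indicator (fun p => (‖φ (p.1 * p.2)‖₊ : ℝ≥0∞) ^ 2) (s, t))
          ≤ ENNReal.ofReal ((4 * C) ^ 2)) ∧
      (∀ t : G, (∑' s : G, Γ₂.indicator (fun p => (‖φ (p.1 * p.2)‖₊ : ℝ≥0∞) ^ 2) (s, t))
          ≤ ENNReal.ofReal ((4 * C) ^ 2)) := by
  classical
  obtain ⟨Γ, h1, h2⟩ := aux_cpt (fun s t => ‖φ (s * t)‖ ^ 2) ((4 * C) ^ 2)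
    (aux_degen φ C hC h) (fun _ _ => by positivity)
  have hen : ∀ x : G, (‖φ x‖₊ : ℝ≥0∞) ^ 2 = ENNReal.ofReal (‖φ x‖ ^ 2) := by
    intro x
    rw [ENNReal.ofReal_pow (norm_nonneg _), ofReal_norm_eq_enorm, enorm_eq_nnnorm]
  refine ⟨{p | Γ p.1 p.2}, {p | Γ p.1 p.2}ᶜ, Set.union_compl_self _, disjoint_compl_right, ?_, ?_⟩
  · intro s
    rw [ENNReal.tsum_eq_iSup_sum]
    refine iSup_le fun T => ?_
    refine le_trans (le_of_eq ?_) (ENNReal.ofReal_le_ofReal (h1 s T))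
    rw [ENNReal.ofReal_sum_of_nonneg (fun t _ => by split_ifs <;> positivity)]
    refine Finset.sum_congr rfl fun t _ => ?_
    by_cases hh : Γ s t <;> simp [Set.indicator, hh, hen]
  · intro t
    rw [ENNReal.tsum_eq_iSup_sum]
    refine iSup_le fun T => ?_
    refine le_trans (le_of_eq ?_) (ENNReal.ofReal_le_ofReal (h2 t T))
    rw [ENNReal.ofReal_sum_of_nonneg (fun t _ => by split_ifs <;> positivity)]
    refine Finset.sum_congr rfl fun s _ => ?_
    by_cases hh : Γ s t <;> simp [Set.indicator, hh, hen]
end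
end

section
/- Let S and T be sets, let ψ : S × T → ℂ, and suppose there is a constant C such that for every function ε : S × T → ℂ with |ε(s,t)| ≤ 1 for all (s,t), the pointwise product (s,t) ↦ ε(s,t)·ψ(s,t) is a Schur multiplier of norm at most C. Then there is a partition S × T = Γ₁ ∪ Γ₂ (disjoint) such that sup_{s∈S} Σ_{t : (s,t)∈Γ₁} |ψ(s,t)|² ≤ (4C)² and sup_{t∈T} Σ_{s : (s,t)∈Γ₂} |ψ(s,t)|² ≤ (4C)². -/
open scoped ENNReal NNReal
open MeasureTheory ContinuousLinearMap

noncomputable section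

open Matrix in
lemma aux_norm {m n : Type*} [Fintype m] [Fintype n] [DecidableEq m] [DecidableEq n]
    (X : Matrix m n ℝ) (F : Matrix m n ℝ) (hF : F * (1 + Xᵀ * X) = X)
    (hu : IsUnit (1 + Xᵀ * X)) (z : n → ℝ) :
    (F *ᵥ z) ⬝ᵥ (F *ᵥ z) ≤ 1 / 4 * (z ⬝ᵥ z) := by
  obtain ⟨y, rfl⟩ : ∃ y, (1 + Xᵀ * X) *ᵥ y = z := by
    obtain ⟨U, hU⟩ := hu
    refine ⟨(U⁻¹ : (Matrix n n ℝ)ˣ).1 *ᵥ z, ?_⟩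
    rw [← hU, Matrix.mulVec_mulVec, Units.mul_inv, Matrix.one_mulVec]
  rw [Matrix.mulVec_mulVec, hF, Matrix.add_mulVec, Matrix.one_mulVec, ← Matrix.mulVec_mulVec]
  set g := Xᵀ *ᵥ (X *ᵥ y) with hg
  have h1 : (X *ᵥ y) ⬝ᵥ (X *ᵥ y) = y ⬝ᵥ g := by
    rw [hg, Matrix.dotProduct_mulVec y, Matrix.vecMul_transpose]
  have h2 : 0 ≤ (y - g) ⬝ᵥ (y - g) := by
    simp only [dotProduct]; exact Finset.sum_nonneg fun i _ => mul_self_nonneg _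
  rw [h1]
  simp only [sub_dotProduct, dotProduct_sub, add_dotProduct, dotProduct_add] at h2 ⊢
  rw [dotProduct_comm g y] at h2 ⊢
  linarith

open Matrix in
lemma aux_unit {m n : Type*} [Fintype m] [Fintype n] [DecidableEq m] [DecidableEq n]
    (X : Matrix m n ℝ) : IsUnit (1 + Xᵀ * X) := by
  have := (Matrix.PosDef.one (n := n) (R := ℝ)).add_posSemidef
    (Matrix.posSemidef_conjTranspose_mul_self X)
  rw [Matrix.conjTranspose_eq_transpose_of_trivial] at this
  exact this.isUnit

open Matrix in
lemma aux_res {m n : Type*} [Fintype m] [Fintype n] [DecidableEq m] [DecidableEq n]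
    (X : Matrix m n ℝ) : ∃ F : Matrix m n ℝ,
      (∀ z, (F *ᵥ z) ⬝ᵥ (F *ᵥ z) ≤ 1 / 4 * (z ⬝ᵥ z)) ∧
      (∀ z, (Fᵀ *ᵥ z) ⬝ᵥ (Fᵀ *ᵥ z) ≤ 1 / 4 * (z ⬝ᵥ z)) ∧
      X - F = F * (Xᵀ * X) ∧ (X - F)ᵀ = Fᵀ * (X * Xᵀ) := by
  obtain ⟨U, hU⟩ := aux_unit X
  obtain ⟨V, hV⟩ := aux_unit Xᵀ
  rw [Matrix.transpose_transpose] at hV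
  have hF1 : (X * (U⁻¹ : (Matrix n n ℝ)ˣ).1) * (1 + Xᵀ * X) = X := by
    rw [← hU, Matrix.mul_assoc, Units.inv_mul, Matrix.mul_one]
  have hc : V.1 * X = X * U.1 := by
    rw [hU, hV, Matrix.add_mul, Matrix.mul_add, Matrix.one_mul, Matrix.mul_one, Matrix.mul_assoc]
  have hF2 : (1 + X * Xᵀ) * (X * (U⁻¹ : (Matrix n n ℝ)ˣ).1) = X := by
    rw [← hV, ← Matrix.mul_assoc, hc, Matrix.mul_assoc, Units.mul_inv, Matrix.mul_one]
  set F := X * (U⁻¹ : (Matrix n n ℝ)ˣ).1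
  have hF3 : Fᵀ * (1 + (Xᵀ)ᵀ * Xᵀ) = Xᵀ := by
    conv_rhs => rw [← hF2]
    simp [Matrix.transpose_mul]
  refine ⟨F, aux_norm X F hF1 ⟨U, hU⟩, aux_norm Xᵀ Fᵀ hF3 (aux_unit Xᵀ), ?_, ?_⟩
  · nth_rw 1 [← hF1]
    rw [Matrix.mul_add, Matrix.mul_one]; abel
  · rw [Matrix.transpose_sub]
    nth_rw 1 [← hF3]
    rw [Matrix.mul_add, Matrix.mul_one, Matrix.transpose_transpose]; abel

/-- sign -/
def sg (e : ℤˣ) : ℝ := ((e : ℤ) : ℝ)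
lemma sg_sq (e : ℤˣ) : sg e * sg e = 1 := by
  unfold sg; rcases Int.units_eq_one_or e with h | h <;> simp [h]
lemma sg_neg (e : ℤˣ) : sg (-e) = - sg e := by simp [sg]

lemma aux_orth_s7 {m n : Type*} [Fintype m] [Fintype n] [DecidableEq m] [DecidableEq n]
    (s s' : m) (t t' : n) (hs : s ≠ s') (ht : t' ≠ t) :
    ∑ ω : m → n → ℤˣ, (sg (ω s t) * sg (ω s t')) * (sg (ω s' t) * sg (ω s' t')) = 0 := by
  set f : (m → n → ℤˣ) → ℝ := fun ω => (sg (ω s t) * sg (ω s t')) * (sg (ω s' t) * sg (ω s' t'))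
  let e : m → n → ℤˣ := Pi.mulSingle s (Pi.mulSingle t (-1))
  have h1 : ∑ ω, f (e * ω) = ∑ ω, f ω := Equiv.sum_comp (Equiv.mulLeft e) f
  have h2 : ∀ ω, f (e * ω) = - f ω := by
    intro ω
    simp [f, e, Pi.mul_apply, Pi.mulSingle_eq_of_ne hs.symm, Pi.mulSingle_eq_of_ne ht, sg_neg]
  simp only [h2, Finset.sum_neg_distrib] at h1
  change ∑ ω, f ω = 0
  linarith

lemma aux_moment {m n : Type*} [Fintype m] [Fintype n] [DecidableEq m] [DecidableEq n]
    (x : m → n → ℝ) (hr : ∀ s, ∑ t, x s t ^ 2 ≤ 1) (hc : ∀ t, ∑ s, x s t ^ 2 ≤ 1) (t : n) :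
    ∑ ω : m → n → ℤˣ, ∑ t', (∑ s, (sg (ω s t') * x s t') * (sg (ω s t) * x s t)) ^ 2
      ≤ 2 * (Fintype.card (m → n → ℤˣ) : ℝ) := by
  set N := (Fintype.card (m → n → ℤˣ) : ℝ) with hN
  have hN0 : 0 ≤ N := by positivity
  have key : ∀ t', ∑ ω : m → n → ℤˣ, (∑ s, (sg (ω s t') * x s t') * (sg (ω s t) * x s t)) ^ 2
      ≤ N * ((if t' = t then 1 else 0) + ∑ s, x s t ^ 2 * x s t' ^ 2) := by
    intro t'
    by_cases ht : t' = t
    · subst ht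
      have : ∀ ω : m → n → ℤˣ, (∑ s, (sg (ω s t') * x s t') * (sg (ω s t') * x s t')) ^ 2 ≤ 1 := by
        intro ω
        have : ∀ s, (sg (ω s t') * x s t') * (sg (ω s t') * x s t') = x s t' ^ 2 := by
          intro s; rw [mul_mul_mul_comm, sg_sq, one_mul, sq]
        simp only [this]
        exact pow_le_one₀ (Finset.sum_nonneg fun _ _ => sq_nonneg _) (hc t')
      calc _ ≤ ∑ ω : m → n → ℤˣ, (1:ℝ) := Finset.sum_le_sum fun ω _ => this ω
        _ = N * 1 := by simp [hN]
        _ ≤ _ := by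
          gcongr
          simp only [if_true]
          have : 0 ≤ ∑ s, x s t' ^ 2 * x s t' ^ 2 := Finset.sum_nonneg fun _ _ => by positivity
          linarith
    · simp only [ht, if_false, zero_add]
      apply le_of_eq
      calc _ = ∑ ω : m → n → ℤˣ, ∑ s, ∑ s', (x s t * x s t' * (x s' t * x s' t')) *
              ((sg (ω s t) * sg (ω s t')) * (sg (ω s' t) * sg (ω s' t'))) := by
            refine Finset.sum_congr rfl fun ω _ => ?_
            rw [sq, Finset.sum_mul_sum]
            refine Finset.sum_congr rfl fun s _ => Finset.sum_congr rfl fun s' _ => by ring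
        _ = ∑ s, ∑ s', (x s t * x s t' * (x s' t * x s' t')) * ∑ ω : m → n → ℤˣ,
              ((sg (ω s t) * sg (ω s t')) * (sg (ω s' t) * sg (ω s' t'))) := by
            rw [Finset.sum_comm]
            refine Finset.sum_congr rfl fun s _ => ?_
            rw [Finset.sum_comm]
            refine Finset.sum_congr rfl fun s' _ => ?_
            rw [Finset.mul_sum]
        _ = ∑ s, x s t ^ 2 * x s t' ^ 2 * N := by
            refine Finset.sum_congr rfl fun s _ => ?_
            rw [Finset.sum_eq_single s]
            · have : ∀ ω : m → n → ℤˣ,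
                  ((sg (ω s t) * sg (ω s t')) * (sg (ω s t) * sg (ω s t'))) = 1 := by
                intro ω; rw [mul_mul_mul_comm, sg_sq, sg_sq, one_mul]
              simp only [this]
              simp only [Finset.sum_const, nsmul_eq_mul, Finset.card_univ, mul_one, ← hN]
              ring
            · intro s' _ hs'
              rw [aux_orth_s7 s s' t t' hs'.symm ht, mul_zero]
            · simp
        _ = _ := by rw [← Finset.sum_mul, mul_comm]
  rw [Finset.sum_comm]
  calc _ ≤ ∑ t', N * ((if t' = t then 1 else 0) + ∑ s, x s t ^ 2 * x s t' ^ 2) :=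
        Finset.sum_le_sum fun t' _ => key t'
    _ = N * (1 + ∑ s, x s t ^ 2 * ∑ t', x s t' ^ 2) := by
        rw [← Finset.mul_sum, Finset.sum_add_distrib, Finset.sum_comm]
        simp [Finset.mul_sum]
    _ ≤ N * (1 + ∑ s, x s t ^ 2 * 1) := by
        gcongr with s; exact hr s
    _ ≤ N * (1 + 1) := by
        gcongr; simpa using hc t
    _ = 2 * N := by ring

open Matrix in
lemma aux_step {m n : Type*} [Fintype m] [Fintype n] [DecidableEq m] [DecidableEq n]
    (w : m → n → ℝ) (hw : ∀ s t, 0 ≤ w s t) (L : ℝ)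
    (H : ∀ F : Matrix m n ℝ, (∀ z, (Fᵀ *ᵥ z) ⬝ᵥ (Fᵀ *ᵥ z) ≤ 1 / 4 * (z ⬝ᵥ z)) →
      ∑ s, ∑ t, w s t * |F s t| ≤ L)
    (x : m → n → ℝ) (hr : ∀ s, ∑ t, x s t ^ 2 ≤ 1) (hc : ∀ t, ∑ s, x s t ^ 2 ≤ 1) :
    ∃ y : m → n → ℝ, (∀ s, ∑ t, y s t ^ 2 ≤ 1) ∧ (∀ t, ∑ s, y s t ^ 2 ≤ 1) ∧
      ∑ s, ∑ t, w s t * x s t ≤ L + 3 / 4 * ∑ s, ∑ t, w s t * y s t := by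
  set N := (Fintype.card (m → n → ℤˣ) : ℝ) with hN
  have hN0 : 0 < N := by rw [hN]; exact_mod_cast Fintype.card_pos
  let X : (m → n → ℤˣ) → Matrix m n ℝ := fun ω => Matrix.of fun s t => sg (ω s t) * x s t
  choose F hF1 hF2 hF3 hF4 using fun ω => aux_res (X ω)
  let R : (m → n → ℤˣ) → Matrix m n ℝ := fun ω => X ω - F ω
  have hcol : ∀ t, ∑ ω, ∑ s, R ω s t ^ 2 ≤ N / 2 := by
    intro t
    have h1 : ∀ ω, ∑ s, R ω s t ^ 2 ≤
        1 / 4 * ∑ t', (∑ s, (sg (ω s t') * x s t') * (sg (ω s t) * x s t)) ^ 2 := by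
      intro ω
      have := hF1 ω (((X ω)ᵀ * X ω) *ᵥ Pi.single t 1)
      rw [Matrix.mulVec_mulVec, ← hF3] at this
      simpa [dotProduct, R, X, sq, Matrix.mul_apply] using this
    calc _ ≤ ∑ ω : m → n → ℤˣ, 
        1 / 4 * ∑ t', (∑ s, (sg (ω s t') * x s t') * (sg (ω s t) * x s t)) ^ 2 :=
          Finset.sum_le_sum fun ω _ => h1 ω
      _ ≤ 1 / 4 * (2 * N) := by
          rw [← Finset.mul_sum]; gcongr; exact aux_moment x hr hc t
      _ = _ := by ring
  have hrow : ∀ s, ∑ ω, ∑ t, R ω s t ^ 2 ≤ N / 2 := by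
    intro s
    have h1 : ∀ ω, ∑ t, R ω s t ^ 2 ≤
        1 / 4 * ∑ s', (∑ t, (sg (ω s' t) * x s' t) * (sg (ω s t) * x s t)) ^ 2 := by
      intro ω
      have := hF2 ω ((X ω * (X ω)ᵀ) *ᵥ Pi.single s 1)
      rw [Matrix.mulVec_mulVec, ← hF4] at this
      simpa [dotProduct, R, X, sq, Matrix.mul_apply] using this
    have h2 := aux_moment (fun t s => x s t) hc hr s
    rw [← Fintype.card_congr (Equiv.piComm (fun (_ : m) (_ : n) => ℤˣ)),
      ← Equiv.sum_comp (Equiv.piComm (fun (_ : m) (_ : n) => ℤˣ))] at h2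
    simp only [Equiv.piComm_apply, Function.swap] at h2
    calc _ ≤ ∑ ω : m → n → ℤˣ, 
        1 / 4 * ∑ s', (∑ t, (sg (ω s' t) * x s' t) * (sg (ω s t) * x s t)) ^ 2 :=
          Finset.sum_le_sum fun ω _ => h1 ω
      _ ≤ 1 / 4 * (2 * N) := by
          rw [← Finset.mul_sum]; gcongr
      _ = _ := by ring
  let y : m → n → ℝ := fun s t => 4 / 3 * (N⁻¹ * ∑ ω, sg (ω s t) * R ω s t)
  have hy : ∀ s t, y s t ^ 2 ≤ 16 / 9 * (N⁻¹ * ∑ ω, R ω s t ^ 2) := by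
    intro s t
    have h1 := sq_sum_le_card_mul_sum_sq (s := (Finset.univ : Finset (m → n → ℤˣ)))
      (f := fun ω => sg (ω s t) * R ω s t)
    have h2 : ∀ ω, (sg (ω s t) * R ω s t) ^ 2 = R ω s t ^ 2 := by
      intro ω; rw [mul_pow, sq (sg _), sg_sq, one_mul]
    simp only [h2, Finset.card_univ, ← hN] at h1
    calc y s t ^ 2 = 16 / 9 * (N⁻¹ * (N⁻¹ * (∑ ω, sg (ω s t) * R ω s t) ^ 2)) := by
          simp only [y]; ring
      _ ≤ 16 / 9 * (N⁻¹ * (N⁻¹ * (N * ∑ ω, R ω s t ^ 2))) := by gcongr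
      _ = _ := by rw [inv_mul_cancel_left₀ hN0.ne']
  refine ⟨y, ?_, ?_, ?_⟩
  · intro s
    calc _ ≤ ∑ t, 16 / 9 * (N⁻¹ * ∑ ω, R ω s t ^ 2) := Finset.sum_le_sum fun t _ => hy s t
      _ = 16 / 9 * (N⁻¹ * ∑ ω, ∑ t, R ω s t ^ 2) := by
        rw [← Finset.mul_sum, ← Finset.mul_sum, Finset.sum_comm]
      _ ≤ 16 / 9 * (N⁻¹ * (N / 2)) := by gcongr; exact hrow s
      _ ≤ 1 := by field_simp; norm_num
  · intro t
    calc _ ≤ ∑ s, 16 / 9 * (N⁻¹ * ∑ ω, R ω s t ^ 2) := Finset.sum_le_sum fun s _ => hy s t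
      _ = 16 / 9 * (N⁻¹ * ∑ ω, ∑ s, R ω s t ^ 2) := by
        rw [← Finset.mul_sum, ← Finset.mul_sum, Finset.sum_comm]
      _ ≤ 16 / 9 * (N⁻¹ * (N / 2)) := by gcongr; exact hcol t
      _ ≤ 1 := by field_simp; norm_num
  · have hx : ∀ s t, x s t = N⁻¹ * ∑ ω, sg (ω s t) * F ω s t + 3 / 4 * y s t := by
      intro s t
      have : ∀ ω, sg (ω s t) * F ω s t + sg (ω s t) * R ω s t = x s t := by
        intro ω
        simp only [R, X, Matrix.sub_apply, Matrix.of_apply]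
        linear_combination (x s t) * sg_sq (ω s t)
      simp only [y]
      have h3 : N * x s t = ∑ ω, sg (ω s t) * F ω s t + ∑ ω, sg (ω s t) * R ω s t := by
        rw [← Finset.sum_add_distrib]; simp [this, hN]
      field_simp
      linarith
    have h5 : ∑ s, ∑ t, w s t * (N⁻¹ * ∑ ω, sg (ω s t) * F ω s t) ≤ L := by
      calc _ ≤ ∑ s, ∑ t, N⁻¹ * ∑ ω, w s t * |F ω s t| := by
            refine Finset.sum_le_sum fun s _ => Finset.sum_le_sum fun t _ => ?_
            rw [mul_left_comm, Finset.mul_sum]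
            gcongr with ω
            · exact hw s t
            · refine (le_abs_self _).trans ?_
              rw [abs_mul]
              have : |sg (ω s t)| = 1 := by
                rcases Int.units_eq_one_or (ω s t) with h | h <;> simp [h, sg]
              rw [this, one_mul]
        _ = N⁻¹ * ∑ ω, ∑ s, ∑ t, w s t * |F ω s t| := by
            simp only [← Finset.mul_sum]
            congr 1
            conv_rhs => rw [Finset.sum_comm]
            refine Finset.sum_congr rfl fun s _ => ?_
            rw [Finset.sum_comm]
            simp only [Finset.mul_sum]
        _ ≤ N⁻¹ * ∑ ω : m → n → ℤˣ, L := by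
            gcongr with ω; exact H _ (hF2 ω)
        _ = L := by rw [Finset.sum_const, nsmul_eq_mul, Finset.card_univ, ← hN, inv_mul_cancel_left₀ hN0.ne']
    calc ∑ s, ∑ t, w s t * x s t = ∑ s, ∑ t, w s t * (N⁻¹ * ∑ ω, sg (ω s t) * F ω s t)
          + 3 / 4 * ∑ s, ∑ t, w s t * y s t := by
          simp only [Finset.mul_sum (a := (3/4:ℝ)), ← Finset.sum_add_distrib]
          refine Finset.sum_congr rfl fun s _ => Finset.sum_congr rfl fun t _ => ?_
          conv_lhs => rw [hx s t]
          ring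
      _ ≤ _ := by gcongr

open Matrix in
lemma aux_core {m n : Type*} [Fintype m] [Fintype n] [DecidableEq m] [DecidableEq n]
    (w : m → n → ℝ) (hw : ∀ s t, 0 ≤ w s t) (L : ℝ)
    (H : ∀ F : Matrix m n ℝ, (∀ z, (Fᵀ *ᵥ z) ⬝ᵥ (Fᵀ *ᵥ z) ≤ 1 / 4 * (z ⬝ᵥ z)) →
      ∑ s, ∑ t, w s t * |F s t| ≤ L)
    (x : m → n → ℝ) (hr : ∀ s, ∑ t, x s t ^ 2 ≤ 1) (hc : ∀ t, ∑ s, x s t ^ 2 ≤ 1) :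
    ∑ s, ∑ t, w s t * x s t ≤ 4 * L := by
  let A : Set ℝ := {r | ∃ x : m → n → ℝ, (∀ s, ∑ t, x s t ^ 2 ≤ 1) ∧ (∀ t, ∑ s, x s t ^ 2 ≤ 1) ∧
    r = ∑ s, ∑ t, w s t * x s t}
  have hb : BddAbove A := by
    refine ⟨∑ s, ∑ t, w s t, ?_⟩
    rintro r ⟨x, hr, -, rfl⟩
    refine Finset.sum_le_sum fun s _ => Finset.sum_le_sum fun t _ => ?_
    have : x s t ≤ 1 := by
      have h1 : x s t ^ 2 ≤ 1 := (Finset.single_le_sum (f := fun t => x s t ^ 2)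
        (fun _ _ => sq_nonneg _) (Finset.mem_univ t)).trans (hr s)
      nlinarith
    nlinarith [hw s t]
  have hx : ∑ s, ∑ t, w s t * x s t ∈ A := ⟨x, hr, hc, rfl⟩
  have hM : sSup A ≤ L + 3 / 4 * sSup A := by
    apply csSup_le ⟨_, hx⟩
    rintro r ⟨x, hr, hc, rfl⟩
    obtain ⟨y, h1, h2, h3⟩ := aux_step w hw L H x hr hc
    have := le_csSup hb (show _ ∈ A from ⟨y, h1, h2, rfl⟩)
    linarith
  have := le_csSup hb hx
  linarith

lemma aux_nsum {T : Type*} [DecidableEq T] (B : Finset T) (c : T → ℂ) :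
    ‖(∑ t ∈ B, lp.single 2 t (c t) : lp (fun _ : T => ℂ) 2)‖ ^ 2 = ∑ t ∈ B, ‖c t‖ ^ 2 := by
  have := lp.norm_sum_single (p := 2) (E := fun _ : T => ℂ) (by norm_num) c B
  norm_num at this
  exact_mod_cast this

lemma aux_op {S T : Type*} [DecidableEq S] [DecidableEq T] (A : Finset S) (B : Finset T)
    (G : S → T → ℝ)
    (hG : ∀ z : S → ℝ, ∑ t ∈ B, (∑ s ∈ A, G s t * z s) ^ 2 ≤ 1 / 4 * ∑ s ∈ A, z s ^ 2) :
    ∃ Op : lp (fun _ : S => ℂ) 2 →L[ℂ] lp (fun _ : T => ℂ) 2, ‖Op‖ ≤ 1 / 2 ∧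
      ∀ s ∈ A, ∀ t ∈ B,
        inner (𝕜 := ℂ) (lp.single 2 t 1) (Op (lp.single 2 s 1)) = (G s t : ℂ) := by
  let Op : lp (fun _ : S => ℂ) 2 →L[ℂ] lp (fun _ : T => ℂ) 2 :=
    ∑ t ∈ B, ContinuousLinearMap.smulRight
      (∑ s ∈ A, (G s t : ℂ) • innerSL ℂ (lp.single 2 s 1 : lp (fun _ : S => ℂ) 2))
      (lp.single 2 t 1 : lp (fun _ : T => ℂ) 2)
  have hOp : ∀ f, Op f = ∑ t ∈ B, lp.single 2 t (∑ s ∈ A, (G s t : ℂ) * f s) := by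
    intro f
    simp only [Op, _root_.sum_apply, ContinuousLinearMap.smulRight_apply,
      _root_.smul_apply, innerSL_apply_apply, lp.inner_single_left]
    refine Finset.sum_congr rfl fun t _ => ?_
    rw [← lp.single_smul]
    simp
  refine ⟨Op, ?_, ?_⟩
  · refine ContinuousLinearMap.opNorm_le_bound _ (by norm_num) fun f => ?_
    refine le_of_sq_le_sq ?_ (by positivity)
    rw [hOp, aux_nsum]
    have h1 := hG fun s => (f s).re
    have h2 := hG fun s => (f s).im
    have h3 : ∀ t, ‖∑ s ∈ A, (G s t : ℂ) * f s‖ ^ 2 =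
        (∑ s ∈ A, G s t * (f s).re) ^ 2 + (∑ s ∈ A, G s t * (f s).im) ^ 2 := by
      intro t
      rw [← Complex.normSq_eq_norm_sq, Complex.normSq_apply]
      simp [sq]
    have h4 : ∑ s ∈ A, ‖f s‖ ^ 2 ≤ ‖f‖ ^ 2 := by
      have := lp.sum_rpow_le_norm_rpow (p := 2) (E := fun _ : S => ℂ) (by norm_num) f A
      norm_num at this
      exact_mod_cast this
    have h5 : ∑ s ∈ A, ‖f s‖ ^ 2 = ∑ s ∈ A, (f s).re ^ 2 + ∑ s ∈ A, (f s).im ^ 2 := by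
      rw [← Finset.sum_add_distrib]
      refine Finset.sum_congr rfl fun s _ => ?_
      rw [← Complex.normSq_eq_norm_sq, Complex.normSq_apply]; ring
    simp only [h3, Finset.sum_add_distrib]
    rw [mul_pow]
    linarith
  · intro s hs t ht
    rw [hOp, inner_sum, Finset.sum_eq_single t]
    · rw [lp.inner_single_left]
      simp [Pi.single_apply, hs]
    · intro t' _ hne
      rw [lp.inner_single_left, lp.single_apply_ne _ _ _ hne.symm, inner_zero_right]
    · exact fun hn => absurd ht hn

lemma aux_sch {S T : Type*} (ψ : S × T → ℂ) (C : ℝ) (hC : 0 ≤ C)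
    (h : ∀ ε : S × T → ℂ, (∀ p, ‖ε p‖ ≤ 1) → IsSchurMultiplier (fun p => ε p * ψ p) C)
    (A : Finset S) (B : Finset T) (G : S → T → ℝ)
    (hG : ∀ z : S → ℝ, ∑ t ∈ B, (∑ s ∈ A, G s t * z s) ^ 2 ≤ 1 / 4 * ∑ s ∈ A, z s ^ 2)
    (u : S → ℝ) (v : T → ℝ) :
    ∑ s ∈ A, ∑ t ∈ B, ‖ψ (s, t)‖ * u s * v t * |G s t| ≤
      C / 2 * (√(∑ s ∈ A, u s ^ 2) * √(∑ t ∈ B, v t ^ 2)) := by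
  letI := Classical.decEq S
  letI := Classical.decEq T
  obtain ⟨Op, hOp, hent⟩ := aux_op A B G hG
  let ε : S × T → ℂ := fun p =>
    ((SignType.sign (G p.1 p.2) : ℝ) : ℂ) * ((starRingEnd ℂ) (ψ p) / (‖ψ p‖ : ℂ))
  have hε : ∀ p, ‖ε p‖ ≤ 1 := by
    intro p
    have h1 : ‖((SignType.sign (G p.1 p.2) : ℝ) : ℂ)‖ ≤ 1 := by
      rcases lt_trichotomy (G p.1 p.2) 0 with h | h | h <;> simp [h]
    have h2 : ‖((starRingEnd ℂ) (ψ p) / (‖ψ p‖ : ℂ))‖ ≤ 1 := by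
      simp [div_self_le_one]
    simp only [ε, norm_mul]
    exact mul_le_one₀ h1 (norm_nonneg _) h2
  have hε2 : ∀ s t, ε (s, t) * ψ (s, t) * (G s t : ℂ) = ((‖ψ (s, t)‖ * |G s t| : ℝ) : ℂ) := by
    intro s t
    have h1 : (starRingEnd ℂ) (ψ (s, t)) / (‖ψ (s, t)‖ : ℂ) * ψ (s, t) = (‖ψ (s, t)‖ : ℂ) := by
      by_cases h0 : ψ (s, t) = 0
      · simp [h0]
      · have : (‖ψ (s, t)‖ : ℂ) ≠ 0 := by simpa using h0
        rw [div_mul_eq_mul_div, div_eq_iff this, Complex.conj_mul', sq]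
    have h2 : ((SignType.sign (G s t) : ℝ) : ℂ) * (G s t : ℂ) = ((|G s t| : ℝ) : ℂ) := by
      rw [← Complex.ofReal_mul, sign_mul_self]
    simp only [ε, Complex.ofReal_mul]
    linear_combination (((SignType.sign (G s t) : ℝ) : ℂ) * (G s t : ℂ)) * h1 +
      (‖ψ (s, t)‖ : ℂ) * h2
  obtain ⟨Bo, hB1, hB2⟩ := h ε hε Op
  have hBn : ‖Bo‖ ≤ C / 2 := by
    refine hB2.trans ?_
    have := mul_le_mul_of_nonneg_left hOp hC
    linarith
  let U : lp (fun _ : S => ℂ) 2 := ∑ s ∈ A, lp.single 2 s (u s : ℂ)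
  let V : lp (fun _ : T => ℂ) 2 := ∑ t ∈ B, lp.single 2 t (v t : ℂ)
  have hU : ‖U‖ = √(∑ s ∈ A, u s ^ 2) := by
    rw [← Real.sqrt_sq (norm_nonneg U), aux_nsum]; simp
  have hV : ‖V‖ = √(∑ t ∈ B, v t ^ 2) := by
    rw [← Real.sqrt_sq (norm_nonneg V), aux_nsum]; simp
  have e1 : ∀ s, (lp.single 2 s (u s : ℂ) : lp (fun _ : S => ℂ) 2) = (u s : ℂ) • lp.single 2 s 1 := by
    intro s; rw [← lp.single_smul]; simp
  have e2 : ∀ t, (lp.single 2 t (v t : ℂ) : lp (fun _ : T => ℂ) 2) = (v t : ℂ) • lp.single 2 t 1 := by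
    intro t; rw [← lp.single_smul]; simp
  have hin : inner ℂ V (Bo U) =
      ((∑ s ∈ A, ∑ t ∈ B, ‖ψ (s, t)‖ * u s * v t * |G s t| : ℝ) : ℂ) := by
    simp only [U, V, e1, e2, map_sum, map_smul, sum_inner, inner_sum, inner_smul_left,
      inner_smul_right, hB1, Complex.ofReal_sum, Complex.conj_ofReal]
    refine Finset.sum_congr rfl fun s hs => ?_
    rw [Finset.mul_sum]
    refine Finset.sum_congr rfl fun t ht => ?_
    rw [hent s hs t ht, hε2]
    push_cast
    ring
  calc _ ≤ ‖inner ℂ V (Bo U)‖ := by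
        rw [hin, Complex.norm_real]; exact le_abs_self _
    _ ≤ ‖V‖ * ‖Bo U‖ := norm_inner_le_norm _ _
    _ ≤ ‖V‖ * (C / 2 * ‖U‖) := by
        gcongr
        exact (Bo.le_opNorm U).trans (by gcongr)
    _ = _ := by rw [hU, hV]; ring

lemma aux_core2 {S T : Type*} (ψ : S × T → ℂ) (C : ℝ) (hC : 0 ≤ C)
    (h : ∀ ε : S × T → ℂ, (∀ p, ‖ε p‖ ≤ 1) → IsSchurMultiplier (fun p => ε p * ψ p) C)
    (A : Finset S) (B : Finset T)
    (u : S → ℝ) (v : T → ℝ) (hu : ∀ s, 0 ≤ u s) (hv : ∀ t, 0 ≤ v t)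
    (x : S → T → ℝ) (hr : ∀ s ∈ A, ∑ t ∈ B, x s t ^ 2 ≤ 1)
    (hc : ∀ t ∈ B, ∑ s ∈ A, x s t ^ 2 ≤ 1) :
    ∑ s ∈ A, ∑ t ∈ B, ‖ψ (s, t)‖ * u s * v t * x s t ≤
      4 * (C / 2 * (√(∑ s ∈ A, u s ^ 2) * √(∑ t ∈ B, v t ^ 2))) := by
  classical
  have := aux_core (m := A) (n := B) (fun s t => ‖ψ (s, t)‖ * u s * v t)
    (fun s t => mul_nonneg (mul_nonneg (norm_nonneg _) (hu _)) (hv _))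
    (C / 2 * (√(∑ s ∈ A, u s ^ 2) * √(∑ t ∈ B, v t ^ 2))) ?_ (fun s t => x s t)
    (fun s => ?_) (fun t => ?_)
  · rw [← Finset.sum_coe_sort A]
    refine le_trans (le_of_eq ?_) this
    refine Finset.sum_congr rfl fun s _ => ?_
    rw [← Finset.sum_coe_sort B]
  · intro F hF
    let G : S → T → ℝ := fun s t => if hh : s ∈ A ∧ t ∈ B then F ⟨s, hh.1⟩ ⟨t, hh.2⟩ else 0
    have hGF : ∀ (s : A) (t : B), G s t = F s t := fun s t => by simp [G]
    have := aux_sch ψ C hC h A B G ?_ u v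
    · rw [← Finset.sum_coe_sort A] at this
      refine le_trans (le_of_eq ?_) this
      refine Finset.sum_congr rfl fun s _ => ?_
      rw [← Finset.sum_coe_sort B]
      refine Finset.sum_congr rfl fun t _ => ?_
      rw [hGF]
    · intro z
      have h1 := hF (fun s => z s)
      rw [← Finset.sum_coe_sort A, ← Finset.sum_coe_sort B]
      refine le_trans (le_of_eq ?_) (h1.trans (le_of_eq ?_))
      · simp only [dotProduct, Matrix.mulVec, Matrix.transpose_apply]
        refine Finset.sum_congr rfl fun t _ => ?_
        rw [← Finset.sum_coe_sort A, sq]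
        simp only [hGF]
      · simp only [dotProduct, sq]
  · rw [Finset.sum_coe_sort B (fun t => x s t ^ 2)]; exact hr s s.2
  · rw [Finset.sum_coe_sort A (fun s => x s t ^ 2)]; exact hc t t.2

lemma aux_light {S T : Type*} (ψ : S × T → ℂ) (C : ℝ) (hC : 0 ≤ C)
    (h : ∀ ε : S × T → ℂ, (∀ p, ‖ε p‖ ≤ 1) → IsSchurMultiplier (fun p => ε p * ψ p) C)
    (A : Finset S) (B : Finset T) (hA : A.Nonempty) (hB : B.Nonempty) :
    (∃ s ∈ A, ∑ t ∈ B, ‖ψ (s, t)‖ ^ 2 ≤ (4 * C) ^ 2) ∨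
    (∃ t ∈ B, ∑ s ∈ A, ‖ψ (s, t)‖ ^ 2 ≤ (4 * C) ^ 2) := by
  by_contra! hcon
  obtain ⟨h1, h2⟩ := hcon
  set r : S → ℝ := fun s => ∑ t ∈ B, ‖ψ (s, t)‖ ^ 2 with hr
  set c : T → ℝ := fun t => ∑ s ∈ A, ‖ψ (s, t)‖ ^ 2 with hc
  have hr0 : ∀ s, 0 ≤ r s := fun s => Finset.sum_nonneg fun _ _ => sq_nonneg _
  have hc0 : ∀ t, 0 ≤ c t := fun s => Finset.sum_nonneg fun _ _ => sq_nonneg _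
  obtain ⟨s0, hs0, hs0'⟩ := Finset.exists_min_image A r hA
  obtain ⟨t0, ht0, ht0'⟩ := Finset.exists_min_image B c hB
  set K := min (r s0) (c t0) with hK
  have hK1 : (4 * C) ^ 2 < K := lt_min (h1 s0 hs0) (h2 t0 ht0)
  have hK0 : 0 < K := lt_of_le_of_lt (sq_nonneg _) hK1
  have hrK : ∀ s ∈ A, K ≤ r s := fun s hs => (min_le_left _ _).trans (hs0' s hs)
  have hcK : ∀ t ∈ B, K ≤ c t := fun t ht => (min_le_right _ _).trans (ht0' t ht)
  set N := ∑ s ∈ A, r s with hN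
  have hN2 : ∑ t ∈ B, c t = N := by simp only [hN, hr, hc]; exact Finset.sum_comm
  have hN0 : 0 < N := Finset.sum_pos (fun s hs => hK0.trans_le (hrK s hs)) hA
  have key := aux_core2 ψ C hC h A B (fun s => √(r s)) (fun t => √(c t))
    (fun s => Real.sqrt_nonneg _) (fun s => Real.sqrt_nonneg _)
    (fun s t => ‖ψ (s, t)‖ / √(max (r s) (c t))) ?_ ?_
  · simp only [Real.sq_sqrt (hr0 _), Real.sq_sqrt (hc0 _), hN2, ← hN, Real.mul_self_sqrt hN0.le]
      at key
    have hlow : √K * N ≤ ∑ s ∈ A, ∑ t ∈ B,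
        ‖ψ (s, t)‖ * √(r s) * √(c t) * (‖ψ (s, t)‖ / √(max (r s) (c t))) := by
      rw [hN, Finset.mul_sum]
      refine Finset.sum_le_sum fun s hs => ?_
      rw [hr, Finset.mul_sum]
      refine Finset.sum_le_sum fun t ht => ?_
      have hm : 0 < max (r s) (c t) := lt_max_of_lt_left (hK0.trans_le (hrK s hs))
      have e : √(r s) * √(c t) = √(min (r s) (c t)) * √(max (r s) (c t)) := by
        rw [← Real.sqrt_mul (hr0 s), ← Real.sqrt_mul (le_min (hr0 s) (hc0 t)), min_mul_max]
      have hm' : √(max (r s) (c t)) ≠ 0 := (Real.sqrt_pos.2 hm).ne'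
      have : ‖ψ (s, t)‖ * √(r s) * √(c t) * (‖ψ (s, t)‖ / √(max (r s) (c t)))
          = √(min (r s) (c t)) * ‖ψ (s, t)‖ ^ 2 := by
        rw [mul_assoc ‖ψ (s, t)‖, e]; field_simp
      rw [this]
      gcongr
      exact le_min (hrK s hs) (hcK t ht)
    have h5 : √K * N ≤ (2 * C) * N := by linarith
    have h6 : √K ≤ 2 * C := le_of_mul_le_mul_right h5 hN0
    have h7 : 4 * C < √K := Real.lt_sqrt_of_sq_lt hK1
    linarith
  · intro s hs
    have hp := hK0.trans_le (hrK s hs)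
    calc _ ≤ ∑ t ∈ B, ‖ψ (s, t)‖ ^ 2 / r s := by
          refine Finset.sum_le_sum fun t _ => ?_
          rw [div_pow, Real.sq_sqrt (le_max_of_le_left (hr0 s))]
          gcongr
          exact le_max_left _ _
      _ = 1 := by rw [← Finset.sum_div]; exact div_self hp.ne'
  · intro t ht
    have hp := hK0.trans_le (hcK t ht)
    calc _ ≤ ∑ s ∈ A, ‖ψ (s, t)‖ ^ 2 / c t := by
          refine Finset.sum_le_sum fun s _ => ?_
          rw [div_pow, Real.sq_sqrt (le_max_of_le_left (hr0 s))]
          gcongr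
          exact le_max_right _ _
      _ = 1 := by rw [← Finset.sum_div]; exact div_self hp.ne'

lemma aux_peel {S T : Type*} (f : S → T → ℝ) (K : ℝ) (hK : 0 ≤ K)
    (H : ∀ (A : Finset S) (B : Finset T), A.Nonempty → B.Nonempty →
      (∃ s ∈ A, ∑ t ∈ B, f s t ≤ K) ∨ (∃ t ∈ B, ∑ s ∈ A, f s t ≤ K)) :
    ∀ (k : ℕ) (A : Finset S) (B : Finset T), A.card + B.card = k →
      ∃ g : S × T → Bool,
        (∀ s ∈ A, ∑ t ∈ B, (if g (s, t) = true then f s t else 0) ≤ K) ∧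
        (∀ t ∈ B, ∑ s ∈ A, (if g (s, t) = false then f s t else 0) ≤ K) := by
  classical
  intro k
  induction k with
  | zero =>
    intro A B h
    have hA : A = ∅ := by rw [← Finset.card_eq_zero]; omega
    have hB : B = ∅ := by rw [← Finset.card_eq_zero]; omega
    subst hA hB
    exact ⟨fun _ => true, by simp, by simp⟩
  | succ k ih =>
    intro A B hk
    rcases A.eq_empty_or_nonempty with rfl | hA
    · exact ⟨fun _ => true, by simp, by simp [hK]⟩
    rcases B.eq_empty_or_nonempty with rfl | hB
    · exact ⟨fun _ => true, by simp [hK], by simp⟩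
    rcases H A B hA hB with ⟨s0, hs0, h0⟩ | ⟨t0, ht0, h0⟩
    · obtain ⟨g, h1, h2⟩ := ih (A.erase s0) B (by
        have := Finset.card_erase_add_one hs0; omega)
      refine ⟨fun p => if p.1 = s0 then true else g p, ?_, ?_⟩
      · intro s hs
        by_cases hss : s = s0
        · subst hss; simpa using h0
        · simpa [hss] using h1 s (Finset.mem_erase.2 ⟨hss, hs⟩)
      · intro t ht
        rw [← Finset.add_sum_erase A _ hs0]
        refine le_trans (le_of_eq ?_) (h2 t ht)
        simp only [if_true, Bool.true_eq_false, if_false, zero_add]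
        refine Finset.sum_congr rfl fun s hs => ?_
        simp [(Finset.mem_erase.1 hs).1]
    · obtain ⟨g, h1, h2⟩ := ih A (B.erase t0) (by
        have := Finset.card_erase_add_one ht0; omega)
      refine ⟨fun p => if p.2 = t0 then false else g p, ?_, ?_⟩
      · intro s hs
        rw [← Finset.add_sum_erase B _ ht0]
        refine le_trans (le_of_eq ?_) (h1 s hs)
        simp only [if_true, Bool.false_eq_true, if_false, zero_add]
        refine Finset.sum_congr rfl fun t ht => ?_
        simp [(Finset.mem_erase.1 ht).1]
      · intro t ht
        by_cases htt : t = t0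
        · subst htt; simpa using h0
        · simpa [htt] using h2 t (Finset.mem_erase.2 ⟨htt, ht⟩)

lemma aux_C {S T : Type*} [Nonempty S] [Nonempty T] (ψ : S × T → ℂ) (C : ℝ)
    (h : IsSchurMultiplier ψ C) : 0 ≤ C := by
  letI := Classical.decEq S
  letI := Classical.decEq T
  obtain ⟨s⟩ := ‹Nonempty S›
  obtain ⟨t⟩ := ‹Nonempty T›
  let Op : lp (fun _ : S => ℂ) 2 →L[ℂ] lp (fun _ : T => ℂ) 2 :=
    ContinuousLinearMap.smulRight (innerSL ℂ (lp.single 2 s 1 : lp (fun _ : S => ℂ) 2))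
      (lp.single 2 t 1 : lp (fun _ : T => ℂ) 2)
  have hOp : 0 < ‖Op‖ := by
    simp [Op, ContinuousLinearMap.norm_smulRight_apply, lp.norm_single]
  obtain ⟨B, -, hB⟩ := h Op
  by_contra! hC
  nlinarith [norm_nonneg B]

/-- if for every `ε : S × T → ℂ` with `|ε| ≤ 1` the product `ε·ψ` is a Schur
multiplier of norm at most `C`, then there is a disjoint partition `S × T = Γ₁ ∪ Γ₂` with
`sup_s Σ_{t:(s,t)∈Γ₁} |ψ(s,t)|² ≤ (4C)²` and `sup_t Σ_{s:(s,t)∈Γ₂} |ψ(s,t)|² ≤ (4C)²`. -/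
theorem stmt_7 {S T : Type*} (ψ : S × T → ℂ) (C : ℝ)
    (h : ∀ ε : S × T → ℂ, (∀ p, ‖ε p‖ ≤ 1) →
      IsSchurMultiplier (fun p => ε p * ψ p) C) :
    ∃ Γ₁ Γ₂ : Set (S × T), Γ₁ ∪ Γ₂ = Set.univ ∧ Disjoint Γ₁ Γ₂ ∧
      (∀ s : S, (∑' t : T, Γ₁.indicator (fun p => (‖ψ p‖₊ : ℝ≥0∞) ^ 2) (s, t))
          ≤ ENNReal.ofReal ((4 * C) ^ 2)) ∧
      (∀ t : T, (∑' s : S, Γ₂.indicator (fun p => (‖ψ p‖₊ : ℝ≥0∞) ^ 2) (s, t))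
          ≤ ENNReal.ofReal ((4 * C) ^ 2)) := by
  classical
  rcases isEmpty_or_nonempty S with hS | hS
  · exact ⟨Set.univ, ∅, by simp, by simp, fun s => (hS.false s).elim, fun t => by simp⟩
  rcases isEmpty_or_nonempty T with hT | hT
  · exact ⟨Set.univ, ∅, by simp, by simp, fun s => by simp, fun t => (hT.false t).elim⟩
  have hC : 0 ≤ C := aux_C _ C (h (fun _ => 0) (by simp))
  have hpeel := aux_peel (fun s t => ‖ψ (s, t)‖ ^ 2) ((4 * C) ^ 2) (sq_nonneg _)
    (fun A B hA hB => aux_light ψ C hC h A B hA hB)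
  choose g hg1 hg2 using fun P : Finset (S × T) =>
    hpeel _ (P.image Prod.fst) (P.image Prod.snd) rfl
  obtain ⟨χ, hχ⟩ := Finset.rado_selection (β := fun _ : S × T => Bool) g
  refine ⟨{p | χ p = true}, {p | χ p = false}, ?_, ?_, ?_, ?_⟩
  · ext p; cases hp : χ p <;> simp [hp]
  · rw [Set.disjoint_left]; intro p hp hp'
    simp only [Set.mem_ofPred_eq] at hp hp'; simp [hp] at hp'
  · intro s
    rw [ENNReal.tsum_eq_iSup_sum]
    refine iSup_le fun B => ?_
    obtain ⟨P, hP, hP'⟩ := hχ (B.image fun t => (s, t))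
    rcases B.eq_empty_or_nonempty with rfl | ⟨t1, ht1⟩
    · simp
    have hsub : B ⊆ P.image Prod.snd := fun t ht =>
      Finset.mem_image.2 ⟨(s, t), hP (Finset.mem_image_of_mem _ ht), rfl⟩
    have hs : s ∈ P.image Prod.fst :=
      Finset.mem_image.2 ⟨(s, t1), hP (Finset.mem_image_of_mem _ ht1), rfl⟩
    have h1 : ∑ t ∈ B, (if χ (s, t) = true then ‖ψ (s, t)‖ ^ 2 else 0) ≤ (4 * C) ^ 2 := by
      refine le_trans (le_of_eq ?_) ((Finset.sum_le_sum_of_subset_of_nonneg hsub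
        (fun t _ _ => ?_)).trans (hg1 P s hs))
      · refine Finset.sum_congr rfl fun t ht => ?_
        rw [hP' _ (Finset.mem_image_of_mem _ ht)]
      · split_ifs <;> positivity
    refine le_trans (le_of_eq ?_) (ENNReal.ofReal_le_ofReal h1)
    rw [ENNReal.ofReal_sum_of_nonneg (fun t _ => by split_ifs <;> positivity)]
    refine Finset.sum_congr rfl fun t _ => ?_
    by_cases hp : χ (s, t) = true
    · simp [hp, Set.indicator, ENNReal.ofReal_pow]
      rfl
    · simp [hp, Set.indicator]
  · intro t
    rw [ENNReal.tsum_eq_iSup_sum]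
    refine iSup_le fun A => ?_
    obtain ⟨P, hP, hP'⟩ := hχ (A.image fun s => (s, t))
    rcases A.eq_empty_or_nonempty with rfl | ⟨s1, hs1⟩
    · simp
    have hsub : A ⊆ P.image Prod.fst := fun s hs =>
      Finset.mem_image.2 ⟨(s, t), hP (Finset.mem_image_of_mem _ hs), rfl⟩
    have ht : t ∈ P.image Prod.snd :=
      Finset.mem_image.2 ⟨(s1, t), hP (Finset.mem_image_of_mem _ hs1), rfl⟩
    have h1 : ∑ s ∈ A, (if χ (s, t) = false then ‖ψ (s, t)‖ ^ 2 else 0) ≤ (4 * C) ^ 2 := by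
      refine le_trans (le_of_eq ?_) ((Finset.sum_le_sum_of_subset_of_nonneg hsub
        (fun t _ _ => ?_)).trans (hg2 P t ht))
      · refine Finset.sum_congr rfl fun s hs => ?_
        rw [hP' _ (Finset.mem_image_of_mem _ hs)]
      · split_ifs <;> positivity
    refine le_trans (le_of_eq ?_) (ENNReal.ofReal_le_ofReal h1)
    rw [ENNReal.ofReal_sum_of_nonneg (fun t _ => by split_ifs <;> positivity)]
    refine Finset.sum_congr rfl fun s _ => ?_
    by_cases hp : χ (s, t) = false
    · simp [hp, Set.indicator, ENNReal.ofReal_pow]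
      rfl
    · simp [hp, Set.indicator]
end
end

section
/- Let G be a group, Λ ⊆ G, and R_Λ = {(s,t) ∈ G × G : st ∈ Λ}. The following are equivalent: (a) there exists a constant C such that for every N ≥ 1 and all finite subsets E, F ⊆ G with |E| = |F| = N one has |R_Λ ∩ (E × F)| ≤ C N; (b) there exist a constant C and a partition R_Λ = Γ₁ ∪ Γ₂ (disjoint) such that sup_{s∈G} |{t ∈ G : (s,t) ∈ Γ₁}| ≤ C and sup_{t∈G} |{s ∈ G : (s,t) ∈ Γ₂}| ≤ C. -/
open scoped ENNReal NNReal
open MeasureTheory ContinuousLinearMap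

noncomputable section

theorem aux_count {G : Type*} (k : ℕ) (Γ : Set (G × G)) (E F : Finset G)
    (g : G × G → G) (T : Finset G) (hg : ∀ p ∈ E ×ˢ F, g p ∈ T)
    (j : G × G → G) (hj : ∀ p q, g p = g q → j p = j q → p = q)
    (W : G → Set G) (hW : ∀ p ∈ Γ, j p ∈ W (g p))
    (h : ∀ s : G, (W s).encard ≤ k) :
    (Γ ∩ ((E ×ˢ F : Finset (G × G)) : Set (G × G))).ncard ≤ k * T.card := by
  classical
  have e : (Γ ∩ ((E ×ˢ F : Finset (G × G)) : Set (G × G)))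
      = (((E ×ˢ F).filter (fun p => p ∈ Γ) : Finset (G × G)) : Set (G × G)) := by
    ext p
    simp only [Set.mem_inter_iff, Finset.mem_coe, Finset.mem_filter]
    tauto
  rw [e, Set.ncard_coe_finset]
  apply Finset.card_le_mul_card_image_of_maps_to (f := g)
  · intro p hp
    exact hg p (Finset.mem_filter.1 hp).1
  · intro s _
    have : ((Finset.filter (fun p => g p = s) ((E ×ˢ F).filter (fun p => p ∈ Γ)) :
        Finset (G × G)) : Set (G × G)).encard ≤ (W s).encard := by
      apply Set.encard_le_encard_of_injOn (f := j)
      · intro p hp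
        simp only [Finset.mem_coe, Finset.mem_filter] at hp
        have := hW p hp.1.2
        rwa [hp.2] at this
      · intro p hp q hq hpq
        simp only [Finset.mem_coe, Finset.mem_filter] at hp hq
        exact hj p q (hp.2.trans hq.2.symm) hpq
    have h2 := this.trans (h s)
    rw [Set.encard_coe_eq_coe_finsetCard] at h2
    exact_mod_cast h2

theorem aux_cast {G : Type*} (C : ℝ) (A : Set G) (h : (A.encard : ℝ≥0∞) ≤ ENNReal.ofReal C) :
    A.encard ≤ (⌈C⌉₊ : ℕ) := by
  have h1 : ENNReal.ofReal C ≤ ((⌈C⌉₊ : ℕ) : ℝ≥0∞) := by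
    rw [← ENNReal.ofReal_natCast]
    exact ENNReal.ofReal_le_ofReal (Nat.le_ceil C)
  have h2 := h.trans h1
  have h3 : (A.encard : ℝ≥0∞) ≤ (((⌈C⌉₊ : ℕ) : ℕ∞) : ℝ≥0∞) := by simpa using h2
  exact ENat.toENNReal_le.1 h3

theorem aux_row {G : Type*} {R : Set (G × G)} (k : ℕ) (f : R → (G ⊕ G) × Fin k)
    (hf : Function.Injective f) (v : G ⊕ G) (j : G × G → G) (A : Set G)
    (hA : ∀ t ∈ A, ∃ e : R, (f e).1 = v ∧ j e.1 = t) :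
    (A.encard : ℝ≥0∞) ≤ ENNReal.ofReal (k : ℝ) := by
  classical
  have h1 : A ⊆ (fun e : R => j e.1) '' {e : R | (f e).1 = v} := by
    intro t ht
    obtain ⟨e, h1, h2⟩ := hA t ht
    exact ⟨e, h1, h2⟩
  have h2 : {e : R | (f e).1 = v}.encard
      ≤ ((({v} : Finset (G ⊕ G)) ×ˢ (Finset.univ : Finset (Fin k)) :
        Finset ((G ⊕ G) × Fin k)) : Set ((G ⊕ G) × Fin k)).encard := by
    apply Set.encard_le_encard_of_injOn (f := f)
    · intro e he
      have he' : (f e).1 = v := he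
      exact Finset.mem_coe.2 (Finset.mem_product.2
        ⟨Finset.mem_singleton.2 he', Finset.mem_univ _⟩)
    · exact hf.injOn
  rw [Set.encard_coe_eq_coe_finsetCard] at h2
  have h3 : A.encard ≤ (k : ℕ∞) := by
    refine (Set.encard_le_encard h1).trans ((Set.encard_image_le _ _).trans (h2.trans ?_))
    simp
  rw [ENNReal.ofReal_natCast]
  have := ENat.toENNReal_le.2 h3
  simpa using this

/-- for `Λ ⊆ G` and `R_Λ = {(s,t) : st ∈ Λ}`, the rectangle-counting
condition (a) is equivalent to the existence of a disjoint partition `R_Λ = Γ₁ ∪ Γ₂` with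
uniformly finite rows in `Γ₁` and columns in `Γ₂` (condition (b)). -/
theorem stmt_8 {G : Type*} [Group G] (Λ : Set G) :
    (∃ C : ℝ, ∀ N : ℕ, 1 ≤ N → ∀ (E F : Finset G), E.card = N → F.card = N →
      (({p : G × G | p.1 * p.2 ∈ Λ} ∩ ((E ×ˢ F : Finset (G × G)) : Set (G × G))).ncard : ℝ)
        ≤ C * N) ↔
    (∃ (C : ℝ) (Γ₁ Γ₂ : Set (G × G)),
      Γ₁ ∪ Γ₂ = {p : G × G | p.1 * p.2 ∈ Λ} ∧ Disjoint Γ₁ Γ₂ ∧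
      (∀ s : G, ({t : G | (s, t) ∈ Γ₁}.encard : ℝ≥0∞) ≤ ENNReal.ofReal C) ∧
      (∀ t : G, ({s : G | (s, t) ∈ Γ₂}.encard : ℝ≥0∞) ≤ ENNReal.ofReal C)) := by
  classical
  constructor
  · rintro ⟨C, hC⟩
    set R : Set (G × G) := {p : G × G | p.1 * p.2 ∈ Λ} with hR
    set k : ℕ := ⌈C⌉₊ with hk
    let τ : R → Finset ((G ⊕ G) × Fin k) := fun e =>
      ({Sum.inl e.1.1, Sum.inr e.1.2} : Finset (G ⊕ G)) ×ˢ Finset.univ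
    have hall : ∀ A : Finset R, A.card ≤ (A.biUnion τ).card := by
      intro A
      rcases A.eq_empty_or_nonempty with rfl | ⟨e0, he0⟩
      · simp
      let E := A.image (fun e => e.1.1)
      let F := A.image (fun e => e.1.2)
      have hE : e0.1.1 ∈ E ∪ F :=
        Finset.mem_union_left _ (Finset.mem_image_of_mem (fun e : R => e.1.1) he0)
      have h1 := hC (E ∪ F).card (Finset.card_pos.2 ⟨_, hE⟩) (E ∪ F) (E ∪ F) rfl rfl
      have h2 : A.card ≤ (R ∩ (((E ∪ F) ×ˢ (E ∪ F) : Finset (G × G)) : Set (G × G))).ncard := by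
        rw [← Finset.card_image_of_injective A Subtype.val_injective, ← Set.ncard_coe_finset]
        apply Set.ncard_le_ncard
        · intro p hp
          simp only [Finset.coe_image, Set.mem_image, Finset.mem_coe] at hp
          obtain ⟨e, he, rfl⟩ := hp
          refine ⟨e.2, ?_⟩
          simp only [Finset.mem_coe, Finset.mem_product]
          exact ⟨Finset.mem_union_left _ (Finset.mem_image_of_mem (fun e : R => e.1.1) he),
            Finset.mem_union_right _ (Finset.mem_image_of_mem (fun e : R => e.1.2) he)⟩
        · exact (Finset.finite_toSet _).inter_of_right _
      have h3 : A.biUnion τ = (E.disjSum F) ×ˢ (Finset.univ : Finset (Fin k)) := by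
        ext ⟨v, i⟩
        rcases v with v | v
        · simp [τ, E, eq_comm]
        · simp [τ, F, eq_comm]
      rw [h3, Finset.card_product, Finset.card_disjSum, Finset.card_univ, Fintype.card_fin]
      have h4 : (A.card : ℝ) ≤ (((E ∪ F).card * k : ℕ) : ℝ) := by
        calc (A.card : ℝ) ≤ _ := Nat.cast_le.2 h2
          _ ≤ C * (E ∪ F).card := h1
          _ ≤ (k : ℝ) * (E ∪ F).card :=
            mul_le_mul_of_nonneg_right (Nat.le_ceil C) (Nat.cast_nonneg _)
          _ = _ := by push_cast; ring
      exact (Nat.cast_le.1 h4).trans (Nat.mul_le_mul_right _ (Finset.card_union_le _ _))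
    obtain ⟨f, hf, hfτ⟩ := (Finset.all_card_le_biUnion_card_iff_exists_injective τ).1 hall
    have key : ∀ e : R, (f e).1 = Sum.inl e.1.1 ∨ (f e).1 = Sum.inr e.1.2 := by
      intro e
      have := hfτ e
      simpa [τ] using (Finset.mem_product.1 this).1
    refine ⟨k, {p | ∃ h : p ∈ R, (f ⟨p, h⟩).1 = Sum.inl p.1},
      {p | ∃ h : p ∈ R, (f ⟨p, h⟩).1 = Sum.inr p.2}, ?_, ?_, ?_, ?_⟩
    · ext p
      constructor
      · rintro (⟨h, _⟩ | ⟨h, _⟩) <;> exact h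
      · intro h
        rcases key ⟨p, h⟩ with h' | h'
        · exact Or.inl ⟨h, h'⟩
        · exact Or.inr ⟨h, h'⟩
    · rw [Set.disjoint_left]
      rintro p ⟨h, h1⟩ ⟨_, h2⟩
      rw [h1] at h2
      cases h2
    · intro s
      apply aux_row k f hf (Sum.inl s) Prod.snd
      rintro t ⟨h, h1⟩
      exact ⟨⟨(s, t), h⟩, h1, rfl⟩
    · intro t
      apply aux_row k f hf (Sum.inr t) Prod.fst
      rintro s ⟨h, h1⟩
      exact ⟨⟨(s, t), h⟩, h1, rfl⟩
  · rintro ⟨C, Γ₁, Γ₂, hU, -, h1, h2⟩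
    refine ⟨2 * (⌈C⌉₊ : ℕ), ?_⟩
    intro N _ E F hE hF
    rw [← hU, Set.union_inter_distrib_right]
    have a1 := aux_count ⌈C⌉₊ Γ₁ E F Prod.fst E (fun p hp => (Finset.mem_product.1 hp).1)
      Prod.snd (fun p q a b => Prod.ext a b) (fun s => {t | (s, t) ∈ Γ₁}) (fun p hp => hp)
      (fun s => aux_cast C _ (h1 s))
    have a2 := aux_count ⌈C⌉₊ Γ₂ E F Prod.snd F (fun p hp => (Finset.mem_product.1 hp).2)
      Prod.fst (fun p q a b => Prod.ext b a) (fun t => {s | (s, t) ∈ Γ₂}) (fun p hp => hp)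
      (fun s => aux_cast C _ (h2 s))
    have a3 := Set.ncard_union_le (Γ₁ ∩ ((E ×ˢ F : Finset (G × G)) : Set (G × G)))
      (Γ₂ ∩ ((E ×ˢ F : Finset (G × G)) : Set (G × G)))
    rw [hE] at a1
    rw [hF] at a2
    have a4 := a3.trans (Nat.add_le_add a1 a2)
    have a5 := (Nat.cast_le (α := ℝ)).2 a4
    refine a5.trans (le_of_eq ?_)
    push_cast
    ring
end
end
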